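/- arXiv:2303.10615 — 4 statements merged into one kernel-verified Lean document; each statement's English description precedes it below -/
import Mathlib

section
/- Every cubic simple graph G with n vertices has at most 2^(3n/2) circuit double covers, i.e., ν(G) ≤ 2^(3n/2). -/
namespace CiDC

open SimpleGraph

/-- A circuit in a graph: a connected 2-regular subgraph. -/
def IsCircuit {V : Type*} {G : SimpleGraph V} (H : G.Subgraph) : Prop :=
  H.Connected ∧ ∀ v ∈ H.verts, (H.neighborSet v).ncard = 2

open scoped Classical in
/-- A circuit double cover: a multiset of circuits covering every edge exactly twice
(counted with multiplicity). -/
def IsCiDC {V : Type*} (G : SimpleGraph V) (C : Multiset G.Subgraph) : Prop :=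
  (∀ H ∈ C, IsCircuit H) ∧ ∀ e ∈ G.edgeSet, C.countP (fun H => e ∈ H.edgeSet) = 2

/-- ν(G): the number of circuit double covers of `G`. -/
noncomputable def nu {V : Type*} (G : SimpleGraph V) : ℕ :=
  {C : Multiset G.Subgraph | IsCiDC G C}.ncard

/-- A cubic graph: every vertex has degree 3. -/
def IsCubic {V : Type*} (G : SimpleGraph V) : Prop :=
  ∀ v : V, (G.neighborSet v).ncard = 3

/-!
At a vertex `v` of degree three, every circuit through an edge at `v` leaves by exactly one of the
other two edges. Counting the circuits on the three edges shows that each pair of edges at `v` lies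
on exactly one circuit of a double cover. So, for an edge `uv`, the two circuits through `uv` match
the two further edges at `u` with the two further edges at `v`. There are two such matchings, and
the matchings at all edges determine the cover, because they say how every circuit continues.
Hence a cubic graph has at most `2 ^ |E|` circuit double covers, and `2 |E| = 3 n`.
-/

section

variable {V : Type*} {G : SimpleGraph V}

section Circuit

variable {H K : G.Subgraph} {a b c v : V}

lemma IsCircuit.exists_adj_ne (hH : IsCircuit H) (hv : v ∈ H.verts) (u : V) :
    ∃ x, H.Adj v x ∧ x ≠ u := by
  have hcard : 1 < (H.neighborSet v).ncard := by rw [hH.2 v hv]; norm_num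
  exact Set.exists_ne_of_one_lt_ncard hcard u

lemma IsCircuit.neighborSet_eq_pair (hH : IsCircuit H) (ha : H.Adj v a) (hb : H.Adj v b)
    (hab : a ≠ b) : H.neighborSet v = {a, b} := by
  have hcard := hH.2 v ha.fst_mem
  have hfin : (H.neighborSet v).Finite := Set.finite_of_ncard_ne_zero (by omega)
  have hsub : {a, b} ⊆ H.neighborSet v := Set.pair_subset ha hb
  exact (Set.eq_of_subset_of_ncard_le hsub (by rw [hcard, Set.ncard_pair hab]) hfin).symm

lemma IsCircuit.neighborSet_eq_neighborSet (hH : IsCircuit H) (hK : IsCircuit K)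
    (hHa : H.Adj v a) (hHb : H.Adj v b) (hKa : K.Adj v a) (hKb : K.Adj v b) (hab : a ≠ b) :
    H.neighborSet v = K.neighborSet v :=
  (hH.neighborSet_eq_pair hHa hHb hab).trans (hK.neighborSet_eq_pair hKa hKb hab).symm

lemma IsCircuit.adj_iff_not_adj (hH : IsCircuit H) (hN : G.neighborSet v = {a, b, c})
    (hab : a ≠ b) (hac : a ≠ c) (hbc : b ≠ c) (ha : H.Adj v a) :
    H.Adj v b ↔ ¬ H.Adj v c := by
  refine ⟨fun hb hc => ?_, fun hc => ?_⟩
  · have hmem : c ∈ H.neighborSet v := hc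
    rw [hH.neighborSet_eq_pair ha hb hab] at hmem
    exact hmem.elim hac.symm hbc.symm
  · obtain ⟨x, hx, hxa⟩ := hH.exists_adj_ne ha.fst_mem a
    have hmem : x ∈ G.neighborSet v := hx.adj_sub
    rw [hN] at hmem
    rcases hmem with rfl | rfl | rfl
    · exact absurd rfl hxa
    · exact hx
    · exact absurd hx hc

lemma forall_mem_verts_of_connected (hH : H.Connected) {P : V → Prop}
    (hstep : ∀ u v, H.Adj u v → P u → P v) {r : V} (hr : r ∈ H.verts) (hP : P r) :
    ∀ w ∈ H.verts, P w := by
  intro w hw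
  obtain ⟨p⟩ := hH.coe.preconnected ⟨r, hr⟩ ⟨w, hw⟩
  have along_walk : ∀ {x y : H.verts}, H.coe.Walk x y → P x → P y := by
    intro x y p
    induction p with
    | nil => exact id
    | cons h _ ih => exact fun hx => ih (hstep _ _ h hx)
  exact along_walk p hP

lemma IsCircuit.le_of_forall_neighborSet_eq (hH : IsCircuit H)
    (h : ∀ w ∈ H.verts, H.neighborSet w = K.neighborSet w) : H ≤ K := by
  have adj_of_adj : ∀ {u v}, H.Adj u v → K.Adj u v := fun {u v} huv =>
    (Set.ext_iff.1 (h u huv.fst_mem) v).1 huv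
  refine ⟨fun w hw => ?_, fun _ _ => adj_of_adj⟩
  obtain ⟨x, hx, -⟩ := hH.exists_adj_ne hw w
  exact (adj_of_adj hx).fst_mem

end Circuit

section Vertex

variable {C : Multiset G.Subgraph} {v a b c : V}

lemma neighborSet_eq_triple (hv : (G.neighborSet v).ncard = 3) (ha : G.Adj v a)
    (hb : G.Adj v b) (hc : G.Adj v c) (hab : a ≠ b) (hac : a ≠ c) (hbc : b ≠ c) :
    G.neighborSet v = {a, b, c} := by
  have hfin : (G.neighborSet v).Finite := Set.finite_of_ncard_ne_zero (by omega)
  have hsub : {a, b, c} ⊆ G.neighborSet v := by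
    rintro x (rfl | rfl | rfl) <;> assumption
  have hcard : ({a, b, c} : Set V).ncard = 3 := Set.ncard_eq_three.2 ⟨a, b, c, hab, hac, hbc, rfl⟩
  exact (Set.eq_of_subset_of_ncard_le hsub (by rw [hv, hcard]) hfin).symm

open scoped Classical in
lemma countP_adj_eq_add (hC : ∀ H ∈ C, IsCircuit H) (hN : G.neighborSet v = {a, b, c})
    (hab : a ≠ b) (hac : a ≠ c) (hbc : b ≠ c) :
    C.countP (fun H => H.Adj v a) =
      C.countP (fun H => H.Adj v a ∧ H.Adj v b) + C.countP (fun H => H.Adj v a ∧ H.Adj v c) := by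
  have hc_iff : C.countP (fun H => H.Adj v a ∧ H.Adj v c) =
      C.countP (fun H => H.Adj v a ∧ ¬ H.Adj v b) :=
    Multiset.countP_congr rfl fun H hH => by
      refine propext (and_congr_right fun ha => ?_)
      rw [(hC H hH).adj_iff_not_adj hN hab hac hbc ha, not_not]
  rw [hc_iff, Multiset.countP_eq_countP_filter_add C _ (fun H => H.Adj v b),
    Multiset.countP_filter, Multiset.countP_filter]

open scoped Classical in
lemma IsCiDC.countP_adj_and_adj_eq_one (hC : IsCiDC G C) (hv : (G.neighborSet v).ncard = 3)
    (ha : G.Adj v a) (hb : G.Adj v b) (hab : a ≠ b) :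
    C.countP (fun H => H.Adj v a ∧ H.Adj v b) = 1 := by
  obtain ⟨c, hc, hcab⟩ : ∃ c ∈ G.neighborSet v, c ∉ ({a, b} : Set V) :=
    Set.exists_mem_notMem_of_ncard_lt_ncard (by rw [hv, Set.ncard_pair hab]; norm_num)
  obtain ⟨hca, hcb⟩ : c ≠ a ∧ c ≠ b := by simpa using hcab
  have count_two : ∀ x, G.Adj v x → C.countP (fun H => H.Adj v x) = 2 :=
    fun x hx => hC.2 s(v, x) hx
  have split_a := countP_adj_eq_add hC.1
    (neighborSet_eq_triple hv ha hb hc hab hca.symm hcb.symm) hab hca.symm hcb.symm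
  have split_b := countP_adj_eq_add hC.1
    (neighborSet_eq_triple hv hb ha hc hab.symm hcb.symm hca.symm) hab.symm hcb.symm hca.symm
  have split_c := countP_adj_eq_add hC.1
    (neighborSet_eq_triple hv hc ha hb hca hcb hab) hca hcb hab
  simp only [and_comm (a := Subgraph.Adj _ v b) (b := Subgraph.Adj _ v a)] at split_b
  simp only [and_comm (a := Subgraph.Adj _ v c)] at split_c
  rw [count_two a ha] at split_a
  rw [count_two b hb] at split_b
  rw [count_two c hc] at split_c
  omega

lemma IsCiDC.existsUnique_adj_and_adj (hC : IsCiDC G C) (hv : (G.neighborSet v).ncard = 3)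
    (ha : G.Adj v a) (hb : G.Adj v b) (hab : a ≠ b) :
    ∃! H, H ∈ C ∧ H.Adj v a ∧ H.Adj v b := by
  classical
  have hone := hC.countP_adj_and_adj_eq_one hv ha hb hab
  rw [Multiset.countP_eq_card_filter, Multiset.card_eq_one] at hone
  obtain ⟨H, hH⟩ := hone
  refine ⟨H, ?_, fun K hK => ?_⟩
  · exact Multiset.mem_filter.1 (hH ▸ Multiset.mem_singleton_self H)
  · exact Multiset.mem_singleton.1 (hH ▸ Multiset.mem_filter.2 hK)

lemma IsCiDC.nodup (hC : IsCiDC G C) (hG : IsCubic G) : C.Nodup := by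
  classical
  rw [Multiset.nodup_iff_count_le_one]
  intro H
  by_cases hH : H ∈ C
  · have hcirc := hC.1 H hH
    obtain ⟨v, hv⟩ := hcirc.1.nonempty
    obtain ⟨a, ha, -⟩ := hcirc.exists_adj_ne hv v
    obtain ⟨b, hb, hba⟩ := hcirc.exists_adj_ne hv a
    rw [← hC.countP_adj_and_adj_eq_one (hG v) ha.adj_sub hb.adj_sub hba.symm, Multiset.count,
      Multiset.countP_eq_card_filter, Multiset.countP_eq_card_filter]
    refine Multiset.card_le_card (Multiset.monotone_filter_right C ?_)
    rintro K rfl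
    exact ⟨ha, hb⟩
  · simp [Multiset.count_eq_zero_of_notMem hH]

end Vertex

/-- The sequence `a, u, v, b` is a trail of length three in `G`, viewed as an extension of its
middle edge `uv` in both directions. The ends `a` and `b` may coincide. -/
structure IsThreeTrail (G : SimpleGraph V) (a u v b : V) : Prop where
  adj_left : G.Adj u a
  adj_mid : G.Adj u v
  adj_right : G.Adj v b
  left_ne : a ≠ v
  right_ne : b ≠ u

/-- Some circuit of the family `C` runs along `a, u, v, b`. For a circuit double cover of a cubic
graph, these relations record how the circuits continue across each edge. -/
def Traverses (C : Multiset G.Subgraph) (a u v b : V) : Prop :=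
  ∃ H ∈ C, H.Adj u a ∧ H.Adj u v ∧ H.Adj v b

lemma IsThreeTrail.symm {a u v b : V} (h : IsThreeTrail G a u v b) : IsThreeTrail G b v u a :=
  ⟨h.adj_right, h.adj_mid.symm, h.adj_left, h.right_ne, h.left_ne⟩

lemma traverses_comm {C : Multiset G.Subgraph} {a u v b : V} :
    Traverses C a u v b ↔ Traverses C b v u a := by
  constructor <;> rintro ⟨H, hH, hleft, hmid, hright⟩ <;> exact ⟨H, hH, hright, hmid.symm, hleft⟩

lemma IsCubic.exists_isThreeTrail (hG : IsCubic G) (e : G.edgeSet) :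
    ∃ a u v b, IsThreeTrail G a u v b ∧ s(u, v) = e.1 := by
  have one_lt_ncard : ∀ u, 1 < (G.neighborSet u).ncard := fun u => by rw [hG u]; norm_num
  obtain ⟨⟨u, v⟩, huv⟩ := e
  obtain ⟨a, ha, hav⟩ := Set.exists_ne_of_one_lt_ncard (one_lt_ncard u) v
  obtain ⟨b, hb, hbu⟩ := Set.exists_ne_of_one_lt_ncard (one_lt_ncard v) u
  exact ⟨a, u, v, b, ⟨ha, huv, hb, hav, hbu⟩, rfl⟩

section Cover

variable {C D : Multiset G.Subgraph} {H K : G.Subgraph} {a a' u u' v v' b b' : V}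

lemma IsCiDC.traverses_iff_adj (hC : IsCiDC G C) (hu : (G.neighborSet u).ncard = 3)
    (hH : H ∈ C) (ha : H.Adj u a) (hv : H.Adj u v) (hav : a ≠ v) :
    Traverses C a u v b ↔ H.Adj v b := by
  refine ⟨?_, fun hb => ⟨H, hH, ha, hv, hb⟩⟩
  rintro ⟨K, hK, hKa, hKv, hKb⟩
  obtain rfl := (hC.existsUnique_adj_and_adj hu ha.adj_sub hv.adj_sub hav).unique
    ⟨hH, ha, hv⟩ ⟨hK, hKa, hKv⟩
  exact hKb

lemma IsCiDC.traverses_iff_not_traverses (hC : IsCiDC G C) (hG : IsCubic G)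
    (hb : IsThreeTrail G a u v b) (hb' : IsThreeTrail G a u v b') (hne : b ≠ b') :
    Traverses C a u v b ↔ ¬ Traverses C a u v b' := by
  obtain ⟨H, ⟨hH, hHa, hHv⟩, -⟩ :=
    hC.existsUnique_adj_and_adj (hG u) hb.adj_left hb.adj_mid hb.left_ne
  have hN := neighborSet_eq_triple (hG v) hb.adj_mid.symm hb.adj_right hb'.adj_right
    hb.right_ne.symm hb'.right_ne.symm hne
  rw [hC.traverses_iff_adj (hG u) hH hHa hHv hb.left_ne,
    hC.traverses_iff_adj (hG u) hH hHa hHv hb.left_ne]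
  exact (hC.1 H hH).adj_iff_not_adj hN hb.right_ne.symm hb'.right_ne.symm hne hHv.symm

lemma IsCiDC.traverses_iff_of_right (hC : IsCiDC G C) (hD : IsCiDC G D) (hG : IsCubic G)
    (hb : IsThreeTrail G a u v b) (hb' : IsThreeTrail G a u v b')
    (h : Traverses C a u v b ↔ Traverses D a u v b) :
    Traverses C a u v b' ↔ Traverses D a u v b' := by
  rcases eq_or_ne b b' with rfl | hne
  · exact h
  · rwa [hC.traverses_iff_not_traverses hG hb hb' hne,
      hD.traverses_iff_not_traverses hG hb hb' hne, not_iff_not] at h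

lemma IsCiDC.traverses_iff_of_left (hC : IsCiDC G C) (hD : IsCiDC G D) (hG : IsCubic G)
    (ha : IsThreeTrail G a u v b) (ha' : IsThreeTrail G a' u v b)
    (h : Traverses C a u v b ↔ Traverses D a u v b) :
    Traverses C a' u v b ↔ Traverses D a' u v b := by
  rw [traverses_comm, traverses_comm (C := D)] at h ⊢
  exact hC.traverses_iff_of_right hD hG ha.symm ha'.symm h

lemma IsCiDC.traverses_iff_of_edge_eq (hC : IsCiDC G C) (hD : IsCiDC G D) (hG : IsCubic G)
    (ht : IsThreeTrail G a u v b) (ht' : IsThreeTrail G a' u' v' b') (he : s(u, v) = s(u', v'))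
    (h : Traverses C a u v b ↔ Traverses D a u v b) :
    Traverses C a' u' v' b' ↔ Traverses D a' u' v' b' := by
  wlog hori : u = u' ∧ v = v' generalizing a' u' v' b'
  · rw [traverses_comm, traverses_comm (C := D)]
    exact this ht'.symm (he.trans Sym2.eq_swap) ((Sym2.eq_iff.1 he).resolve_left hori)
  obtain ⟨rfl, rfl⟩ := hori
  have hmixed : IsThreeTrail G a u v b' := { ht with
    adj_right := ht'.adj_right
    right_ne := ht'.right_ne }
  exact hC.traverses_iff_of_left hD hG hmixed ht' (hC.traverses_iff_of_right hD hG ht hmixed h)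

lemma IsCiDC.neighborSet_eq_of_adj (hD : IsCiDC G D) (hG : IsCubic G)
    (hCD : ∀ a u v b, IsThreeTrail G a u v b → Traverses C a u v b → Traverses D a u v b)
    (hcirc : IsCircuit H) (hH : H ∈ C) (hK : K ∈ D) (huv : H.Adj u v)
    (hu : H.neighborSet u = K.neighborSet u) : H.neighborSet v = K.neighborSet v := by
  obtain ⟨a, ha, hav⟩ := hcirc.exists_adj_ne huv.fst_mem v
  obtain ⟨b, hb, hbu⟩ := hcirc.exists_adj_ne huv.snd_mem u
  have hKa : K.Adj u a := (Set.ext_iff.1 hu a).1 ha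
  have hKv : K.Adj u v := (Set.ext_iff.1 hu v).1 huv
  have hKb : K.Adj v b := (hD.traverses_iff_adj (hG u) hK hKa hKv hav).1 <|
    hCD a u v b ⟨ha.adj_sub, huv.adj_sub, hb.adj_sub, hav, hbu⟩ ⟨H, hH, ha, huv, hb⟩
  exact hcirc.neighborSet_eq_neighborSet (hD.1 K hK) huv.symm hb hKv.symm hKb hbu.symm

lemma IsCiDC.le_of_neighborSet_eq (hD : IsCiDC G D) (hG : IsCubic G)
    (hCD : ∀ a u v b, IsThreeTrail G a u v b → Traverses C a u v b → Traverses D a u v b)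
    (hcirc : IsCircuit H) (hH : H ∈ C) (hK : K ∈ D) (hv : v ∈ H.verts)
    (hN : H.neighborSet v = K.neighborSet v) : H ≤ K :=
  hcirc.le_of_forall_neighborSet_eq <| forall_mem_verts_of_connected hcirc.1
    (fun _ _ => hD.neighborSet_eq_of_adj hG hCD hcirc hH hK) hv hN

lemma IsCiDC.mem_of_traverses_iff (hC : IsCiDC G C) (hD : IsCiDC G D) (hG : IsCubic G)
    (hCD : ∀ a u v b, IsThreeTrail G a u v b → (Traverses C a u v b ↔ Traverses D a u v b))
    (hH : H ∈ C) : H ∈ D := by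
  have hcirc := hC.1 H hH
  obtain ⟨v, hv⟩ := hcirc.1.nonempty
  obtain ⟨a, ha, -⟩ := hcirc.exists_adj_ne hv v
  obtain ⟨b, hb, hba⟩ := hcirc.exists_adj_ne hv a
  obtain ⟨K, ⟨hK, hKa, hKb⟩, -⟩ :=
    hD.existsUnique_adj_and_adj (hG v) ha.adj_sub hb.adj_sub hba.symm
  have hN := hcirc.neighborSet_eq_neighborSet (hD.1 K hK) ha hb hKa hKb hba.symm
  have hHK := hD.le_of_neighborSet_eq hG (fun a u v b ht => (hCD a u v b ht).1) hcirc hH hK hv hN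
  have hKH := hC.le_of_neighborSet_eq hG (fun a u v b ht => (hCD a u v b ht).2) (hD.1 K hK) hK hH
    hKa.fst_mem hN.symm
  exact le_antisymm hHK hKH ▸ hK

lemma IsCiDC.eq_of_traverses_iff (hC : IsCiDC G C) (hD : IsCiDC G D) (hG : IsCubic G)
    (hCD : ∀ a u v b, IsThreeTrail G a u v b → (Traverses C a u v b ↔ Traverses D a u v b)) :
    C = D :=
  ((hC.nodup hG).ext (hD.nodup hG)).2 fun _ => ⟨hC.mem_of_traverses_iff hD hG hCD,
    hD.mem_of_traverses_iff hC hG fun a u v b ht => (hCD a u v b ht).symm⟩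

end Cover

theorem IsCubic.nu_le_two_pow_card_edgeSet [Finite G.edgeSet] (hG : IsCubic G) :
    nu G ≤ 2 ^ Nat.card G.edgeSet := by
  choose a u v b htrail hedge using hG.exists_isThreeTrail
  let signature (C : Multiset G.Subgraph) : Set G.edgeSet :=
    {e | Traverses C (a e) (u e) (v e) (b e)}
  have signature_injOn : Set.InjOn signature {C | IsCiDC G C} := by
    intro C hC D hD hCD
    refine IsCiDC.eq_of_traverses_iff hC hD hG fun _ u' v' _ ht => ?_
    let e : G.edgeSet := ⟨s(u', v'), ht.adj_mid⟩
    exact IsCiDC.traverses_iff_of_edge_eq hC hD hG (htrail e) ht (hedge e) (Set.ext_iff.1 hCD e)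
  calc nu G ≤ (Set.univ : Set (Set G.edgeSet)).ncard :=
        Set.ncard_le_ncard_of_injOn signature (fun _ _ => Set.mem_univ _) signature_injOn
          (Set.toFinite _)
    _ = 2 ^ Nat.card G.edgeSet := by
        rw [← Set.powerset_univ, Set.ncard_powerset, Set.ncard_univ]

lemma IsCubic.two_mul_card_edgeSet [Fintype V] (hG : IsCubic G) :
    2 * Nat.card G.edgeSet = 3 * Fintype.card V := by
  classical
  have hdeg : ∀ v, G.degree v = 3 := fun v => by
    rw [← hG v, ← G.card_neighborSet_eq_degree v, Set.ncard_eq_toFinset_card', Set.toFinset_card]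
  have hsum := G.sum_degrees_eq_twice_card_edges
  simp only [hdeg, Finset.sum_const, smul_eq_mul, Finset.card_univ] at hsum
  rw [Nat.card_eq_fintype_card, ← edgeFinset_card, ← hsum, mul_comm]

end

/-- Every cubic simple graph with `n` vertices has at most `2^(3n/2)` circuit double covers. -/
theorem stmt0 {V : Type*} [Fintype V] (G : SimpleGraph V) (hcubic : IsCubic G) :
    nu G ≤ 2 ^ (3 * Fintype.card V / 2) := by
  rw [← hcubic.two_mul_card_edgeSet, Nat.mul_div_cancel_left _ two_pos]
  exact hcubic.nu_le_two_pow_card_edgeSet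

end CiDC
end

section
/- Let G1 and G2 be cubic simple graphs on disjoint vertex sets, let e1 = x1y1 be an edge of G1 and e2 = x2y2 an edge of G2, and let G be the graph obtained from the disjoint union of G1 − e1 and G2 − e2 by adding the two new edges x1x2 and y1y2 (so that {x1x2, y1y2} is a 2-edge-cut of G). Then ν(G) = 2 · ν(G1) · ν(G2). -/
namespace CiDC

open SimpleGraph

/-!
Root a circuit double cover at an edge by ordering the two circuits through that edge. If the edge
has an end of degree three, these two circuits are distinct: otherwise no circuit could use the
third edge at that end, because it would have to leave along an edge already covered twice. So
every cover has exactly two rootings, and it suffices to count rooted covers.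

A circuit of the glued graph uses both cut edges or neither. In the first case it splits into a
circuit of `G₁` through `x₁y₁` and a circuit of `G₂` through `x₂y₂`; in the second it lies on one
side. Hence covers of `G` rooted at `x₁x₂` correspond to pairs of covers of `G₁` and `G₂` rooted at
`x₁y₁` and `x₂y₂`, and `2 ν(G) = 2 ν(G₁) · 2 ν(G₂)`.
-/

section Counting

lemma ncard_eq_mul_ncard_of_ncard_fiber {α β : Type*} {f : α → β} {s : Set α} {t : Set β} {n : ℕ}
    (hn : n ≠ 0) (hf : Set.MapsTo f s t) (hfiber : ∀ b ∈ t, {a ∈ s | f a = b}.ncard = n) :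
    s.ncard = n * t.ncard := by
  have hcard (b : t) : Nat.card {a : s // hf.restrict f s t a = b} = n := by
    rw [← hfiber b b.2, ← Nat.card_coe_set_eq]
    exact Nat.card_congr <| (Equiv.subtypeEquivRight fun a => Subtype.ext_iff).trans
      (Equiv.subtypeSubtypeEquivSubtypeInter (· ∈ s) (f · = b))
  have fiberEquiv (b : t) : {a : s // hf.restrict f s t a = b} ≃ Fin n :=
    (Nat.equivFinOfCardPos (hcard b ▸ hn)).trans (finCongr (hcard b))
  calc s.ncard = Nat.card (Σ b : t, {a : s // hf.restrict f s t a = b}) :=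
        Nat.card_congr (Equiv.sigmaFiberEquiv _).symm
    _ = Nat.card (t × Fin n) :=
        Nat.card_congr ((Equiv.sigmaCongrRight fiberEquiv).trans (Equiv.sigmaEquivProd _ _))
    _ = n * t.ncard := by
        rw [Nat.card_prod, Nat.card_fin, Nat.card_coe_set_eq, mul_comm]

lemma multiset_pair_eq_pair_iff {α : Type*} {a b c d : α} :
    ({a, b} : Multiset α) = {c, d} ↔ a = c ∧ b = d ∨ a = d ∧ b = c := by
  refine ⟨fun h => ?_, ?_⟩
  · obtain ⟨rfl, hbd⟩ | ⟨-, t, hbt, hdt⟩ := Multiset.cons_eq_cons.1 h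
    · exact .inl ⟨rfl, by simpa using hbd⟩
    · have ht : t = 0 := by simpa using congrArg Multiset.card hbt
      exact .inr ⟨by simpa [ht] using hdt.symm, by simpa [ht] using hbt⟩
  · rintro (⟨rfl, rfl⟩ | ⟨rfl, rfl⟩)
    exacts [rfl, Multiset.pair_comm ..]

end Counting

section Connectivity

variable {V W : Type*} {G : SimpleGraph V}

lemma reachable_of_forall_adj {G' : SimpleGraph W} (f : V → W)
    (hf : ∀ a b, G.Adj a b → G'.Reachable (f a) (f b)) {u v : V} (huv : G.Reachable u v) :
    G'.Reachable (f u) (f v) := by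
  rw [reachable_eq_reflTransGen] at huv hf ⊢
  exact huv.lift' f hf

lemma connected_iff_forall_reachable_spanningCoe {H : G.Subgraph} :
    H.Connected ↔ H.verts.Nonempty ∧
      ∀ u ∈ H.verts, ∀ v ∈ H.verts, H.spanningCoe.Reachable u v := by
  rw [H.connected_iff, and_comm, H.preconnected_iff]
  refine and_congr_right fun _ => ⟨fun hH u hu v hv => ?_, fun hH u v => ?_⟩
  · exact reachable_of_forall_adj Subtype.val
      (fun a b hab => Adj.reachable (by simpa using hab)) (hH ⟨u, hu⟩ ⟨v, hv⟩)
  · classical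
    have hadj (a b : V) (hab : H.Adj a b) :
        H.coe.Reachable (if ha : a ∈ H.verts then ⟨a, ha⟩ else u)
          (if hb : b ∈ H.verts then ⟨b, hb⟩ else u) := by
      rw [dif_pos (H.edge_vert hab), dif_pos (H.edge_vert hab.symm)]
      exact Adj.reachable (by simpa using hab)
    simpa using reachable_of_forall_adj _ hadj (hH u u.2 v v.2)

lemma exists_adj_mem_notMem_of_connected {H : G.Subgraph} (hH : H.Connected) {S : Set V} {u v : V}
    (hu : u ∈ H.verts) (huS : u ∈ S) (hv : v ∈ H.verts) (hvS : v ∉ S) :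
    ∃ a ∈ S, ∃ b ∉ S, H.Adj a b := by
  obtain ⟨p⟩ := (connected_iff_forall_reachable_spanningCoe.1 hH).2 u hu v hv
  obtain ⟨d, -, hfst, hsnd⟩ := p.exists_boundary_dart S huS hvS
  exact ⟨d.fst, hfst, d.snd, hsnd, d.adj⟩

lemma adj_congr_of_mk_eq (H : G.Subgraph) {u v x y : V} (he : s(u, v) = s(x, y)) :
    H.Adj u v ↔ H.Adj x y := by
  rw [← Subgraph.mem_edgeSet, he, Subgraph.mem_edgeSet]

end Connectivity

section Circuits

variable {V : Type*} {G : SimpleGraph V} {H K : G.Subgraph}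

lemma IsCircuit.ne_bot (hH : IsCircuit H) : H ≠ ⊥ := by
  rintro rfl
  simpa using hH.1.nonempty

lemma IsCircuit.isCycles_spanningCoe (hH : IsCircuit H) : H.spanningCoe.IsCycles :=
  fun v ⟨_, hvw⟩ => hH.2 v (H.edge_vert hvw)

lemma IsCircuit.connected_deleteEdges [Finite V] (hH : IsCircuit H) (e : Sym2 V) :
    (H.deleteEdges {e}).Connected := by
  obtain ⟨hne, hreach⟩ := connected_iff_forall_reachable_spanningCoe.1 hH.1
  refine connected_iff_forall_reachable_spanningCoe.2 ⟨hne, fun u hu v hv => ?_⟩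
  refine reachable_of_forall_adj id (fun a b (hab : H.Adj a b) => ?_) (hreach u hu v hv)
  by_cases he : s(a, b) = e
  · rw [← he, ← Subgraph.deleteEdges_spanningCoe_eq]
    exact hH.isCycles_spanningCoe.reachable_deleteEdges hab
  · exact Adj.reachable (by simpa using ⟨hab, he⟩)

lemma IsCircuit.exists_adj_and_adj (hH : IsCircuit H) (hK : IsCircuit K) {x : V}
    (hx : (G.neighborSet x).ncard = 3) (hxH : x ∈ H.verts) (hxK : x ∈ K.verts) :
    ∃ w, H.Adj x w ∧ K.Adj x w := by
  by_contra! hdisj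
  have hfin : (G.neighborSet x).Finite := Set.finite_of_ncard_ne_zero (by omega)
  have hunion := Set.ncard_union_eq (s := H.neighborSet x) (t := K.neighborSet x)
    (Set.disjoint_left.2 hdisj) (hfin.subset (H.neighborSet_subset x))
    (hfin.subset (K.neighborSet_subset x))
  have hle := Set.ncard_le_ncard
    (Set.union_subset (H.neighborSet_subset x) (K.neighborSet_subset x)) hfin
  have := hH.2 x hxH
  have := hK.2 x hxK
  omega

end Circuits

section RootedCovers

variable {V : Type*} {G : SimpleGraph V} {x y : V} {A B : G.Subgraph} {R : Multiset G.Subgraph}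

open scoped Classical in
lemma isCiDC_iff_forall_adj {C : Multiset G.Subgraph} :
    IsCiDC G C ↔ (∀ H ∈ C, IsCircuit H) ∧
      ∀ u v, G.Adj u v → C.countP (fun H => H.Adj u v) = 2 := by
  simp [IsCiDC, Sym2.forall]

lemma IsCiDC.ne_of_ncard_neighborSet_eq_three (h : IsCiDC G (A ::ₘ B ::ₘ R))
    (hx : (G.neighborSet x).ncard = 3) (hxA : x ∈ A.verts) : A ≠ B := by
  classical
  rintro rfl
  obtain ⟨hcirc, hcount⟩ := isCiDC_iff_forall_adj.1 h
  have hA : IsCircuit A := hcirc A (by simp)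
  obtain ⟨z, hxz, hAz⟩ := Set.exists_mem_notMem_of_ncard_lt_ncard
    (s := A.neighborSet x) (t := G.neighborSet x) (by rw [hA.2 x hxA, hx]; norm_num)
    (Set.finite_of_ncard_ne_zero (by simp [hA.2 x hxA]))
  obtain ⟨H, hHR, hHz⟩ : ∃ H ∈ R, H.Adj x z := by
    have hpos : 0 < (A ::ₘ A ::ₘ R).countP (fun H => H.Adj x z) := by simp [hcount x z hxz]
    obtain ⟨H, hH, hHz⟩ := Multiset.countP_pos.1 hpos
    have hHA : H ≠ A := by rintro rfl; exact hAz hHz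
    exact ⟨H, by simpa [hHA] using hH, hHz⟩
  obtain ⟨w, hAw, hHw⟩ :=
    hA.exists_adj_and_adj (hcirc H (by simp [hHR])) hx hxA (H.edge_vert hHz)
  have htwo := hcount x w (A.adj_sub hAw)
  have hpos : 0 < R.countP (fun H => H.Adj x w) := Multiset.countP_pos.2 ⟨H, hHR, hHw⟩
  simp only [Multiset.countP_cons, hAw, if_true] at htwo
  omega

open scoped Classical in
/-- `A, B, R` is a circuit double cover rooted at the edge `xy`: `A` and `B` are the two circuits
through `xy`, in this order, and `R` is the multiset of the remaining circuits. -/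
structure IsRootedCover (x y : V) (A B : G.Subgraph) (R : Multiset G.Subgraph) : Prop where
  isCircuit_fst : IsCircuit A
  isCircuit_snd : IsCircuit B
  adj_fst : A.Adj x y
  adj_snd : B.Adj x y
  isCircuit_and_not_adj : ∀ H ∈ R, IsCircuit H ∧ ¬ H.Adj x y
  countP_eq_two : ∀ u v, G.Adj u v → s(u, v) ≠ s(x, y) →
    (A ::ₘ B ::ₘ R).countP (fun H => H.Adj u v) = 2

lemma IsRootedCover.not_adj (h : IsRootedCover x y A B R) : ∀ H ∈ R, ¬ H.Adj x y :=
  fun H hH => (h.isCircuit_and_not_adj H hH).2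

lemma isRootedCover_iff :
    IsRootedCover x y A B R ↔ IsCiDC G (A ::ₘ B ::ₘ R) ∧ A.Adj x y ∧ B.Adj x y := by
  classical
  simp only [isCiDC_iff_forall_adj, Multiset.forall_mem_cons]
  constructor
  · refine fun h => ⟨⟨⟨h.isCircuit_fst, h.isCircuit_snd,
      fun H hH => (h.isCircuit_and_not_adj H hH).1⟩, fun u v huv => ?_⟩, h.adj_fst, h.adj_snd⟩
    by_cases he : s(u, v) = s(x, y)
    · simp only [adj_congr_of_mk_eq _ he, Multiset.countP_cons, h.adj_fst, h.adj_snd, if_true,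
        Multiset.countP_eq_zero.2 h.not_adj]
    · exact h.countP_eq_two u v huv he
  · rintro ⟨⟨⟨hcircA, hcircB, hcirc⟩, hcount⟩, hA, hB⟩
    have hnot_adj : ∀ H ∈ R, ¬ H.Adj x y := by
      have htwo := hcount x y (A.adj_sub hA)
      simp only [Multiset.countP_cons, hA, hB, if_true] at htwo
      exact Multiset.countP_eq_zero.1 (by omega)
    exact ⟨hcircA, hcircB, hA, hB, fun H hH => ⟨hcirc H hH, hnot_adj H hH⟩,
      fun u v huv _ => hcount u v huv⟩

namespace IsRootedCover

lemma symm (h : IsRootedCover x y A B R) : IsRootedCover y x A B R := by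
  rw [isRootedCover_iff] at h ⊢
  exact ⟨h.1, h.2.1.symm, h.2.2.symm⟩

lemma swap (h : IsRootedCover x y A B R) : IsRootedCover x y B A R := by
  rw [isRootedCover_iff] at h ⊢
  rw [Multiset.cons_swap]
  exact ⟨h.1, h.2.2, h.2.1⟩

open scoped Classical in
lemma filter_adj (h : IsRootedCover x y A B R) :
    (A ::ₘ B ::ₘ R).filter (fun H => H.Adj x y) = {A, B} := by
  simp [h.adj_fst, h.adj_snd, Multiset.filter_eq_nil.2 h.not_adj]

open scoped Classical in
lemma filter_not_adj (h : IsRootedCover x y A B R) :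
    (A ::ₘ B ::ₘ R).filter (fun H => ¬ H.Adj x y) = R := by
  simp [h.adj_fst, h.adj_snd, Multiset.filter_eq_self.2 h.not_adj]

end IsRootedCover

lemma exists_isRootedCover {C : Multiset G.Subgraph} (hC : IsCiDC G C) (hxy : G.Adj x y) :
    ∃ A B R, IsRootedCover x y A B R ∧ A ::ₘ B ::ₘ R = C := by
  classical
  have htwo := (isCiDC_iff_forall_adj.1 hC).2 x y hxy
  rw [Multiset.countP_eq_card_filter, Multiset.card_eq_two] at htwo
  obtain ⟨A, B, hAB⟩ := htwo
  have hthrough : ∀ H ∈ ({A, B} : Multiset G.Subgraph), H.Adj x y :=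
    fun H hH => Multiset.of_mem_filter (p := fun H : G.Subgraph => H.Adj x y) (hAB ▸ hH)
  have hcons : A ::ₘ B ::ₘ C.filter (fun H => ¬ H.Adj x y) = C := by
    simpa [hAB] using Multiset.filter_add_not (fun H : G.Subgraph => H.Adj x y) C
  refine ⟨A, B, _, isRootedCover_iff.2 ⟨?_, hthrough A (by simp), hthrough B (by simp)⟩, hcons⟩
  rwa [hcons]

/-- The triples `(A, B, R)` forming a circuit double cover rooted at `xy`. -/
def rootedCovers (G : SimpleGraph V) (x y : V) :
    Set (G.Subgraph × G.Subgraph × Multiset G.Subgraph) :=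
  {t | IsRootedCover x y t.1 t.2.1 t.2.2}

lemma IsRootedCover.setOf_cons_cons_eq (h : IsRootedCover x y A B R) :
    {t ∈ rootedCovers G x y | t.1 ::ₘ t.2.1 ::ₘ t.2.2 = A ::ₘ B ::ₘ R} =
      {(A, B, R), (B, A, R)} := by
  classical
  ext ⟨A', B', R'⟩
  simp only [rootedCovers, Set.mem_ofPred_eq, Set.mem_insert_iff, Set.mem_singleton_iff,
    Prod.mk.injEq]
  constructor
  · rintro ⟨h', heq⟩
    have hR : R' = R := by rw [← h'.filter_not_adj, heq, h.filter_not_adj]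
    have hAB : ({A', B'} : Multiset G.Subgraph) = {A, B} := by
      rw [← h'.filter_adj, heq, h.filter_adj]
    simpa [hR] using multiset_pair_eq_pair_iff.1 hAB
  · rintro (⟨rfl, rfl, rfl⟩ | ⟨rfl, rfl, rfl⟩)
    · exact ⟨h, rfl⟩
    · exact ⟨h.swap, Multiset.cons_swap ..⟩

lemma ncard_rootedCovers (hxy : G.Adj x y) (hx : (G.neighborSet x).ncard = 3) :
    (rootedCovers G x y).ncard = 2 * nu G := by
  refine ncard_eq_mul_ncard_of_ncard_fiber
    (f := fun t : G.Subgraph × G.Subgraph × Multiset G.Subgraph => t.1 ::ₘ t.2.1 ::ₘ t.2.2)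
    two_ne_zero (fun t ht => (isRootedCover_iff.1 ht).1) fun C (hC : IsCiDC G C) => ?_
  obtain ⟨A, B, R, hABR, rfl⟩ := exists_isRootedCover hC hxy
  have hne : A ≠ B := hC.ne_of_ncard_neighborSet_eq_three hx (A.edge_vert hABR.adj_fst)
  rw [hABR.setOf_cons_cons_eq, Set.ncard_pair (by simp [hne])]

end RootedCovers

section Gluing

variable {V₁ V₂ V : Type*}

/-- `G` is the gluing of `G₁` and `G₂` along the edges `x₁y₁` and `x₂y₂`: the disjoint union of
`G₁ - x₁y₁` and `G₂ - x₂y₂` together with the cut edges `x₁x₂` and `y₁y₂`. The vertex sets are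
embedded in `V` by `i` and `j` instead of taking `V = V₁ ⊕ V₂`, so that the two sides can be
exchanged. -/
structure IsGluing (i : V₁ ↪ V) (j : V₂ ↪ V) (G₁ : SimpleGraph V₁) (G₂ : SimpleGraph V₂)
    (G : SimpleGraph V) (x₁ y₁ : V₁) (x₂ y₂ : V₂) : Prop where
  isCompl_range : IsCompl (Set.range i) (Set.range j)
  edge_left : G₁.Adj x₁ y₁
  edge_right : G₂.Adj x₂ y₂
  adj_left : ∀ u v, G.Adj (i u) (i v) ↔ G₁.Adj u v ∧ s(u, v) ≠ s(x₁, y₁)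
  adj_right : ∀ u v, G.Adj (j u) (j v) ↔ G₂.Adj u v ∧ s(u, v) ≠ s(x₂, y₂)
  adj_cross : ∀ u v, G.Adj (i u) (j v) ↔ u = x₁ ∧ v = x₂ ∨ u = y₁ ∧ v = y₂

namespace IsGluing

variable {i : V₁ ↪ V} {j : V₂ ↪ V} {G₁ : SimpleGraph V₁} {G₂ : SimpleGraph V₂} {G : SimpleGraph V}
  {x₁ y₁ : V₁} {x₂ y₂ : V₂} {A : G.Subgraph}

lemma swap (h : IsGluing i j G₁ G₂ G x₁ y₁ x₂ y₂) : IsGluing j i G₂ G₁ G x₂ y₂ x₁ y₁ where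
  isCompl_range := h.isCompl_range.symm
  edge_left := h.edge_right
  edge_right := h.edge_left
  adj_left := h.adj_right
  adj_right := h.adj_left
  adj_cross u v := by rw [G.adj_comm, h.adj_cross, and_comm, and_comm (a := v = y₁)]

lemma flip (h : IsGluing i j G₁ G₂ G x₁ y₁ x₂ y₂) : IsGluing i j G₁ G₂ G y₁ x₁ y₂ x₂ where
  isCompl_range := h.isCompl_range
  edge_left := h.edge_left.symm
  edge_right := h.edge_right.symm
  adj_left u v := by rw [h.adj_left, Sym2.eq_swap (a := x₁)]
  adj_right u v := by rw [h.adj_right, Sym2.eq_swap (a := x₂)]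
  adj_cross u v := by rw [h.adj_cross, or_comm]

lemma exists_eq_or_exists_eq (h : IsGluing i j G₁ G₂ G x₁ y₁ x₂ y₂) (a : V) :
    (∃ u, i u = a) ∨ ∃ v, j v = a := by
  simpa using h.isCompl_range.sup_eq_top.ge (Set.mem_univ a)

lemma left_ne_right (h : IsGluing i j G₁ G₂ G x₁ y₁ x₂ y₂) (u : V₁) (v : V₂) :
    i u ≠ j v := fun huv =>
  Set.disjoint_left.1 h.isCompl_range.disjoint (Set.mem_range_self u) (huv ▸ Set.mem_range_self v)

lemma adj_cut_fst (h : IsGluing i j G₁ G₂ G x₁ y₁ x₂ y₂) : G.Adj (i x₁) (j x₂) :=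
  (h.adj_cross ..).2 (.inl ⟨rfl, rfl⟩)

lemma adj_cut_snd (h : IsGluing i j G₁ G₂ G x₁ y₁ x₂ y₂) : G.Adj (i y₁) (j y₂) :=
  (h.adj_cross ..).2 (.inr ⟨rfl, rfl⟩)

lemma adj_induction (h : IsGluing i j G₁ G₂ G x₁ y₁ x₂ y₂) {P : V → V → Prop}
    (symm : ∀ a b, P a b → P b a)
    (left : ∀ u v, G₁.Adj u v → s(u, v) ≠ s(x₁, y₁) → P (i u) (i v))
    (right : ∀ u v, G₂.Adj u v → s(u, v) ≠ s(x₂, y₂) → P (j u) (j v))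
    (cut_fst : P (i x₁) (j x₂)) (cut_snd : P (i y₁) (j y₂)) {a b : V} (hab : G.Adj a b) :
    P a b := by
  have cross (u v) (huv : G.Adj (i u) (j v)) : P (i u) (j v) := by
    obtain ⟨rfl, rfl⟩ | ⟨rfl, rfl⟩ := (h.adj_cross u v).1 huv
    exacts [cut_fst, cut_snd]
  obtain ⟨u, rfl⟩ | ⟨u, rfl⟩ := h.exists_eq_or_exists_eq a <;>
    obtain ⟨v, rfl⟩ | ⟨v, rfl⟩ := h.exists_eq_or_exists_eq b
  · exact left u v ((h.adj_left u v).1 hab).1 ((h.adj_left u v).1 hab).2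
  · exact cross u v hab
  · exact symm _ _ (cross v u hab.symm)
  · exact right u v ((h.adj_right u v).1 hab).1 ((h.adj_right u v).1 hab).2

lemma subgraph_ext (h : IsGluing i j G₁ G₂ G x₁ y₁ x₂ y₂) {A B : G.Subgraph}
    (verts_left : ∀ u, i u ∈ A.verts ↔ i u ∈ B.verts)
    (verts_right : ∀ v, j v ∈ A.verts ↔ j v ∈ B.verts)
    (adj : ∀ a b, G.Adj a b → (A.Adj a b ↔ B.Adj a b)) : A = B := by
  ext a b
  · obtain ⟨u, rfl⟩ | ⟨v, rfl⟩ := h.exists_eq_or_exists_eq a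
    exacts [verts_left u, verts_right v]
  · exact ⟨fun hab => (adj a b hab.adj_sub).1 hab, fun hab => (adj a b hab.adj_sub).2 hab⟩

lemma adj_cut_of_connected (h : IsGluing i j G₁ G₂ G x₁ y₁ x₂ y₂) (hA : A.Connected)
    {u : V₁} {v : V₂} (hu : i u ∈ A.verts) (hv : j v ∈ A.verts) :
    A.Adj (i x₁) (j x₂) ∨ A.Adj (i y₁) (j y₂) := by
  obtain ⟨_, ⟨u', rfl⟩, b, hb, hub⟩ := exists_adj_mem_notMem_of_connected hA (S := Set.range i)
    hu ⟨u, rfl⟩ hv (by simp [h.left_ne_right])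
  obtain ⟨v', rfl⟩ := (h.exists_eq_or_exists_eq b).resolve_left hb
  obtain ⟨rfl, rfl⟩ | ⟨rfl, rfl⟩ := (h.adj_cross u' v').1 hub.adj_sub
  exacts [.inl hub, .inr hub]

lemma adj_cut_snd_of_adj_cut_fst (h : IsGluing i j G₁ G₂ G x₁ y₁ x₂ y₂) [Finite V]
    (hA : IsCircuit A) (hx : A.Adj (i x₁) (j x₂)) : A.Adj (i y₁) (j y₂) := by
  obtain hx' | hy := h.adj_cut_of_connected (hA.connected_deleteEdges s(i x₁, j x₂))
    hx.fst_mem hx.snd_mem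
  · exact absurd rfl hx'.2
  · exact hy.1

lemma adj_cut_fst_iff_adj_cut_snd (h : IsGluing i j G₁ G₂ G x₁ y₁ x₂ y₂) [Finite V]
    (hA : IsCircuit A) : A.Adj (i x₁) (j x₂) ↔ A.Adj (i y₁) (j y₂) :=
  ⟨h.adj_cut_snd_of_adj_cut_fst hA, h.flip.adj_cut_snd_of_adj_cut_fst hA⟩

/-- The end of the edge of `G` corresponding to the dart `uv` of `G₁`: the edge `x₁y₁` leaves `x₁`
along the first cut edge and `y₁` along the second. -/
noncomputable def reroute (i : V₁ ↪ V) (j : V₂ ↪ V) (x₁ y₁ : V₁) (x₂ y₂ : V₂) (u v : V₁) : V :=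
  open scoped Classical in
  if s(u, v) = s(x₁, y₁) then j (if u = x₁ then x₂ else y₂) else i v

lemma reroute_injective (h : IsGluing i j G₁ G₂ G x₁ y₁ x₂ y₂) (u : V₁) :
    Function.Injective (reroute i j x₁ y₁ x₂ y₂ u) := by
  intro v w hvw
  by_cases hv : s(u, v) = s(x₁, y₁) <;> by_cases hw : s(u, w) = s(x₁, y₁)
  · exact Sym2.congr_right.1 (hv.trans hw.symm)
  · simp [reroute, hv, hw, (h.left_ne_right _ _).symm] at hvw
  · simp [reroute, hv, hw, h.left_ne_right] at hvw
  · simpa [reroute, hv, hw] using hvw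

lemma exists_reroute_eq (h : IsGluing i j G₁ G₂ G x₁ y₁ x₂ y₂) {u : V₁} {b : V}
    (hub : G.Adj (i u) b) : ∃ v, reroute i j x₁ y₁ x₂ y₂ u v = b := by
  obtain ⟨v, rfl⟩ | ⟨v, rfl⟩ := h.exists_eq_or_exists_eq b
  · exact ⟨v, if_neg ((h.adj_left u v).1 hub).2⟩
  · obtain ⟨rfl, rfl⟩ | ⟨rfl, rfl⟩ := (h.adj_cross u v).1 hub
    · exact ⟨y₁, by simp [reroute]⟩
    · exact ⟨x₁, by simp [reroute, h.edge_left.ne']⟩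

section GlueAndProject

variable (h : IsGluing i j G₁ G₂ G x₁ y₁ x₂ y₂) {B : G.Subgraph} {R : Multiset G.Subgraph}
  {A₁ B₁ : G₁.Subgraph} {R₁ : Multiset G₁.Subgraph} {A₂ B₂ : G₂.Subgraph}
  {R₂ : Multiset G₂.Subgraph}

/-- The subgraph of the gluing formed by `A₁ - x₁y₁` and `A₂ - x₂y₂`, together with both cut edges
if `A₁` contains `x₁y₁` and `A₂` contains `x₂y₂`. -/
def glue (A₁ : G₁.Subgraph) (A₂ : G₂.Subgraph) : G.Subgraph where
  verts := i '' A₁.verts ∪ j '' A₂.verts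
  Adj a b := Relation.Map (A₁.deleteEdges {s(x₁, y₁)}).Adj i i a b ∨
    Relation.Map (A₂.deleteEdges {s(x₂, y₂)}).Adj j j a b ∨
    (A₁.Adj x₁ y₁ ∧ A₂.Adj x₂ y₂ ∧ (s(a, b) = s(i x₁, j x₂) ∨ s(a, b) = s(i y₁, j y₂)))
  adj_sub := by
    rintro _ _ (⟨u, v, huv, rfl, rfl⟩ | ⟨u, v, huv, rfl, rfl⟩ | ⟨-, -, hab | hab⟩)
    · exact (h.adj_left u v).2 ⟨huv.1.adj_sub, huv.2⟩
    · exact (h.adj_right u v).2 ⟨huv.1.adj_sub, huv.2⟩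
    · exact (G.mem_edgeSet).1 (hab ▸ h.adj_cut_fst)
    · exact (G.mem_edgeSet).1 (hab ▸ h.adj_cut_snd)
  edge_vert := by
    rintro a b (⟨u, v, huv, rfl, rfl⟩ | ⟨u, v, huv, rfl, rfl⟩ | ⟨h₁, h₂, hab⟩)
    · exact .inl ⟨u, huv.1.fst_mem, rfl⟩
    · exact .inr ⟨u, huv.1.fst_mem, rfl⟩
    · simp only [Sym2.eq_iff] at hab
      obtain (⟨rfl, -⟩ | ⟨rfl, -⟩) | (⟨rfl, -⟩ | ⟨rfl, -⟩) := hab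
      exacts [.inl ⟨_, h₁.fst_mem, rfl⟩, .inr ⟨_, h₂.fst_mem, rfl⟩, .inl ⟨_, h₁.snd_mem, rfl⟩,
        .inr ⟨_, h₂.snd_mem, rfl⟩]
  symm.symm := by
    rintro a b (⟨u, v, huv, rfl, rfl⟩ | ⟨u, v, huv, rfl, rfl⟩ | ⟨h₁, h₂, hab⟩)
    · exact .inl ⟨v, u, huv.symm, rfl, rfl⟩
    · exact .inr (.inl ⟨v, u, huv.symm, rfl, rfl⟩)
    · exact .inr (.inr ⟨h₁, h₂, by rwa [Sym2.eq_swap]⟩)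

/-- The subgraph of `G₁` obtained from a subgraph of the gluing by replacing the part outside `G₁`
by the edge `x₁y₁` if both cut edges are present. -/
def proj (A : G.Subgraph) : G₁.Subgraph where
  verts := i ⁻¹' A.verts
  Adj u v := A.Adj (i u) (i v) ∨
    (s(u, v) = s(x₁, y₁) ∧ A.Adj (i x₁) (j x₂) ∧ A.Adj (i y₁) (j y₂))
  adj_sub := by
    rintro u v (huv | ⟨huv, -⟩)
    · exact ((h.adj_left u v).1 huv.adj_sub).1
    · exact (G₁.mem_edgeSet).1 (huv ▸ h.edge_left)
  edge_vert := by
    rintro u v (huv | ⟨huv, hx, hy⟩)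
    · exact huv.fst_mem
    · obtain ⟨rfl, -⟩ | ⟨rfl, -⟩ := Sym2.eq_iff.1 huv
      exacts [hx.fst_mem, hy.fst_mem]
  symm.symm := by
    rintro u v (huv | ⟨huv, hxy⟩)
    · exact .inl huv.symm
    · exact .inr ⟨by rwa [Sym2.eq_swap], hxy⟩

lemma swap_glue : h.swap.glue A₂ A₁ = h.glue A₁ A₂ := by
  ext a b
  · exact or_comm
  · simp only [glue, Sym2.eq_swap (a := j _), and_left_comm, or_left_comm]

lemma left_mem_verts_glue {u : V₁} : i u ∈ (h.glue A₁ A₂).verts ↔ u ∈ A₁.verts := by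
  simp [glue, fun v => (h.left_ne_right u v).symm]

lemma right_mem_verts_glue {v : V₂} : j v ∈ (h.glue A₁ A₂).verts ↔ v ∈ A₂.verts := by
  rw [← h.swap_glue, h.swap.left_mem_verts_glue]

lemma glue_adj_left {u v : V₁} :
    (h.glue A₁ A₂).Adj (i u) (i v) ↔ A₁.Adj u v ∧ s(u, v) ≠ s(x₁, y₁) := by
  simp [glue, Relation.Map, h.left_ne_right, fun a b => (h.left_ne_right a b).symm]

lemma glue_adj_right {u v : V₂} :
    (h.glue A₁ A₂).Adj (j u) (j v) ↔ A₂.Adj u v ∧ s(u, v) ≠ s(x₂, y₂) := by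
  rw [← h.swap_glue, h.swap.glue_adj_left]

lemma glue_adj_cut_fst :
    (h.glue A₁ A₂).Adj (i x₁) (j x₂) ↔ A₁.Adj x₁ y₁ ∧ A₂.Adj x₂ y₂ := by
  simp [glue, Relation.Map, h.left_ne_right, fun a b => (h.left_ne_right a b).symm]

lemma glue_adj_cut_snd :
    (h.glue A₁ A₂).Adj (i y₁) (j y₂) ↔ A₁.Adj x₁ y₁ ∧ A₂.Adj x₂ y₂ := by
  simp [glue, Relation.Map, h.left_ne_right, fun a b => (h.left_ne_right a b).symm]

lemma proj_adj_of_ne {u v : V₁} (huv : s(u, v) ≠ s(x₁, y₁)) :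
    (h.proj A).Adj u v ↔ A.Adj (i u) (i v) := by
  simp only [proj, huv, false_and, or_false]

lemma proj_adj_edge :
    (h.proj A).Adj x₁ y₁ ↔ A.Adj (i x₁) (j x₂) ∧ A.Adj (i y₁) (j y₂) := by
  have : ¬ A.Adj (i x₁) (i y₁) := fun hA => ((h.adj_left ..).1 hA.adj_sub).2 rfl
  simp [proj, this]

lemma proj_glue (hcut : A₁.Adj x₁ y₁ → A₂.Adj x₂ y₂) : h.proj (h.glue A₁ A₂) = A₁ := by
  ext u v
  · exact h.left_mem_verts_glue
  · by_cases he : s(u, v) = s(x₁, y₁)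
    · rw [adj_congr_of_mk_eq _ he, adj_congr_of_mk_eq _ he, h.proj_adj_edge, h.glue_adj_cut_fst,
        h.glue_adj_cut_snd, and_self, and_iff_left_of_imp hcut]
    · rw [h.proj_adj_of_ne he, h.glue_adj_left, and_iff_left he]

lemma swap_proj_glue (hcut : A₂.Adj x₂ y₂ → A₁.Adj x₁ y₁) :
    h.swap.proj (h.glue A₁ A₂) = A₂ := by
  rw [← h.swap_glue, h.swap.proj_glue hcut]

lemma swap_proj_adj_edge :
    (h.swap.proj A).Adj x₂ y₂ ↔ A.Adj (i x₁) (j x₂) ∧ A.Adj (i y₁) (j y₂) := by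
  rw [h.swap.proj_adj_edge, A.adj_comm, A.adj_comm (j y₂)]

lemma glue_proj (hA : A.Adj (i x₁) (j x₂) ↔ A.Adj (i y₁) (j y₂)) :
    h.glue (h.proj A) (h.swap.proj A) = A := by
  refine h.subgraph_ext (fun u => h.left_mem_verts_glue) (fun v => h.right_mem_verts_glue)
    fun a b hab => ?_
  refine h.adj_induction (P := fun a b => (h.glue (h.proj A) (h.swap.proj A)).Adj a b ↔ A.Adj a b)
    (fun a b => by simp only [Subgraph.adj_comm _ b a, imp_self]) ?_ ?_ ?_ ?_ hab
  · intro u v _ huv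
    rw [h.glue_adj_left, h.proj_adj_of_ne huv, and_iff_left huv]
  · intro u v _ huv
    rw [h.glue_adj_right, h.swap.proj_adj_of_ne huv, and_iff_left huv]
  · rw [h.glue_adj_cut_fst, h.proj_adj_edge, h.swap_proj_adj_edge, ← hA, and_self, and_self]
  · rw [h.glue_adj_cut_snd, h.proj_adj_edge, h.swap_proj_adj_edge, hA, and_self, and_self]

lemma proj_top : h.proj ⊤ = ⊤ := by
  ext u v
  · simp [proj]
  · by_cases he : s(u, v) = s(x₁, y₁)
    · rw [adj_congr_of_mk_eq _ he, adj_congr_of_mk_eq _ he, h.proj_adj_edge]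
      simp [h.adj_cut_fst, h.adj_cut_snd, h.edge_left]
    · rw [h.proj_adj_of_ne he]
      simp [h.adj_left, he]

lemma adj_reroute_iff (hA : A.Adj (i x₁) (j x₂) ↔ A.Adj (i y₁) (j y₂)) {u v : V₁} :
    A.Adj (i u) (reroute i j x₁ y₁ x₂ y₂ u v) ↔ (h.proj A).Adj u v := by
  by_cases huv : s(u, v) = s(x₁, y₁)
  · rw [adj_congr_of_mk_eq _ huv, h.proj_adj_edge]
    obtain ⟨rfl, rfl⟩ | ⟨rfl, rfl⟩ := Sym2.eq_iff.1 huv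
    · simp [reroute, ← hA]
    · simp [reroute, h.edge_left.ne', hA]
  · rw [h.proj_adj_of_ne huv, reroute, if_neg huv]

lemma ncard_neighborSet_proj (hA : A.Adj (i x₁) (j x₂) ↔ A.Adj (i y₁) (j y₂)) (u : V₁) :
    ((h.proj A).neighborSet u).ncard = (A.neighborSet (i u)).ncard := by
  refine Set.BijOn.ncard_eq (f := reroute i j x₁ y₁ x₂ y₂ u)
    ⟨fun v => (h.adj_reroute_iff hA).2, (h.reroute_injective u).injOn, fun b hb => ?_⟩
  obtain ⟨v, rfl⟩ := h.exists_reroute_eq hb.adj_sub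
  exact ⟨v, (h.adj_reroute_iff hA).1 hb, rfl⟩

lemma ncard_neighborSet_glue_left (hcut : A₁.Adj x₁ y₁ → A₂.Adj x₂ y₂) (u : V₁) :
    ((h.glue A₁ A₂).neighborSet (i u)).ncard = (A₁.neighborSet u).ncard := by
  rw [← h.ncard_neighborSet_proj (h.glue_adj_cut_fst.trans h.glue_adj_cut_snd.symm),
    h.proj_glue hcut]

lemma ncard_neighborSet_glue_eq_two (hcut : A₁.Adj x₁ y₁ ↔ A₂.Adj x₂ y₂)
    (h₁ : ∀ u ∈ A₁.verts, (A₁.neighborSet u).ncard = 2)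
    (h₂ : ∀ v ∈ A₂.verts, (A₂.neighborSet v).ncard = 2) {a : V} (ha : a ∈ (h.glue A₁ A₂).verts) :
    ((h.glue A₁ A₂).neighborSet a).ncard = 2 := by
  obtain ⟨u, rfl⟩ | ⟨v, rfl⟩ := h.exists_eq_or_exists_eq a
  · rw [h.ncard_neighborSet_glue_left hcut.1, h₁ u (h.left_mem_verts_glue.1 ha)]
  · rw [← h.swap_glue, h.swap.ncard_neighborSet_glue_left hcut.2,
      h₂ v (h.right_mem_verts_glue.1 ha)]

lemma reachable_glue_left [Finite V₁] (hA₁ : IsCircuit A₁) {u v : V₁} (hu : u ∈ A₁.verts)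
    (hv : v ∈ A₁.verts) : (h.glue A₁ A₂).spanningCoe.Reachable (i u) (i v) := by
  have hconn := hA₁.connected_deleteEdges s(x₁, y₁)
  refine reachable_of_forall_adj i (fun a b hab => ?_)
    ((connected_iff_forall_reachable_spanningCoe.1 hconn).2 u hu v hv)
  exact Adj.reachable (h.glue_adj_left.2 hab)

lemma reachable_glue_right [Finite V₂] (hA₂ : IsCircuit A₂) {u v : V₂} (hu : u ∈ A₂.verts)
    (hv : v ∈ A₂.verts) : (h.glue A₁ A₂).spanningCoe.Reachable (j u) (j v) := by
  rw [← h.swap_glue]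
  exact h.swap.reachable_glue_left hA₂ hu hv

lemma isCircuit_glue [Finite V₁] [Finite V₂] (hA₁ : IsCircuit A₁) (hA₂ : IsCircuit A₂)
    (he₁ : A₁.Adj x₁ y₁) (he₂ : A₂.Adj x₂ y₂) : IsCircuit (h.glue A₁ A₂) := by
  refine ⟨connected_iff_forall_reachable_spanningCoe.2 ⟨⟨i x₁, ?_⟩, fun a ha b hb => ?_⟩,
    fun a => h.ncard_neighborSet_glue_eq_two (iff_of_true he₁ he₂) hA₁.2 hA₂.2⟩
  · exact h.left_mem_verts_glue.2 he₁.fst_mem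
  · have hcut : (h.glue A₁ A₂).spanningCoe.Reachable (i x₁) (j x₂) :=
      Adj.reachable (h.glue_adj_cut_fst.2 ⟨he₁, he₂⟩)
    have hroot (a : V) (ha : a ∈ (h.glue A₁ A₂).verts) :
        (h.glue A₁ A₂).spanningCoe.Reachable (i x₁) a := by
      obtain ⟨u, rfl⟩ | ⟨v, rfl⟩ := h.exists_eq_or_exists_eq a
      · exact h.reachable_glue_left hA₁ he₁.fst_mem (h.left_mem_verts_glue.1 ha)
      · exact hcut.trans (h.reachable_glue_right hA₂ he₂.fst_mem (h.right_mem_verts_glue.1 ha))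
    exact (hroot a ha).symm.trans (hroot b hb)

lemma glue_bot_bot : h.glue ⊥ ⊥ = ⊥ := by
  simp [Subgraph.eq_bot_iff_verts_eq_empty, glue]

lemma isCircuit_glue_bot [Finite V₁] (hA₁ : IsCircuit A₁) (he₁ : ¬ A₁.Adj x₁ y₁) :
    IsCircuit (h.glue A₁ ⊥) := by
  obtain ⟨u, hu⟩ := hA₁.1.nonempty
  have hverts (a : V) (ha : a ∈ (h.glue A₁ ⊥).verts) : ∃ v ∈ A₁.verts, i v = a := by
    simpa [glue] using ha
  refine ⟨connected_iff_forall_reachable_spanningCoe.2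
    ⟨⟨i u, h.left_mem_verts_glue.2 hu⟩, fun a ha b hb => ?_⟩,
    fun a => h.ncard_neighborSet_glue_eq_two (iff_of_false he₁ id) hA₁.2 (by simp)⟩
  obtain ⟨v, hv, rfl⟩ := hverts a ha
  obtain ⟨w, hw, rfl⟩ := hverts b hb
  exact h.reachable_glue_left hA₁ hv hw

lemma reachable_proj (hA : A.Adj (i x₁) (j x₂) ↔ A.Adj (i y₁) (j y₂)) {u v : V₁}
    (huv : A.spanningCoe.Reachable (i u) (i v)) : (h.proj A).spanningCoe.Reachable u v := by
  -- Contracting the other side to `x₁` sends every edge of `A` to a vertex or an edge of `proj A`.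
  let contract : V → V₁ := Function.extend i id fun _ => x₁
  have contract_left (w : V₁) : contract (i w) = w := i.injective.extend_apply ..
  have contract_right (w : V₂) : contract (j w) = x₁ :=
    Function.extend_apply' _ _ _ fun ⟨w', hw'⟩ => h.left_ne_right w' w hw'
  have hadj (a b : V) (hab : A.Adj a b) :
      (h.proj A).spanningCoe.Reachable (contract a) (contract b) := by
    refine h.adj_induction (P := fun a b => A.Adj a b →
      (h.proj A).spanningCoe.Reachable (contract a) (contract b))
      (fun a b hP hba => (hP hba.symm).symm) ?_ ?_ ?_ ?_ hab.adj_sub hab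
    · intro u v _ huv hA
      rw [contract_left, contract_left]
      exact Adj.reachable ((h.proj_adj_of_ne huv).2 hA)
    · intro u v _ _ _
      rw [contract_right, contract_right]
    · intro _
      rw [contract_left, contract_right]
    · intro hy
      rw [contract_left, contract_right]
      exact Adj.reachable (h.proj_adj_edge.2 ⟨hA.2 hy, hy⟩).symm
  simpa only [contract_left] using reachable_of_forall_adj contract hadj huv

lemma isCircuit_proj [Finite V] (hA : IsCircuit A) (hne : h.proj A ≠ ⊥) :
    IsCircuit (h.proj A) := by
  have hcut := h.adj_cut_fst_iff_adj_cut_snd hA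
  refine ⟨connected_iff_forall_reachable_spanningCoe.2
    ⟨(Subgraph.ne_bot_iff_nonempty_verts _).1 hne, fun u hu v hv => ?_⟩, fun u hu => ?_⟩
  · exact h.reachable_proj hcut ((connected_iff_forall_reachable_spanningCoe.1 hA.1).2 _ hu _ hv)
  · rw [h.ncard_neighborSet_proj hcut, hA.2 _ hu]

lemma proj_eq_bot_or_swap_proj_eq_bot [Finite V] (hA : IsCircuit A)
    (hx : ¬ A.Adj (i x₁) (j x₂)) : h.proj A = ⊥ ∨ h.swap.proj A = ⊥ := by
  by_contra! hne
  obtain ⟨⟨u, hu⟩, ⟨v, hv⟩⟩ := hne.imp (Subgraph.ne_bot_iff_nonempty_verts _).1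
    (Subgraph.ne_bot_iff_nonempty_verts _).1
  obtain hx' | hy := h.adj_cut_of_connected hA.1 hu hv
  · exact hx hx'
  · exact hx ((h.adj_cut_fst_iff_adj_cut_snd hA).2 hy)

/-- The copies in `G` of the members of `R₁` and `R₂`, meant for circuits that avoid `x₁y₁` and
`x₂y₂`. -/
def glueRest (R₁ : Multiset G₁.Subgraph) (R₂ : Multiset G₂.Subgraph) : Multiset G.Subgraph :=
  R₁.map (h.glue · ⊥) + R₂.map (h.glue ⊥ ·)

open scoped Classical in
/-- The traces in `G₁` of the members of `R`, where the circuits lying in `G₂`, whose trace is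
empty, are discarded. -/
noncomputable def projRest (R : Multiset G.Subgraph) : Multiset G₁.Subgraph :=
  (R.map h.proj).filter (· ≠ ⊥)

lemma swap_glueRest : h.swap.glueRest R₂ R₁ = h.glueRest R₁ R₂ := by
  simp only [glueRest, h.swap_glue, add_comm]

lemma mem_glueRest {H : G.Subgraph} :
    H ∈ h.glueRest R₁ R₂ ↔ (∃ H₁ ∈ R₁, h.glue H₁ ⊥ = H) ∨ ∃ H₂ ∈ R₂, h.glue ⊥ H₂ = H := by
  simp [glueRest]

lemma mem_projRest {H₁ : G₁.Subgraph} :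
    H₁ ∈ h.projRest R ↔ (∃ H ∈ R, h.proj H = H₁) ∧ H₁ ≠ ⊥ := by
  simp [projRest]

lemma projRest_glueRest (hR₁ : ∀ H ∈ R₁, IsCircuit H ∧ ¬ H.Adj x₁ y₁) :
    h.projRest (h.glueRest R₁ R₂) = R₁ := by
  classical
  have hleft : (R₁.map (h.glue · ⊥)).map h.proj = R₁ := by
    rw [Multiset.map_map]
    exact (Multiset.map_congr rfl fun H hH =>
      h.proj_glue fun he => absurd he (hR₁ H hH).2).trans R₁.map_id
  have hright : ∀ H ∈ (R₂.map (h.glue ⊥ ·)).map h.proj, ¬ H ≠ ⊥ := by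
    simp +contextual [h.proj_glue, Multiset.mem_replicate]
  rw [projRest, glueRest, Multiset.map_add, Multiset.filter_add, hleft,
    Multiset.filter_eq_nil.2 hright, add_zero,
    Multiset.filter_eq_self.2 fun H hH => (hR₁ H hH).1.ne_bot]

lemma swap_projRest_glueRest (hR₂ : ∀ H ∈ R₂, IsCircuit H ∧ ¬ H.Adj x₂ y₂) :
    h.swap.projRest (h.glueRest R₁ R₂) = R₂ := by
  rw [← h.swap_glueRest, h.swap.projRest_glueRest hR₂]

lemma glueRest_projRest [Finite V] (hR : ∀ H ∈ R, IsCircuit H ∧ ¬ H.Adj (i x₁) (j x₂)) :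
    h.glueRest (h.projRest R) (h.swap.projRest R) = R := by
  induction R using Multiset.induction_on with
  | empty => simp [glueRest, projRest]
  | cons H R ih =>
    obtain ⟨⟨hH, hx⟩, hR⟩ := Multiset.forall_mem_cons.1 hR
    have hglue := h.glue_proj (h.adj_cut_fst_iff_adj_cut_snd hH)
    have hR := ih hR
    rw [glueRest, projRest, projRest] at hR ⊢
    obtain hbot | hbot := h.proj_eq_bot_or_swap_proj_eq_bot hH hx
    · have hne : h.swap.proj H ≠ ⊥ := fun hbot' =>
        hH.ne_bot (by rw [← hglue, hbot, hbot', h.glue_bot_bot])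
      rw [hbot] at hglue
      simp [hbot, hne, hglue, hR]
    · have hne : h.proj H ≠ ⊥ := fun hbot' =>
        hH.ne_bot (by rw [← hglue, hbot, hbot', h.glue_bot_bot])
      rw [hbot] at hglue
      simp [hbot, hne, hglue, hR]

open scoped Classical in
lemma countP_adj_projRest {u v : V₁} (huv : s(u, v) ≠ s(x₁, y₁)) :
    (h.projRest R).countP (fun H => H.Adj u v) = R.countP (fun H => H.Adj (i u) (i v)) := by
  have hne (H : G₁.Subgraph) : H.Adj u v ∧ H ≠ ⊥ ↔ H.Adj u v :=
    and_iff_left_of_imp (by rintro huv rfl; exact huv)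
  simp only [projRest, Multiset.countP_filter, hne, Multiset.countP_map, h.proj_adj_of_ne huv]
  exact (Multiset.countP_eq_card_filter _ _).symm

open scoped Classical in
lemma countP_adj_glueRest {u v : V₁} (huv : s(u, v) ≠ s(x₁, y₁)) :
    (h.glueRest R₁ R₂).countP (fun H => H.Adj (i u) (i v)) = R₁.countP (fun H => H.Adj u v) := by
  simp [glueRest, Multiset.countP_map, h.glue_adj_left, huv, ← Multiset.countP_eq_card_filter]

lemma not_adj_cut_of_mem_glueRest {H : G.Subgraph} (hH : H ∈ h.glueRest R₁ R₂) :
    ¬ H.Adj (i x₁) (j x₂) ∧ ¬ H.Adj (i y₁) (j y₂) := by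
  obtain ⟨H₁, -, rfl⟩ | ⟨H₂, -, rfl⟩ := h.mem_glueRest.1 hH <;>
    simp [h.glue_adj_cut_fst, h.glue_adj_cut_snd]

lemma isCircuit_of_mem_glueRest [Finite V₁] [Finite V₂]
    (hR₁ : ∀ H ∈ R₁, IsCircuit H ∧ ¬ H.Adj x₁ y₁) (hR₂ : ∀ H ∈ R₂, IsCircuit H ∧ ¬ H.Adj x₂ y₂)
    {H : G.Subgraph} (hH : H ∈ h.glueRest R₁ R₂) : IsCircuit H := by
  obtain ⟨H₁, hH₁, rfl⟩ | ⟨H₂, hH₂, rfl⟩ := h.mem_glueRest.1 hH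
  · exact h.isCircuit_glue_bot (hR₁ H₁ hH₁).1 (hR₁ H₁ hH₁).2
  · rw [← h.swap_glue]
    exact h.swap.isCircuit_glue_bot (hR₂ H₂ hH₂).1 (hR₂ H₂ hH₂).2

open scoped Classical in
lemma countP_adj_glue_left {u v : V₁} (huv : s(u, v) ≠ s(x₁, y₁)) :
    (h.glue A₁ A₂ ::ₘ h.glue B₁ B₂ ::ₘ h.glueRest R₁ R₂).countP (fun H => H.Adj (i u) (i v)) =
      (A₁ ::ₘ B₁ ::ₘ R₁).countP (fun H => H.Adj u v) := by
  simp only [Multiset.countP_cons, h.countP_adj_glueRest huv, h.glue_adj_left, ne_eq, huv,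
    not_false_eq_true, and_true]

lemma isRootedCover_glue [Finite V₁] [Finite V₂] (h₁ : IsRootedCover x₁ y₁ A₁ B₁ R₁)
    (h₂ : IsRootedCover x₂ y₂ A₂ B₂ R₂) :
    IsRootedCover (i x₁) (j x₂) (h.glue A₁ A₂) (h.glue B₁ B₂) (h.glueRest R₁ R₂) := by
  classical
  refine isRootedCover_iff.2 ⟨isCiDC_iff_forall_adj.2 ⟨?_, fun a b hab => ?_⟩,
    h.glue_adj_cut_fst.2 ⟨h₁.adj_fst, h₂.adj_fst⟩, h.glue_adj_cut_fst.2 ⟨h₁.adj_snd, h₂.adj_snd⟩⟩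
  · simp only [Multiset.forall_mem_cons]
    exact ⟨h.isCircuit_glue h₁.isCircuit_fst h₂.isCircuit_fst h₁.adj_fst h₂.adj_fst,
      h.isCircuit_glue h₁.isCircuit_snd h₂.isCircuit_snd h₁.adj_snd h₂.adj_snd,
      fun H => h.isCircuit_of_mem_glueRest h₁.isCircuit_and_not_adj h₂.isCircuit_and_not_adj⟩
  refine h.adj_induction (P := fun a b =>
    (h.glue A₁ A₂ ::ₘ h.glue B₁ B₂ ::ₘ h.glueRest R₁ R₂).countP (fun H => H.Adj a b) = 2)
    (fun a b => by simp only [Subgraph.adj_comm _ b a, imp_self]) ?_ ?_ ?_ ?_ hab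
  · intro u v huv hne
    rw [h.countP_adj_glue_left hne, h₁.countP_eq_two u v huv hne]
  · intro u v huv hne
    rw [← h.swap_glue, ← h.swap_glue, ← h.swap_glueRest, h.swap.countP_adj_glue_left hne,
      h₂.countP_eq_two u v huv hne]
  · simp only [Multiset.countP_cons, h.glue_adj_cut_fst, h₁.adj_fst, h₁.adj_snd, h₂.adj_fst,
      h₂.adj_snd, and_self, if_true,
      Multiset.countP_eq_zero.2 fun _ hH => (h.not_adj_cut_of_mem_glueRest hH).1]
  · simp only [Multiset.countP_cons, h.glue_adj_cut_snd, h₁.adj_fst, h₁.adj_snd, h₂.adj_fst,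
      h₂.adj_snd, and_self, if_true,
      Multiset.countP_eq_zero.2 fun _ hH => (h.not_adj_cut_of_mem_glueRest hH).2]

lemma isCircuit_proj_and_adj [Finite V] (hA : IsCircuit A) (hx : A.Adj (i x₁) (j x₂)) :
    IsCircuit (h.proj A) ∧ (h.proj A).Adj x₁ y₁ := by
  have hedge := h.proj_adj_edge.2 ⟨hx, h.adj_cut_snd_of_adj_cut_fst hA hx⟩
  exact ⟨h.isCircuit_proj hA (fun hbot => by simp [hbot] at hedge), hedge⟩

lemma isRootedCover_proj [Finite V] (hABR : IsRootedCover (i x₁) (j x₂) A B R) :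
    IsRootedCover x₁ y₁ (h.proj A) (h.proj B) (h.projRest R) := by
  classical
  obtain ⟨hcircA, hedgeA⟩ := h.isCircuit_proj_and_adj hABR.isCircuit_fst hABR.adj_fst
  obtain ⟨hcircB, hedgeB⟩ := h.isCircuit_proj_and_adj hABR.isCircuit_snd hABR.adj_snd
  refine ⟨hcircA, hcircB, hedgeA, hedgeB, fun H₁ hH₁ => ?_, fun u v huv hne => ?_⟩
  · obtain ⟨⟨H, hHR, rfl⟩, hbot⟩ := h.mem_projRest.1 hH₁
    obtain ⟨hH, hx⟩ := hABR.isCircuit_and_not_adj H hHR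
    exact ⟨h.isCircuit_proj hH hbot, fun hedge => hx (h.proj_adj_edge.1 hedge).1⟩
  · have htwo := hABR.countP_eq_two (i u) (i v) ((h.adj_left u v).2 ⟨huv, hne⟩)
      (by simp [h.left_ne_right])
    simpa only [Multiset.countP_cons, h.proj_adj_of_ne hne, h.countP_adj_projRest hne] using htwo

end GlueAndProject

lemma ncard_neighborSet_left (h : IsGluing i j G₁ G₂ G x₁ y₁ x₂ y₂) (u : V₁) :
    (G.neighborSet (i u)).ncard = (G₁.neighborSet u).ncard := by
  have := h.ncard_neighborSet_proj (A := ⊤) (by simp [h.adj_cut_fst, h.adj_cut_snd]) u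
  simpa [h.proj_top] using this.symm

lemma ncard_rootedCovers_eq_mul (h : IsGluing i j G₁ G₂ G x₁ y₁ x₂ y₂) [Finite V] :
    (rootedCovers G (i x₁) (j x₂)).ncard =
      (rootedCovers G₁ x₁ y₁).ncard * (rootedCovers G₂ x₂ y₂).ncard := by
  have := Finite.of_injective i i.injective
  have := Finite.of_injective j j.injective
  rw [← Set.ncard_prod]
  refine (Set.InvOn.bijOn (s := rootedCovers G₁ x₁ y₁ ×ˢ rootedCovers G₂ x₂ y₂)
    (f := fun t => (h.glue t.1.1 t.2.1, h.glue t.1.2.1 t.2.2.1, h.glueRest t.1.2.2 t.2.2.2))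
    (f' := fun t => ((h.proj t.1, h.proj t.2.1, h.projRest t.2.2),
      (h.swap.proj t.1, h.swap.proj t.2.1, h.swap.projRest t.2.2)))
    ⟨?_, ?_⟩ ?_ ?_).ncard_eq.symm
  · rintro ⟨⟨A₁, B₁, R₁⟩, ⟨A₂, B₂, R₂⟩⟩
      ⟨(h₁ : IsRootedCover x₁ y₁ A₁ B₁ R₁), (h₂ : IsRootedCover x₂ y₂ A₂ B₂ R₂)⟩
    simp only [h.proj_glue fun _ => h₂.adj_fst, h.proj_glue fun _ => h₂.adj_snd,
      h.swap_proj_glue fun _ => h₁.adj_fst, h.swap_proj_glue fun _ => h₁.adj_snd,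
      h.projRest_glueRest h₁.isCircuit_and_not_adj,
      h.swap_projRest_glueRest h₂.isCircuit_and_not_adj]
  · rintro ⟨A, B, R⟩ (hABR : IsRootedCover (i x₁) (j x₂) A B R)
    simp only [h.glue_proj (h.adj_cut_fst_iff_adj_cut_snd hABR.isCircuit_fst),
      h.glue_proj (h.adj_cut_fst_iff_adj_cut_snd hABR.isCircuit_snd),
      h.glueRest_projRest hABR.isCircuit_and_not_adj]
  · exact fun t ht => h.isRootedCover_glue ht.1 ht.2
  · exact fun t ht => ⟨h.isRootedCover_proj ht, h.swap.isRootedCover_proj ht.symm⟩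

end IsGluing

lemma isGluing_inl_inr {G₁ : SimpleGraph V₁} {G₂ : SimpleGraph V₂} {G : SimpleGraph (V₁ ⊕ V₂)}
    {x₁ y₁ : V₁} {x₂ y₂ : V₂} (he₁ : G₁.Adj x₁ y₁) (he₂ : G₂.Adj x₂ y₂)
    (hG : ∀ a b : V₁ ⊕ V₂, G.Adj a b ↔
      (∃ u v : V₁, a = Sum.inl u ∧ b = Sum.inl v ∧ G₁.Adj u v ∧ s(u, v) ≠ s(x₁, y₁)) ∨
      (∃ u v : V₂, a = Sum.inr u ∧ b = Sum.inr v ∧ G₂.Adj u v ∧ s(u, v) ≠ s(x₂, y₂)) ∨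
      (a = Sum.inl x₁ ∧ b = Sum.inr x₂) ∨ (a = Sum.inr x₂ ∧ b = Sum.inl x₁) ∨
      (a = Sum.inl y₁ ∧ b = Sum.inr y₂) ∨ (a = Sum.inr y₂ ∧ b = Sum.inl y₁)) :
    IsGluing .inl .inr G₁ G₂ G x₁ y₁ x₂ y₂ where
  isCompl_range := Set.isCompl_range_inl_range_inr
  edge_left := he₁
  edge_right := he₂
  adj_left u v := by simp [hG]
  adj_right u v := by simp [hG]
  adj_cross u v := by simp [hG]

theorem stmt7_general [Finite V] {i : V₁ ↪ V} {j : V₂ ↪ V} {G₁ : SimpleGraph V₁}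
    {G₂ : SimpleGraph V₂} {G : SimpleGraph V} {x₁ y₁ : V₁} {x₂ y₂ : V₂}
    (h : IsGluing i j G₁ G₂ G x₁ y₁ x₂ y₂) (hx₁ : (G₁.neighborSet x₁).ncard = 3)
    (hx₂ : (G₂.neighborSet x₂).ncard = 3) :
    nu G = 2 * nu G₁ * nu G₂ := by
  have hx : (G.neighborSet (i x₁)).ncard = 3 := by rw [h.ncard_neighborSet_left, hx₁]
  have hdouble : 2 * nu G = (2 * nu G₁) * (2 * nu G₂) := by
    rw [← ncard_rootedCovers h.adj_cut_fst hx, ← ncard_rootedCovers h.edge_left hx₁,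
      ← ncard_rootedCovers h.edge_right hx₂, h.ncard_rootedCovers_eq_mul]
  linarith

end Gluing

/-- Gluing two cubic graphs across a 2-edge-cut: `G` is obtained from the disjoint union
of `G₁ − x₁y₁` and `G₂ − x₂y₂` by adding the edges `x₁x₂` and `y₁y₂`.
Then `ν(G) = 2 · ν(G₁) · ν(G₂)`. -/
theorem stmt7 {V₁ V₂ : Type*} [Fintype V₁] [Fintype V₂]
    (G₁ : SimpleGraph V₁) (G₂ : SimpleGraph V₂)
    (h₁ : IsCubic G₁) (h₂ : IsCubic G₂)
    (x₁ y₁ : V₁) (x₂ y₂ : V₂) (he₁ : G₁.Adj x₁ y₁) (he₂ : G₂.Adj x₂ y₂)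
    (G : SimpleGraph (V₁ ⊕ V₂))
    (hG : ∀ a b : V₁ ⊕ V₂, G.Adj a b ↔
      (∃ u v : V₁, a = Sum.inl u ∧ b = Sum.inl v ∧ G₁.Adj u v ∧ s(u, v) ≠ s(x₁, y₁)) ∨
      (∃ u v : V₂, a = Sum.inr u ∧ b = Sum.inr v ∧ G₂.Adj u v ∧ s(u, v) ≠ s(x₂, y₂)) ∨
      (a = Sum.inl x₁ ∧ b = Sum.inr x₂) ∨ (a = Sum.inr x₂ ∧ b = Sum.inl x₁) ∨
      (a = Sum.inl y₁ ∧ b = Sum.inr y₂) ∨ (a = Sum.inr y₂ ∧ b = Sum.inl y₁)) :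
    nu G = 2 * nu G₁ * nu G₂ := by
  exact stmt7_general (isGluing_inl_inr he₁ he₂ hG) (h₁ x₁) (h₂ x₂)

end CiDC
end

section
/- Let G1 and G2 be cubic simple graphs on disjoint vertex sets, let v1 be a vertex of G1 with neighbors a1, b1, c1 and v2 a vertex of G2 with neighbors a2, b2, c2, and let G be the graph obtained from the disjoint union of G1 − v1 and G2 − v2 by adding the three new edges a1a2, b1b2 and c1c2 (so that {a1a2, b1b2, c1c2} is a 3-edge-cut of G). Then ν(G) = ν(G1) · ν(G2). -/
namespace CiDC

open SimpleGraph

/-!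
For a 3-edge cut of `G`, let `G₁` and `G₂` be the graphs obtained by contracting either side to a
single vertex. A circuit meets the cut in an even number of edges, hence in none or in two, so
contraction takes circuits to circuits and double covers to double covers, apart from the circuits
that lie inside the contracted side and are lost. Every cut edge is covered twice, so for each of
the three pairs of cut edges exactly one member of a double cover uses that pair. Therefore double
covers of `G₁` and of `G₂` glue in exactly one way: the members using the same pair are joined, and
those avoiding the contracted vertex are kept. Contraction to both sides is thus a bijection from
the double covers of `G` to pairs of double covers of `G₁` and `G₂`.
-/

section Graph

variable {V : Type*} {G : SimpleGraph V} {H : G.Subgraph}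

theorem even_card_interedges_self [DecidableRel G.Adj] (T : Finset V) :
    Even (G.interedges T T).card := by
  rw [← ZMod.natCast_eq_zero_iff_even, Finset.cast_card]
  refine Finset.sum_involution (fun e _ => e.swap) (fun _ _ => by decide) ?_ ?_
    (fun _ _ => Prod.swap_swap _)
  · rintro ⟨p, q⟩ he _ hswap
    have hpq : G.Adj p q := ((mk_mem_interedges_iff G).1 he).2.2
    exact hpq.ne' (Prod.ext_iff.1 hswap).1
  · rintro ⟨p, q⟩ he
    obtain ⟨hp, hq, hpq⟩ := (mk_mem_interedges_iff G).1 he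
    exact (mk_mem_interedges_iff G).2 ⟨hq, hp, hpq.symm⟩

theorem sum_degree_eq_card_interedges_add [Fintype V] [DecidableEq V] [DecidableRel G.Adj]
    (T : Finset V) :
    ∑ p ∈ T, G.degree p = (G.interedges T T).card + (G.interedges T Tᶜ).card := by
  simp only [interedges_def, Finset.card_filter, Finset.sum_product, ← Finset.sum_add_distrib,
    Finset.sum_add_sum_compl, ← card_neighborFinset_eq_degree, neighborFinset_eq_filter]

theorem even_card_interedges_compl [Fintype V] [DecidableEq V] [DecidableRel G.Adj]
    {T : Finset V} (hT : ∀ p ∈ T, Even (G.degree p)) : Even (G.interedges T Tᶜ).card := by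
  have hsum : Even (∑ p ∈ T, G.degree p) := Finset.even_sum _ hT
  rw [sum_degree_eq_card_interedges_add, Nat.even_add] at hsum
  exact hsum.1 (even_card_interedges_self T)

theorem exists_adj_of_connected (hH : H.Connected) {S : Set V} {p q : V} (hp : p ∈ H.verts)
    (hpS : p ∈ S) (hq : q ∈ H.verts) (hqS : q ∉ S) : ∃ x ∈ S, ∃ y ∉ S, H.Adj x y := by
  obtain ⟨w⟩ := hH.preconnected ⟨p, hp⟩ ⟨q, hq⟩
  obtain ⟨d, -, hd, hd'⟩ := w.exists_boundary_dart (Subtype.val ⁻¹' S) hpS hqS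
  exact ⟨_, hd, _, hd', d.adj⟩

theorem connected_of_adj_of_cover {D₁ D₂ : G.Subgraph} (hD₁ : D₁.Connected)
    (hD₂ : D₂.Connected) (hle₁ : D₁ ≤ H) (hle₂ : D₂ ≤ H) (hcover : H.verts ⊆ D₁.verts ∪ D₂.verts)
    {p q : V} (hp : p ∈ D₁.verts) (hq : q ∈ D₂.verts) (hpq : H.Adj p q) : H.Connected := by
  have hconn := Subgraph.connected_induce_top_sup hD₁.preconnected hD₂.preconnected hp hq
    hpq.adj_sub
  have hedge : (⊤ : G.Subgraph).induce {p, q} ≤ H := by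
    rw [← Subgraph.subgraphOfAdj_eq_induce hpq.adj_sub]
    exact subgraphOfAdj_le_of_adj H hpq
  have hle := sup_le (sup_le hedge hle₁) hle₂
  refine hconn.mono hle (hle.1.antisymm fun r hr => ?_)
  exact (hcover hr).imp_left .inr

/-- The edges of `H` leaving a vertex set `T`, each directed from inside `T` to outside. -/
def outEdges (H : G.Subgraph) (T : Set V) : Set (V × V) :=
  {e | e.1 ∈ T ∧ e.2 ∉ T ∧ H.Adj e.1 e.2}

theorem IsCircuit.even_ncard_neighborSet (hH : IsCircuit H) (p : V) :
    Even (H.neighborSet p).ncard := by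
  by_cases hp : p ∈ H.verts
  · rw [hH.2 p hp]
    exact even_two
  · have hempty : H.neighborSet p = ∅ :=
      Set.eq_empty_of_forall_notMem fun q hq => hp (H.edge_vert hq)
    simp [hempty]

theorem IsCircuit.even_ncard_outEdges [Finite V] (hH : IsCircuit H) (T : Set V) :
    Even (outEdges H T).ncard := by
  classical
  have := Fintype.ofFinite V
  have hdeg (p : V) : Even (H.spanningCoe.degree p) := by
    have h := hH.even_ncard_neighborSet p
    rw [Set.ncard_eq_toFinset_card', Set.toFinset_card] at h
    rw [← card_neighborSet_eq_degree]
    convert h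
    rfl
  have hcut : outEdges H T = H.spanningCoe.interedges T.toFinset T.toFinsetᶜ := by
    ext ⟨p, q⟩
    simp [outEdges, mk_mem_interedges_iff]
  rw [hcut, Set.ncard_coe_finset]
  exact even_card_interedges_compl fun p _ => hdeg p

theorem IsCircuit.exists_adj (hH : IsCircuit H) {p : V} (hp : p ∈ H.verts) :
    ∃ q, H.Adj p q := by
  have hne : (H.neighborSet p).Nonempty :=
    Set.nonempty_of_ncard_ne_zero (by rw [hH.2 p hp]; decide)
  exact hne

theorem IsCircuit.neighborSet_subset_of_closed [Finite V] (hH : IsCircuit H) {v : V}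
    (hv : v ∈ H.verts) {T : Set V} (hvT : v ∉ T) (hT : (T ∩ H.verts).Nonempty)
    (hclosed : ∀ p ∈ T, ∀ q, H.Adj p q → q ≠ v → q ∈ T) : H.neighborSet v ⊆ T := by
  have hout : outEdges H T = (·, v) '' (H.neighborSet v ∩ T) := by
    ext ⟨p, q⟩
    constructor
    · rintro ⟨hp, hq, hpq⟩
      obtain rfl : q = v := by_contra fun h => hq (hclosed p hp q hpq h)
      exact ⟨p, ⟨hpq.symm, hp⟩, rfl⟩
    · rintro ⟨_, ⟨hvp, hp⟩, rfl, rfl⟩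
      exact ⟨hp, hvT, H.symm.symm _ _ hvp⟩
  have hcard : (outEdges H T).ncard = (H.neighborSet v ∩ T).ncard := by
    rw [hout, Set.ncard_image_of_injective _ (Prod.mk_left_injective v)]
  have heven : Even (H.neighborSet v ∩ T).ncard := hcard ▸ hH.even_ncard_outEdges T
  have hpos : 0 < (H.neighborSet v ∩ T).ncard := by
    obtain ⟨p, hpT, hp⟩ := hT
    obtain ⟨x, hx, y, hy, hxy⟩ := exists_adj_of_connected hH.1 hp hpT hv hvT
    rw [← hcard]
    exact (Set.ncard_pos (Set.toFinite _)).2 ⟨(x, y), hx, hy, hxy⟩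
  -- Of the two edges of `H` at `v`, a nonzero even number leads into `T`.
  have hle : (H.neighborSet v).ncard ≤ (H.neighborSet v ∩ T).ncard := by
    rw [hH.2 v hv]
    exact Nat.le_of_dvd hpos heven.two_dvd
  exact Set.inter_eq_left.1 (Set.eq_of_subset_of_ncard_le Set.inter_subset_left hle)

theorem IsCircuit.connected_deleteVerts [Finite V] (hH : IsCircuit H) {v : V}
    (hv : v ∈ H.verts) : (H.deleteVerts {v}).Connected := by
  obtain ⟨x, hvx⟩ := hH.exists_adj hv
  have hx : x ∈ (H.deleteVerts {v}).verts := ⟨H.edge_vert hvx.symm, hvx.adj_sub.ne'⟩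
  rw [Subgraph.connected_iff', connected_iff_exists_forall_reachable]
  refine ⟨⟨x, hx⟩, fun ⟨w, hw⟩ => ?_⟩
  let T : Set V := {u | ∃ hu, (H.deleteVerts {v}).coe.Reachable ⟨u, hu⟩ ⟨w, hw⟩}
  obtain ⟨_, hreach⟩ : x ∈ T := by
    refine hH.neighborSet_subset_of_closed (T := T) hv (fun ⟨h, _⟩ => h.2 rfl)
      ⟨w, ⟨hw, .refl _⟩, hw.1⟩ ?_ hvx
    rintro p ⟨hp, hreach⟩ q hpq hqv
    have hq : q ∈ (H.deleteVerts {v}).verts := ⟨H.edge_vert hpq.symm, hqv⟩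
    have hqp : (H.deleteVerts {v}).coe.Adj ⟨q, hq⟩ ⟨p, hp⟩ :=
      Subgraph.deleteVerts_adj.2 ⟨hq.1, hq.2, hp.1, hp.2, hpq.symm⟩
    exact ⟨hq, hqp.reachable.trans hreach⟩
  exact hreach

end Graph

section Contraction

variable {V W ι : Type*} {G : SimpleGraph W} {K : SimpleGraph V} {v : V} {φ : W → V}
  {a b : ι → W}

/-- `K` is obtained from `G` by contracting the fibre `φ ⁻¹' {v}` to the single vertex `v`, all
other fibres being singletons. The edges of `G` leaving the fibre are the `s(a i, b i)`, with
`b i` in the fibre, and distinct ones are contracted to distinct edges at `v`. -/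
structure IsContraction (G : SimpleGraph W) (K : SimpleGraph V) (v : V) (φ : W → V)
    (a b : ι → W) : Prop where
  eq_of_map_eq : ∀ {p q}, φ p ≠ v → φ p = φ q → p = q
  exists_map_eq : ∀ x ≠ v, ∃ p, φ p = x
  adj_iff : ∀ {p q}, φ p ≠ v → φ q ≠ v → (G.Adj p q ↔ K.Adj (φ p) (φ q))
  cut_iff : ∀ {p q}, (G.Adj p q ∧ φ p ≠ v ∧ φ q = v) ↔ ∃ i, a i = p ∧ b i = q
  adj_vertex_iff : ∀ {x}, K.Adj x v ↔ ∃ i, φ (a i) = x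
  injective : Function.Injective a

namespace IsContraction

variable (h : IsContraction G K v φ a b)
include h

theorem adj_cut (i : ι) : G.Adj (a i) (b i) :=
  (h.cut_iff.2 ⟨i, rfl, rfl⟩).1

theorem map_fst_ne (i : ι) : φ (a i) ≠ v :=
  (h.cut_iff.2 ⟨i, rfl, rfl⟩).2.1

theorem map_snd_eq (i : ι) : φ (b i) = v :=
  (h.cut_iff.2 ⟨i, rfl, rfl⟩).2.2

theorem finite [Finite W] : Finite V := by
  have hrange : insert v (Set.range φ) = Set.univ := Set.eq_univ_of_forall fun x =>
    or_iff_not_imp_left.2 (h.exists_map_eq x)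
  exact Set.finite_univ_iff.1 (hrange ▸ (Set.finite_range φ).insert v)

theorem map_ne_map {p q : W} (hpq : G.Adj p q) (hp : φ p ≠ v) : φ p ≠ φ q := fun heq =>
  hpq.ne (h.eq_of_map_eq hp heq)

theorem map_adj {p q : W} (hpq : G.Adj p q) (hne : φ p ≠ φ q) : K.Adj (φ p) (φ q) := by
  by_cases hp : φ p = v
  · obtain ⟨i, rfl, -⟩ := h.cut_iff.1 ⟨hpq.symm, fun hq => hne (hp.trans hq.symm), hp⟩
    exact hp ▸ (h.adj_vertex_iff.2 ⟨i, rfl⟩).symm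
  by_cases hq : φ q = v
  · obtain ⟨i, rfl, -⟩ := h.cut_iff.1 ⟨hpq, hp, hq⟩
    exact hq ▸ h.adj_vertex_iff.2 ⟨i, rfl⟩
  exact (h.adj_iff hp hq).1 hpq

theorem exists_adj_lift {x y : V} (hxy : K.Adj x y) :
    ∃ p q, G.Adj p q ∧ φ p = x ∧ φ q = y := by
  by_cases hx : x = v
  · obtain ⟨i, rfl⟩ := h.adj_vertex_iff.1 (hx ▸ hxy.symm)
    exact ⟨b i, a i, (h.adj_cut i).symm, hx ▸ h.map_snd_eq i, rfl⟩
  by_cases hy : y = v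
  · obtain ⟨i, rfl⟩ := h.adj_vertex_iff.1 (hy ▸ hxy)
    exact ⟨a i, b i, h.adj_cut i, rfl, hy ▸ h.map_snd_eq i⟩
  obtain ⟨p, rfl⟩ := h.exists_map_eq x hx
  obtain ⟨q, rfl⟩ := h.exists_map_eq y hy
  exact ⟨p, q, (h.adj_iff hx hy).2 hxy, rfl, rfl⟩

theorem eq_of_adj_of_map_eq {p q q' : W} (hpq : G.Adj p q) (hpq' : G.Adj p q') (hp : φ p ≠ v)
    (heq : φ q = φ q') : q = q' := by
  by_cases hq : φ q = v
  · obtain ⟨i, rfl, rfl⟩ := h.cut_iff.1 ⟨hpq, hp, hq⟩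
    obtain ⟨j, hji, rfl⟩ := h.cut_iff.1 ⟨hpq', hp, heq ▸ hq⟩
    rw [h.injective hji]
  · exact h.eq_of_map_eq hq heq

theorem adj_lift_unique {p q p' q' : W} (hpq : G.Adj p q) (hpq' : G.Adj p' q')
    (hne : φ p ≠ φ q) (hp : φ p = φ p') (hq : φ q = φ q') : p = p' ∧ q = q' := by
  by_cases hpv : φ p = v
  · have hqv : φ q ≠ v := fun hqv => hne (hpv.trans hqv.symm)
    obtain rfl := h.eq_of_map_eq hqv hq
    exact ⟨h.eq_of_adj_of_map_eq hpq.symm hpq'.symm hqv hp, rfl⟩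
  · obtain rfl := h.eq_of_map_eq hpv hp
    exact ⟨rfl, h.eq_of_adj_of_map_eq hpq hpq' hpv hq⟩

/-- The image of a subgraph of `G` in the contracted graph `K`. -/
def contract (H : G.Subgraph) : K.Subgraph where
  verts := φ '' H.verts
  Adj x y := x ≠ y ∧ ∃ p q, H.Adj p q ∧ φ p = x ∧ φ q = y
  adj_sub := by
    rintro _ _ ⟨hne, p, q, hpq, rfl, rfl⟩
    exact h.map_adj hpq.adj_sub hne
  edge_vert := by
    rintro _ _ ⟨-, p, q, hpq, rfl, rfl⟩
    exact ⟨p, H.edge_vert hpq, rfl⟩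
  symm := ⟨fun _ _ ⟨hne, p, q, hpq, hp, hq⟩ => ⟨hne.symm, q, p, hpq.symm, hq, hp⟩⟩

/-- The largest subgraph of `G` whose image in the contracted graph is contained in `K'`; if `K'`
contains `v`, it contains every edge inside the contracted fibre. -/
def comap (_ : IsContraction G K v φ a b) (K' : K.Subgraph) : G.Subgraph where
  verts := φ ⁻¹' K'.verts
  Adj p q := G.Adj p q ∧ φ p ∈ K'.verts ∧ φ q ∈ K'.verts ∧ (φ p ≠ φ q → K'.Adj (φ p) (φ q))
  adj_sub := And.left
  edge_vert hpq := hpq.2.1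
  symm := ⟨fun _ _ ⟨hpq, hp, hq, hK⟩ => ⟨hpq.symm, hq, hp, fun hne => (hK hne.symm).symm⟩⟩

variable {H : G.Subgraph} {K' : K.Subgraph}

theorem map_mem_verts_contract {p : W} (hp : p ∈ H.verts) : φ p ∈ (h.contract H).verts :=
  ⟨p, hp, rfl⟩

theorem mem_verts_of_map_mem {p : W} (hp : φ p ≠ v) (hmem : φ p ∈ (h.contract H).verts) :
    p ∈ H.verts := by
  obtain ⟨q, hq, heq⟩ := hmem
  rwa [h.eq_of_map_eq hp heq.symm]

theorem contract_adj_iff {p q : W} (hpq : G.Adj p q) (hne : φ p ≠ φ q) :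
    (h.contract H).Adj (φ p) (φ q) ↔ H.Adj p q := by
  constructor
  · rintro ⟨-, p', q', hpq', hp, hq⟩
    obtain ⟨rfl, rfl⟩ := h.adj_lift_unique hpq hpq'.adj_sub hne hp.symm hq.symm
    exact hpq'
  · exact fun hH => ⟨hne, p, q, hH, rfl, rfl⟩

theorem le_comap_contract : H ≤ h.comap (h.contract H) :=
  ⟨fun _ => h.map_mem_verts_contract, fun p q hpq =>
    ⟨hpq.adj_sub, h.map_mem_verts_contract (H.edge_vert hpq),
      h.map_mem_verts_contract (H.edge_vert hpq.symm), fun hne => ⟨hne, p, q, hpq, rfl, rfl⟩⟩⟩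

theorem comap_le_of_le_contract (hv : v ∉ K'.verts) (hle : K' ≤ h.contract H) :
    h.comap K' ≤ H := by
  have hne {p : W} (hp : φ p ∈ K'.verts) : φ p ≠ v := fun heq => hv (heq ▸ hp)
  refine ⟨fun p hp => h.mem_verts_of_map_mem (hne hp) (hle.1 hp), ?_⟩
  rintro p q ⟨hpq, hp, -, hK⟩
  have hne := h.map_ne_map hpq (hne hp)
  exact (h.contract_adj_iff hpq hne).1 (hle.2 (hK hne))

theorem comap_contract (hv : v ∉ (h.contract H).verts) : h.comap (h.contract H) = H :=
  (h.comap_le_of_le_contract hv le_rfl).antisymm h.le_comap_contract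

theorem contract_comap (hv : v ∉ K'.verts) : h.contract (h.comap K') = K' := by
  refine Subgraph.ext ?_ ?_
  · refine Set.image_preimage_eq_iff.2 fun x hx => ?_
    exact h.exists_map_eq x fun heq => hv (heq ▸ hx)
  · ext x y
    constructor
    · rintro ⟨hne, p, q, ⟨-, -, -, hK⟩, rfl, rfl⟩
      exact hK hne
    · intro hxy
      obtain ⟨p, q, hpq, rfl, rfl⟩ := h.exists_adj_lift hxy.adj_sub
      exact ⟨hxy.adj_sub.ne, p, q,
        ⟨hpq, K'.edge_vert hxy, K'.edge_vert hxy.symm, fun _ => hxy⟩, rfl, rfl⟩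

theorem ncard_neighborSet_contract {p : W} (hp : φ p ≠ v) :
    ((h.contract H).neighborSet (φ p)).ncard = (H.neighborSet p).ncard := by
  have himage : (h.contract H).neighborSet (φ p) = φ '' H.neighborSet p := by
    ext y
    constructor
    · rintro ⟨-, p', q, hpq, heq, rfl⟩
      obtain rfl := h.eq_of_map_eq hp heq.symm
      exact ⟨q, hpq, rfl⟩
    · rintro ⟨q, hpq, rfl⟩
      exact ⟨h.map_ne_map (H.adj_sub hpq) hp, p, q, hpq, rfl, rfl⟩
  rw [himage, Set.InjOn.ncard_image]
  exact fun q hq q' hq' => h.eq_of_adj_of_map_eq (H.adj_sub hq) (H.adj_sub hq') hp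

theorem connected_contract (hH : H.Connected) : (h.contract H).Connected := by
  rw [Subgraph.connected_iff', connected_iff_exists_forall_reachable]
  obtain ⟨p, hp⟩ := hH.nonempty
  let π (r : H.verts) : (h.contract H).verts := ⟨φ r, h.map_mem_verts_contract r.2⟩
  refine ⟨π ⟨p, hp⟩, ?_⟩
  rintro ⟨_, q, hq, rfl⟩
  have hreach := hH.preconnected ⟨p, hp⟩ ⟨q, hq⟩
  rw [reachable_iff_reflTransGen] at hreach ⊢
  refine Relation.ReflTransGen.lift' π (fun r s hrs => ?_) _ _ hreach
  rw [Function.onFun, ← reachable_iff_reflTransGen]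
  by_cases heq : φ r = φ s
  · exact (Subtype.ext heq : π r = π s) ▸ .refl _
  · exact Adj.reachable (show (h.contract H).Adj (φ r) (φ s) from ⟨heq, r, s, hrs, rfl, rfl⟩)

theorem connected_comap (hK' : K'.Connected) (hv : v ∉ K'.verts) : (h.comap K').Connected := by
  have hne {x : V} (hx : x ∈ K'.verts) : x ≠ v := fun heq => hv (heq ▸ hx)
  choose lift hlift using fun x : K'.verts => h.exists_map_eq x (hne x.2)
  have hmem (x : K'.verts) : φ (lift x) ∈ K'.verts := hlift x ▸ x.2
  let f : K'.coe →g (h.comap K').coe :=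
    { toFun := fun x => ⟨lift x, hmem x⟩
      map_rel' := fun {x y} (hxy : K'.Adj x y) => by
        rw [← hlift x, ← hlift y] at hxy
        exact ⟨(h.adj_iff (hne (hmem x)) (hne (hmem y))).2 hxy.adj_sub, hmem x, hmem y,
          fun _ => hxy⟩ }
  have hf : Function.Surjective f := fun ⟨p, hp⟩ =>
    ⟨⟨φ p, hp⟩, Subtype.ext (h.eq_of_map_eq (hne (hmem _)) (hlift ⟨φ p, hp⟩))⟩
  exact ⟨hK'.coe.map f hf⟩

theorem mem_verts_comap_deleteVerts {p : W} :
    p ∈ (h.comap ((h.contract H).deleteVerts {v})).verts ↔ p ∈ H.verts ∧ φ p ≠ v :=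
  ⟨fun hp => ⟨h.mem_verts_of_map_mem hp.2 hp.1, hp.2⟩,
    fun hp => ⟨h.map_mem_verts_contract hp.1, hp.2⟩⟩

theorem comap_deleteVerts_le : h.comap ((h.contract H).deleteVerts {v}) ≤ H :=
  h.comap_le_of_le_contract (fun hv => hv.2 rfl) Subgraph.deleteVerts_le

theorem connected_comap_deleteVerts [Finite V] (hH : IsCircuit (h.contract H))
    (hv : v ∈ (h.contract H).verts) :
    (h.comap ((h.contract H).deleteVerts {v})).Connected :=
  h.connected_comap (hH.connected_deleteVerts hv) fun hv => hv.2 rfl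

theorem isCircuit_comap (hK' : IsCircuit K') (hv : v ∉ K'.verts) : IsCircuit (h.comap K') := by
  refine ⟨h.connected_comap hK'.1 hv, fun p (hp : φ p ∈ K'.verts) => ?_⟩
  have hne : φ p ≠ v := fun heq => hv (heq ▸ hp)
  rw [← h.ncard_neighborSet_contract hne, h.contract_comap hv, hK'.2 _ hp]

end IsContraction

end Contraction

section EvenSubsets

variable {α : Type*} {M : Multiset α} {t : α → Finset (Fin 3)}

theorem eq_empty_or_eq_compl_singleton_of_even_card :
    ∀ {T : Finset (Fin 3)}, Even T.card → T = ∅ ∨ ∃ k, T = {k}ᶜ := by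
  decide

theorem compl_singleton_nonempty : ∀ k : Fin 3, ({k}ᶜ : Finset (Fin 3)).Nonempty := by
  decide

theorem countP_mem_eq_sum (heven : ∀ x ∈ M, Even (t x).card) (i : Fin 3) :
    M.countP (i ∈ t ·) = ∑ k ∈ {i}ᶜ, M.countP (t · = {k}ᶜ) := by
  have key : ∀ i : Fin 3, ∀ T : Finset (Fin 3), Even T.card →
      (if i ∈ T then 1 else 0) = ∑ k ∈ {i}ᶜ, if T = {k}ᶜ then 1 else 0 := by decide
  induction M using Multiset.induction with
  | empty => simp
  | cons x M ih =>
    obtain ⟨hx, hM⟩ := Multiset.forall_mem_cons.1 heven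
    simp only [Multiset.countP_cons, Finset.sum_add_distrib, ih hM, key i (t x) hx]

theorem countP_eq_compl_singleton (heven : ∀ x ∈ M, Even (t x).card)
    (htwice : ∀ i, M.countP (i ∈ t ·) = 2) (j : Fin 3) : M.countP (t · = {j}ᶜ) = 1 := by
  have hsum (i : Fin 3) : ∑ k ∈ {i}ᶜ, M.countP (t · = {k}ᶜ) = 2 := by
    rw [← countP_mem_eq_sum heven, htwice]
  have h₀ := hsum 0
  have h₁ := hsum 1
  have h₂ := hsum 2
  rw [show ({0}ᶜ : Finset (Fin 3)) = {1, 2} by decide, Finset.sum_pair (by decide)] at h₀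
  rw [show ({1}ᶜ : Finset (Fin 3)) = {0, 2} by decide, Finset.sum_pair (by decide)] at h₁
  rw [show ({2}ᶜ : Finset (Fin 3)) = {0, 1} by decide, Finset.sum_pair (by decide)] at h₂
  fin_cases j <;> dsimp <;> omega

theorem eq_filter_add_sum_filter (heven : ∀ x ∈ M, Even (t x).card) :
    M = M.filter (t · = ∅) + ∑ k, M.filter (t · = {k}ᶜ) := by
  classical
  have hne (k : Fin 3) : ∅ ≠ ({k}ᶜ : Finset (Fin 3)) := (compl_singleton_nonempty k).ne_empty.symm
  ext x
  rw [Multiset.count_add, Multiset.count_sum']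
  by_cases hx : x ∈ M
  · rcases eq_empty_or_eq_compl_singleton_of_even_card (heven x hx) with htx | ⟨k, htx⟩
    · simp [htx, hne]
    · simp [htx, Multiset.count_filter]
  · simp [hx]

theorem exists_eq_filter_add_map (heven : ∀ x ∈ M, Even (t x).card)
    (htwice : ∀ i, M.countP (i ∈ t ·) = 2) :
    ∃ X : Fin 3 → α, (∀ k, t (X k) = {k}ᶜ) ∧
      M = M.filter (t · = ∅) + Finset.univ.val.map X := by
  have hcard (k : Fin 3) : (M.filter (t · = {k}ᶜ)).card = 1 := by
    rw [← Multiset.countP_eq_card_filter, countP_eq_compl_singleton heven htwice]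
  choose X hX using fun k => Multiset.card_eq_one.1 (hcard k)
  refine ⟨X, fun k => ?_, ?_⟩
  · have hmem : X k ∈ M.filter (t · = {k}ᶜ) := by simp [hX]
    exact (Multiset.mem_filter.1 hmem).2
  · conv_lhs => rw [eq_filter_add_sum_filter heven]
    simp only [hX]
    exact congrArg _ (Multiset.bind_singleton _ _)

theorem eq_of_countP_eq_one {p : α → Prop} [DecidablePred p] (hM : M.countP p = 1) {x y : α}
    (hx : x ∈ M) (hpx : p x) (hy : y ∈ M) (hpy : p y) : x = y := by
  rw [Multiset.countP_eq_card_filter] at hM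
  obtain ⟨z, hz⟩ := Multiset.card_eq_one.1 hM
  have heq {w : α} (hw : w ∈ M) (hpw : p w) : w = z :=
    Multiset.mem_singleton.1 (hz ▸ Multiset.mem_filter.2 ⟨hw, hpw⟩)
  rw [heq hx hpx, heq hy hpy]

theorem count_eq_ite_of_countP_eq_one [DecidableEq α] {p : α → Prop} [DecidablePred p]
    (hM : M.countP p = 1) {x : α} (hpx : p x) : M.count x = if x ∈ M then 1 else 0 := by
  have hnodup : (M.filter p).Nodup := by
    rw [Multiset.countP_eq_card_filter] at hM
    obtain ⟨z, hz⟩ := Multiset.card_eq_one.1 hM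
    exact hz ▸ Multiset.nodup_singleton z
  rw [← Multiset.count_filter_of_pos hpx, Multiset.count_eq_of_nodup hnodup]
  simp only [Multiset.mem_filter, hpx, and_true]

end EvenSubsets

section Trace

variable {V W ι : Type*} [Fintype ι] {G : SimpleGraph W} {K : SimpleGraph V} {v : V} {φ : W → V}
  {a b : ι → W} {H : G.Subgraph} {K' : K.Subgraph}

open scoped Classical in
/-- The set of indices `i` such that the edge `s(x i, y i)` belongs to `H`. It records which edges
of a cut are used by `H`. -/
noncomputable def trace (x y : ι → W) (H : G.Subgraph) : Finset ι :=
  {i | H.Adj (x i) (y i)}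

theorem mem_trace {x y : ι → W} {i : ι} : i ∈ trace x y H ↔ H.Adj (x i) (y i) := by
  simp [trace]

theorem trace_comm (x y : ι → W) (H : G.Subgraph) : trace x y H = trace y x H := by
  ext i
  rw [mem_trace, mem_trace, H.adj_comm]

theorem IsCiDC.countP_mem_trace [DecidableEq ι] {C : Multiset G.Subgraph} (hC : IsCiDC G C)
    {x y : ι → W} (hxy : ∀ i, G.Adj (x i) (y i)) (i : ι) :
    C.countP (i ∈ trace x y ·) = 2 := by
  classical
  rw [← hC.2 s(x i, y i) (hxy i)]
  exact Multiset.countP_congr rfl fun _ _ => propext mem_trace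

namespace IsContraction

variable (h : IsContraction G K v φ a b)
include h

theorem trace_contract (H : G.Subgraph) :
    trace (φ ∘ a) (φ ∘ b) (h.contract H) = trace a b H := by
  ext i
  rw [mem_trace, mem_trace]
  exact h.contract_adj_iff (h.adj_cut i) (h.map_ne_map (h.adj_cut i) (h.map_fst_ne i))

theorem ncard_neighborSet_vertex (K' : K.Subgraph) :
    (K'.neighborSet v).ncard = (trace (φ ∘ a) (φ ∘ b) K').card := by
  have himage : K'.neighborSet v = (φ ∘ a) '' trace (φ ∘ a) (φ ∘ b) K' := by
    ext x
    constructor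
    · intro hx
      obtain ⟨i, rfl⟩ := h.adj_vertex_iff.1 (K'.adj_sub hx).symm
      exact ⟨i, mem_trace.2 (by simpa [h.map_snd_eq] using K'.symm.symm _ _ hx), rfl⟩
    · rintro ⟨i, hi, rfl⟩
      have hadj := mem_trace.1 hi
      rw [Function.comp_apply, Function.comp_apply, h.map_snd_eq] at hadj
      exact hadj.symm
  have hinj : Function.Injective (φ ∘ a) := fun i _ hij =>
    h.injective (h.eq_of_map_eq (h.map_fst_ne i) hij)
  rw [himage, Set.ncard_image_of_injective _ hinj, Set.ncard_coe_finset]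

theorem even_card_trace_vertex (hK' : IsCircuit K') :
    Even (trace (φ ∘ a) (φ ∘ b) K').card :=
  h.ncard_neighborSet_vertex K' ▸ hK'.even_ncard_neighborSet v

theorem vertex_mem_verts {i : ι} (hi : i ∈ trace (φ ∘ a) (φ ∘ b) K') : v ∈ K'.verts :=
  h.map_snd_eq i ▸ K'.edge_vert (mem_trace.1 hi).symm

theorem vertex_notMem_verts (hK' : IsCircuit K') (hempty : trace (φ ∘ a) (φ ∘ b) K' = ∅) :
    v ∉ K'.verts := by
  intro hv
  have hcard := h.ncard_neighborSet_vertex K'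
  rw [hK'.2 v hv, hempty, Finset.card_empty] at hcard
  exact two_ne_zero hcard

theorem even_card_trace [Finite W] (hH : IsCircuit H) : Even (trace a b H).card := by
  have himage : outEdges H {p | φ p ≠ v} = (fun i => (a i, b i)) '' trace a b H := by
    ext ⟨p, q⟩
    constructor
    · rintro ⟨hp, hq, hpq⟩
      obtain ⟨i, rfl, rfl⟩ := h.cut_iff.1 ⟨hpq.adj_sub, hp, not_not.1 hq⟩
      exact ⟨i, mem_trace.2 hpq, rfl⟩
    · rintro ⟨i, hi, heq⟩
      obtain ⟨rfl, rfl⟩ := Prod.mk.inj heq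
      have hadj : H.Adj (a i) (b i) := mem_trace.1 hi
      exact ⟨h.map_fst_ne i, not_not.2 (h.map_snd_eq i), hadj⟩
  have hinj : Function.Injective fun i => (a i, b i) := fun _ _ hij =>
    h.injective (Prod.mk.inj hij).1
  rw [← Set.ncard_coe_finset, ← Set.ncard_image_of_injective _ hinj, ← himage]
  exact hH.even_ncard_outEdges _

theorem trace_nonempty {p q : W} (hH : H.Connected) (hp : p ∈ H.verts) (hpv : φ p ≠ v)
    (hq : q ∈ H.verts) (hqv : φ q = v) : (trace a b H).Nonempty := by
  obtain ⟨x, hx, y, hy, hxy⟩ :=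
    exists_adj_of_connected (S := {r | φ r ≠ v}) hH hp hpv hq (not_not.2 hqv)
  obtain ⟨i, rfl, rfl⟩ := h.cut_iff.1 ⟨hxy.adj_sub, hx, not_not.1 hy⟩
  exact ⟨i, mem_trace.2 hxy⟩

end IsContraction

end Trace

section ContractCover

variable {V W : Type*} {G : SimpleGraph W} {K : SimpleGraph V} {v : V} {φ : W → V}

namespace IsContraction

section

variable {ι : Type*} {a b : ι → W} (h : IsContraction G K v φ a b)
include h

theorem exists_map_ne_of_isCircuit_contract {H : G.Subgraph} (hH : IsCircuit (h.contract H)) :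
    ∃ p ∈ H.verts, φ p ≠ v := by
  obtain ⟨x, hx⟩ := hH.1.nonempty
  obtain ⟨_, hne, p, q, hpq, rfl, rfl⟩ := hH.exists_adj hx
  by_cases hp : φ p = v
  · exact ⟨q, H.edge_vert hpq.symm, fun hq => hne (hp.trans hq.symm)⟩
  · exact ⟨p, H.edge_vert hpq, hp⟩

open scoped Classical in
/-- The circuits among the images of the members of `C` in the contracted graph. Only circuits of
`G` lying inside the contracted fibre are lost. -/
noncomputable def contractCover (C : Multiset G.Subgraph) : Multiset K.Subgraph :=
  (C.map h.contract).filter IsCircuit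

theorem mem_contractCover {C : Multiset G.Subgraph} {K' : K.Subgraph} :
    K' ∈ h.contractCover C ↔ (∃ H ∈ C, h.contract H = K') ∧ IsCircuit K' := by
  simp only [contractCover, Multiset.mem_filter, Multiset.mem_map]

theorem contractCover_add (C D : Multiset G.Subgraph) :
    h.contractCover (C + D) = h.contractCover C + h.contractCover D := by
  simp only [contractCover, Multiset.map_add, Multiset.filter_add]

theorem contractCover_map {α : Type*} {N : Multiset α} {F : α → G.Subgraph} {F' : α → K.Subgraph}
    (heq : ∀ x ∈ N, h.contract (F x) = F' x) (hF' : ∀ x ∈ N, IsCircuit (F' x)) :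
    h.contractCover (N.map F) = N.map F' := by
  classical
  have hmap : (N.map F).map h.contract = N.map F' := by
    rw [Multiset.map_map]
    exact Multiset.map_congr rfl heq
  rw [contractCover, hmap, Multiset.filter_eq_self]
  exact Multiset.forall_mem_map_iff.2 hF'

end

variable {a b : Fin 3 → W} (h : IsContraction G K v φ a b) {H : G.Subgraph}
include h

theorem isCircuit_contract [Finite W] (hH : IsCircuit H) {p : W} (hp : p ∈ H.verts)
    (hpv : φ p ≠ v) : IsCircuit (h.contract H) := by
  refine ⟨h.connected_contract hH.1, ?_⟩
  rintro _ ⟨q, hq, rfl⟩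
  by_cases hqv : φ q = v
  · have heven := h.even_card_trace hH
    have hpos := (h.trace_nonempty hH.1 hp hpv hq hqv).card_pos
    have hle : (trace a b H).card ≤ 3 := Finset.card_le_univ _
    rw [hqv, h.ncard_neighborSet_vertex, h.trace_contract]
    interval_cases (trace a b H).card <;> simp_all [Nat.even_iff]
  · rw [h.ncard_neighborSet_contract hqv, hH.2 q hq]

open scoped Classical in
theorem countP_contractCover [Finite W] {C : Multiset G.Subgraph} (hC : ∀ H ∈ C, IsCircuit H)
    {p q : W} (hpq : G.Adj p q) (hne : φ p ≠ φ q) :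
    (h.contractCover C).countP (fun H => s(φ p, φ q) ∈ H.edgeSet) =
      C.countP (fun H => s(p, q) ∈ H.edgeSet) := by
  rw [contractCover, Multiset.countP_filter, Multiset.countP_map,
    ← Multiset.countP_eq_card_filter]
  refine Multiset.countP_congr rfl fun H hH => propext ?_
  simp only [Subgraph.mem_edgeSet, h.contract_adj_iff hpq hne, and_iff_left_iff_imp]
  intro hadj
  by_cases hp : φ p = v
  · exact h.isCircuit_contract (hC H hH) (H.edge_vert hadj.symm) fun hq => hne (hp.trans hq.symm)
  · exact h.isCircuit_contract (hC H hH) (H.edge_vert hadj) hp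

theorem isCiDC_contractCover [Finite W] {C : Multiset G.Subgraph} (hC : IsCiDC G C) :
    IsCiDC K (h.contractCover C) := by
  classical
  refine ⟨fun _ hK' => (h.mem_contractCover.1 hK').2, fun e => ?_⟩
  induction e using Sym2.ind with | _ x y
  intro hxy
  obtain ⟨p, q, hpq, rfl, rfl⟩ := h.exists_adj_lift hxy
  rw [h.countP_contractCover hC.1 hpq (K.ne_of_adj hxy), hC.2 _ hpq]

open scoped Classical in
theorem count_contract_contractCover [Finite W] (hH : IsCircuit H)
    (hv : v ∉ (h.contract H).verts) (C : Multiset G.Subgraph) :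
    (h.contractCover C).count (h.contract H) = C.count H := by
  obtain ⟨p, hp⟩ := hH.1.nonempty
  have hcirc := h.isCircuit_contract hH hp fun heq => hv (heq ▸ h.map_mem_verts_contract hp)
  rw [contractCover, Multiset.count_filter_of_pos hcirc, Multiset.count_map, Multiset.count,
    Multiset.countP_eq_card_filter]
  congr 1
  refine Multiset.filter_congr fun H' _ => ⟨fun heq => ?_, fun heq => heq ▸ rfl⟩
  rw [← h.comap_contract hv, heq, h.comap_contract (heq ▸ hv)]

theorem exists_eq_add_map {C : Multiset K.Subgraph} (hC : IsCiDC K C) :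
    ∃ (N : Multiset K.Subgraph) (X : Fin 3 → K.Subgraph), C = N + Finset.univ.val.map X ∧
      (∀ K' ∈ N, v ∉ K'.verts) ∧ ∀ j, trace (φ ∘ a) (φ ∘ b) (X j) = {j}ᶜ := by
  have hadj (i : Fin 3) : K.Adj ((φ ∘ a) i) ((φ ∘ b) i) :=
    h.map_adj (h.adj_cut i) (h.map_ne_map (h.adj_cut i) (h.map_fst_ne i))
  obtain ⟨X, hX, hCX⟩ := exists_eq_filter_add_map
    (fun K' hK' => h.even_card_trace_vertex (hC.1 K' hK')) (hC.countP_mem_trace hadj)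
  refine ⟨_, X, hCX, fun K' hK' => ?_, hX⟩
  obtain ⟨hmem, hempty⟩ := Multiset.mem_filter.1 hK'
  exact h.vertex_notMem_verts (hC.1 K' hmem) hempty

end IsContraction

end ContractCover

section CutContraction

variable {V₁ V₂ W ι : Type*} {G : SimpleGraph W} {G₁ : SimpleGraph V₁} {G₂ : SimpleGraph V₂}
  {v₁ : V₁} {v₂ : V₂} {f : W → V₁} {g : W → V₂}

/-- `G₁` and `G₂` are the two contractions of `G` along the edge cut formed by the `s(a i, b i)`:
in `G₁` the side containing the `b i` is contracted to `v₁`, in `G₂` the side containing the `a i`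
is contracted to `v₂`. -/
structure IsCutContraction (G : SimpleGraph W) (G₁ : SimpleGraph V₁) (G₂ : SimpleGraph V₂)
    (v₁ : V₁) (v₂ : V₂) (f : W → V₁) (g : W → V₂) (a b : ι → W) : Prop where
  left : IsContraction G G₁ v₁ f a b
  right : IsContraction G G₂ v₂ g b a
  eq_left_iff : ∀ {p}, f p = v₁ ↔ g p ≠ v₂

namespace IsCutContraction

section

variable {a b : ι → W} (c : IsCutContraction G G₁ G₂ v₁ v₂ f g a b) {H : G.Subgraph}
  {K₁ : G₁.Subgraph} {K₂ : G₂.Subgraph}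
include c

theorem eq_right_iff {p : W} : g p = v₂ ↔ f p ≠ v₁ := by
  rw [ne_eq, c.eq_left_iff, not_not]

theorem symm : IsCutContraction G G₂ G₁ v₂ v₁ g f b a :=
  ⟨c.right, c.left, c.eq_right_iff⟩

theorem map_left_ne_or_map_right_ne {p q : W} (hpq : G.Adj p q) : f p ≠ f q ∨ g p ≠ g q := by
  by_cases hp : f p = v₁
  · exact .inr (c.right.map_ne_map hpq (c.eq_left_iff.1 hp))
  · exact .inl (c.left.map_ne_map hpq hp)

theorem inf_comap_contract (H : G.Subgraph) :
    c.left.comap (c.left.contract H) ⊓ c.right.comap (c.right.contract H) = H := by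
  refine le_antisymm (And.intro ?_ ?_)
    (le_inf c.left.le_comap_contract c.right.le_comap_contract)
  · rintro p ⟨hp₁, hp₂⟩
    by_cases hp : f p = v₁
    · exact c.right.mem_verts_of_map_mem (c.eq_left_iff.1 hp) hp₂
    · exact c.left.mem_verts_of_map_mem hp hp₁
  · rintro p q ⟨⟨hpq, -, -, h₁⟩, ⟨-, -, -, h₂⟩⟩
    rcases c.map_left_ne_or_map_right_ne hpq with hne | hne
    · exact (c.left.contract_adj_iff hpq hne).1 (h₁ hne)
    · exact (c.right.contract_adj_iff hpq hne).1 (h₂ hne)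

theorem eq_of_contract_eq {H' : G.Subgraph} (h₁ : c.left.contract H = c.left.contract H')
    (h₂ : c.right.contract H = c.right.contract H') : H = H' := by
  rw [← c.inf_comap_contract H, h₁, h₂, c.inf_comap_contract]

theorem not_isCircuit_contract_comap (hv : v₂ ∉ K₂.verts) :
    ¬ IsCircuit (c.left.contract (c.right.comap K₂)) := by
  intro hcirc
  obtain ⟨p, hp, hpv⟩ := c.left.exists_map_ne_of_isCircuit_contract hcirc
  exact hv (c.eq_right_iff.2 hpv ▸ hp)

variable [Fintype ι]

theorem right_comap_adj_of_left_adj (hv : v₂ ∈ K₂.verts)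
    (htrace : trace (f ∘ a) (f ∘ b) K₁ = trace (g ∘ b) (g ∘ a) K₂) {p q : W} (hpq : G.Adj p q)
    (hp : f p ≠ v₁) (hK₁ : K₁.Adj (f p) (f q)) : (c.right.comap K₂).Adj p q := by
  have hgp := c.eq_right_iff.2 hp
  by_cases hq : f q = v₁
  · obtain ⟨i, rfl, rfl⟩ := c.left.cut_iff.1 ⟨hpq, hp, hq⟩
    have hi : i ∈ trace (f ∘ a) (f ∘ b) K₁ := mem_trace.2 hK₁
    rw [htrace] at hi
    have hK₂ : K₂.Adj (g (b i)) (g (a i)) := mem_trace.1 hi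
    exact ⟨hpq, K₂.edge_vert hK₂.symm, K₂.edge_vert hK₂, fun _ => hK₂.symm⟩
  · have hgq := c.eq_right_iff.2 hq
    exact ⟨hpq, hgp ▸ hv, hgq ▸ hv, fun hne => absurd (hgp.trans hgq.symm) hne⟩

theorem contract_inf_comap
    (htrace : trace (f ∘ a) (f ∘ b) K₁ = trace (g ∘ b) (g ∘ a) K₂)
    (hne : (trace (f ∘ a) (f ∘ b) K₁).Nonempty) :
    c.left.contract (c.left.comap K₁ ⊓ c.right.comap K₂) = K₁ := by
  obtain ⟨i, hi⟩ := hne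
  have hi₂ : i ∈ trace (g ∘ b) (g ∘ a) K₂ := htrace ▸ hi
  have hv₂ : v₂ ∈ K₂.verts := c.right.vertex_mem_verts hi₂
  have hbi₂ : K₂.Adj (g (b i)) (g (a i)) := mem_trace.1 hi₂
  have hadj {p q : W} (hpq : G.Adj p q) (hK₁ : K₁.Adj (f p) (f q)) :
      (c.right.comap K₂).Adj p q := by
    by_cases hp : f p = v₁
    · have hq : f q ≠ v₁ := fun hq => hK₁.adj_sub.ne (hp.trans hq.symm)
      exact (c.right_comap_adj_of_left_adj hv₂ htrace hpq.symm hq hK₁.symm).symm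
    · exact c.right_comap_adj_of_left_adj hv₂ htrace hpq hp hK₁
  refine Subgraph.ext ?_ ?_
  · refine Set.Subset.antisymm (Set.image_subset_iff.2 fun p hp => hp.1) fun x hx => ?_
    by_cases hxv : x = v₁
    · have hbi : f (b i) = x := (c.left.map_snd_eq i).trans hxv.symm
      exact ⟨b i, ⟨(hbi ▸ hx : f (b i) ∈ K₁.verts), K₂.edge_vert hbi₂⟩, hbi⟩
    · obtain ⟨p, rfl⟩ := c.left.exists_map_eq x hxv
      exact ⟨p, ⟨hx, (c.eq_right_iff.2 hxv ▸ hv₂ : g p ∈ K₂.verts)⟩, rfl⟩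
  · ext x y
    constructor
    · rintro ⟨hne, p, q, ⟨⟨-, -, -, hK₁⟩, -⟩, rfl, rfl⟩
      exact hK₁ hne
    · intro hxy
      obtain ⟨p, q, hpq, rfl, rfl⟩ := c.left.exists_adj_lift hxy.adj_sub
      exact ⟨hxy.adj_sub.ne, p, q, ⟨⟨hpq, K₁.edge_vert hxy, K₁.edge_vert hxy.symm, fun _ => hxy⟩,
        hadj hpq hxy⟩, rfl, rfl⟩

theorem connected_of_isCircuit_contract [Finite V₁] [Finite V₂]
    (h₁ : IsCircuit (c.left.contract H)) (h₂ : IsCircuit (c.right.contract H))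
    (hne : (trace a b H).Nonempty) : H.Connected := by
  obtain ⟨i, hi⟩ := hne
  have hadj : H.Adj (a i) (b i) := mem_trace.1 hi
  have hv₁ : v₁ ∈ (c.left.contract H).verts :=
    c.left.map_snd_eq i ▸ c.left.map_mem_verts_contract (H.edge_vert hadj.symm)
  have hv₂ : v₂ ∈ (c.right.contract H).verts :=
    c.right.map_snd_eq i ▸ c.right.map_mem_verts_contract (H.edge_vert hadj)
  refine connected_of_adj_of_cover
    (c.left.connected_comap_deleteVerts h₁ hv₁) (c.right.connected_comap_deleteVerts h₂ hv₂)
    c.left.comap_deleteVerts_le c.right.comap_deleteVerts_le (fun p hp => ?_)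
    (c.left.mem_verts_comap_deleteVerts.2 ⟨H.edge_vert hadj, c.left.map_fst_ne i⟩)
    (c.right.mem_verts_comap_deleteVerts.2 ⟨H.edge_vert hadj.symm, c.right.map_fst_ne i⟩) hadj
  by_cases hpv : f p = v₁
  · exact .inr (c.right.mem_verts_comap_deleteVerts.2 ⟨hp, c.eq_left_iff.1 hpv⟩)
  · exact .inl (c.left.mem_verts_comap_deleteVerts.2 ⟨hp, hpv⟩)

theorem isCircuit_of_isCircuit_contract [Finite V₁] [Finite V₂]
    (h₁ : IsCircuit (c.left.contract H)) (h₂ : IsCircuit (c.right.contract H))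
    (hne : (trace a b H).Nonempty) : IsCircuit H := by
  refine ⟨c.connected_of_isCircuit_contract h₁ h₂ hne, fun p hp => ?_⟩
  by_cases hpv : f p = v₁
  · rw [← c.right.ncard_neighborSet_contract (c.eq_left_iff.1 hpv),
      h₂.2 _ (c.right.map_mem_verts_contract hp)]
  · rw [← c.left.ncard_neighborSet_contract hpv, h₁.2 _ (c.left.map_mem_verts_contract hp)]

theorem vertex_notMem_of_trace_eq_empty (hH : H.Connected) (htrace : trace a b H = ∅) :
    v₁ ∉ (c.left.contract H).verts ∨ v₂ ∉ (c.right.contract H).verts := by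
  by_contra! hv
  obtain ⟨⟨q, hq, hqv⟩, ⟨p, hp, hpv⟩⟩ := hv
  have hne := c.left.trace_nonempty hH hp (c.eq_right_iff.1 hpv) hq hqv
  exact hne.ne_empty htrace

end

section

variable {a b : Fin 3 → W} (c : IsCutContraction G G₁ G₂ v₁ v₂ f g a b)
  {H : G.Subgraph} {C C' : Multiset G.Subgraph}

/-- The family of subgraphs of `G` obtained by lifting the members of `N₁` and `N₂`, which are
meant to avoid the contracted vertices, and by gluing each `X j` to `Y j` along the cut. -/
def glueCover (N₁ : Multiset G₁.Subgraph) (N₂ : Multiset G₂.Subgraph)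
    (X : Fin 3 → G₁.Subgraph) (Y : Fin 3 → G₂.Subgraph) : Multiset G.Subgraph :=
  N₁.map c.left.comap + N₂.map c.right.comap +
    Finset.univ.val.map fun j => c.left.comap (X j) ⊓ c.right.comap (Y j)

include c

variable {N₁ : Multiset G₁.Subgraph} {N₂ : Multiset G₂.Subgraph}
  {X : Fin 3 → G₁.Subgraph} {Y : Fin 3 → G₂.Subgraph}

theorem symm_glueCover : c.symm.glueCover N₂ N₁ Y X = c.glueCover N₁ N₂ X Y := by
  rw [glueCover, glueCover, add_comm (N₂.map _)]
  exact congrArg _ (Multiset.map_congr rfl fun _ _ => inf_comm _ _)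

theorem contract_glue (hX : ∀ j, trace (f ∘ a) (f ∘ b) (X j) = {j}ᶜ)
    (hY : ∀ j, trace (g ∘ b) (g ∘ a) (Y j) = {j}ᶜ) (j : Fin 3) :
    c.left.contract (c.left.comap (X j) ⊓ c.right.comap (Y j)) = X j :=
  c.contract_inf_comap ((hX j).trans (hY j).symm) (hX j ▸ compl_singleton_nonempty j)

theorem contractCover_glueCover (hC : ∀ K ∈ N₁ + Finset.univ.val.map X, IsCircuit K)
    (hN₁ : ∀ K ∈ N₁, v₁ ∉ K.verts) (hN₂ : ∀ K ∈ N₂, v₂ ∉ K.verts)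
    (hX : ∀ j, trace (f ∘ a) (f ∘ b) (X j) = {j}ᶜ)
    (hY : ∀ j, trace (g ∘ b) (g ∘ a) (Y j) = {j}ᶜ) :
    c.left.contractCover (c.glueCover N₁ N₂ X Y) = N₁ + Finset.univ.val.map X := by
  have hlift : c.left.contractCover (N₁.map c.left.comap) = N₁ := by
    rw [c.left.contractCover_map (F := c.left.comap) (F' := id)
      (fun K hK => c.left.contract_comap (hN₁ K hK))
      fun K hK => hC K (Multiset.mem_add.2 (.inl hK)), Multiset.map_id]
  have hlost : c.left.contractCover (N₂.map c.right.comap) = 0 := by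
    refine Multiset.eq_zero_of_forall_notMem fun K hK => ?_
    obtain ⟨⟨_, hmem, rfl⟩, hcirc⟩ := c.left.mem_contractCover.1 hK
    obtain ⟨K₂, hK₂, rfl⟩ := Multiset.mem_map.1 hmem
    exact c.not_isCircuit_contract_comap (hN₂ K₂ hK₂) hcirc
  have hglue := c.left.contractCover_map (N := Finset.univ.val)
    (fun j _ => c.contract_glue hX hY j) fun j hj =>
      hC (X j) (Multiset.mem_add.2 (.inr (Multiset.mem_map_of_mem X hj)))
  rw [glueCover, c.left.contractCover_add, c.left.contractCover_add, hlift, hlost, hglue, add_zero]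

variable [Finite W]

theorem isCircuit_glue (hX : ∀ j, trace (f ∘ a) (f ∘ b) (X j) = {j}ᶜ)
    (hY : ∀ j, trace (g ∘ b) (g ∘ a) (Y j) = {j}ᶜ) {j : Fin 3} (hXj : IsCircuit (X j))
    (hYj : IsCircuit (Y j)) : IsCircuit (c.left.comap (X j) ⊓ c.right.comap (Y j)) := by
  have := c.left.finite
  have := c.right.finite
  have h₁ := c.contract_glue hX hY j
  have h₂ := c.symm.contract_glue hY hX j
  rw [inf_comm] at h₂
  refine c.isCircuit_of_isCircuit_contract (h₁.symm ▸ hXj) (h₂.symm ▸ hYj) ?_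
  rw [← c.left.trace_contract, h₁, hX]
  exact compl_singleton_nonempty j

theorem isCircuit_of_mem_glueCover (hC₁ : ∀ K ∈ N₁ + Finset.univ.val.map X, IsCircuit K)
    (hC₂ : ∀ K ∈ N₂ + Finset.univ.val.map Y, IsCircuit K) (hN₁ : ∀ K ∈ N₁, v₁ ∉ K.verts)
    (hN₂ : ∀ K ∈ N₂, v₂ ∉ K.verts) (hX : ∀ j, trace (f ∘ a) (f ∘ b) (X j) = {j}ᶜ)
    (hY : ∀ j, trace (g ∘ b) (g ∘ a) (Y j) = {j}ᶜ) :
    ∀ H ∈ c.glueCover N₁ N₂ X Y, IsCircuit H := by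
  simp only [Multiset.mem_add, or_imp, forall_and, Multiset.forall_mem_map_iff] at hC₁ hC₂
  simp only [glueCover, Multiset.mem_add, or_imp, forall_and, Multiset.forall_mem_map_iff]
  refine ⟨⟨fun K hK => ?_, fun K hK => ?_⟩, fun j hj => ?_⟩
  · exact c.left.isCircuit_comap (hC₁.1 K hK) (hN₁ K hK)
  · exact c.right.isCircuit_comap (hC₂.1 K hK) (hN₂ K hK)
  · exact c.isCircuit_glue hX hY (hC₁.2 j hj) (hC₂.2 j hj)

theorem countP_trace_eq_compl_singleton (hC : IsCiDC G C) (j : Fin 3) :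
    C.countP (trace a b · = {j}ᶜ) = 1 :=
  countP_eq_compl_singleton (fun H hH => c.left.even_card_trace (hC.1 H hH))
    (hC.countP_mem_trace c.left.adj_cut) j

theorem mem_iff_contract_mem (hC : IsCiDC G C) (hH : IsCircuit H) {j : Fin 3}
    (htrace : trace a b H = {j}ᶜ) :
    H ∈ C ↔ c.left.contract H ∈ c.left.contractCover C ∧
      c.right.contract H ∈ c.right.contractCover C := by
  obtain ⟨i, hi⟩ : (trace a b H).Nonempty := htrace ▸ compl_singleton_nonempty j
  have hadj : H.Adj (a i) (b i) := mem_trace.1 hi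
  have h₁ := c.left.isCircuit_contract hH (H.edge_vert hadj) (c.left.map_fst_ne i)
  have h₂ := c.right.isCircuit_contract hH (H.edge_vert hadj.symm) (c.right.map_fst_ne i)
  simp only [IsContraction.mem_contractCover, h₁, h₂, and_true]
  refine ⟨fun hmem => ⟨⟨H, hmem, rfl⟩, ⟨H, hmem, rfl⟩⟩, ?_⟩
  rintro ⟨⟨H₁, hH₁, heq₁⟩, ⟨H₂, hH₂, heq₂⟩⟩
  have htrace₁ : trace a b H₁ = {j}ᶜ := by
    rw [← c.left.trace_contract, heq₁, c.left.trace_contract, htrace]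
  have htrace₂ : trace a b H₂ = {j}ᶜ := by
    rw [trace_comm, ← c.right.trace_contract, heq₂, c.right.trace_contract, trace_comm, htrace]
  obtain rfl := eq_of_countP_eq_one (c.countP_trace_eq_compl_singleton hC j)
    hH₁ htrace₁ hH₂ htrace₂
  rwa [← c.eq_of_contract_eq heq₁ heq₂]

theorem eq_of_contractCover_eq (hC : IsCiDC G C) (hC' : IsCiDC G C')
    (h₁ : c.left.contractCover C = c.left.contractCover C')
    (h₂ : c.right.contractCover C = c.right.contractCover C') : C = C' := by
  classical
  ext H
  by_cases hH : IsCircuit H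
  · rcases eq_empty_or_eq_compl_singleton_of_even_card (c.left.even_card_trace hH) with
      htrace | ⟨j, htrace⟩
    · rcases c.vertex_notMem_of_trace_eq_empty hH.1 htrace with hv | hv
      · rw [← c.left.count_contract_contractCover hH hv, h₁,
          c.left.count_contract_contractCover hH hv]
      · rw [← c.right.count_contract_contractCover hH hv, h₂,
          c.right.count_contract_contractCover hH hv]
    · have hmem : H ∈ C ↔ H ∈ C' := by
        rw [c.mem_iff_contract_mem hC hH htrace, h₁, h₂, c.mem_iff_contract_mem hC' hH htrace]
      rw [count_eq_ite_of_countP_eq_one (c.countP_trace_eq_compl_singleton hC j) htrace,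
        count_eq_ite_of_countP_eq_one (c.countP_trace_eq_compl_singleton hC' j) htrace]
      simp only [hmem]
  · rw [Multiset.count_eq_zero.2 fun hmem => hH (hC.1 H hmem),
      Multiset.count_eq_zero.2 fun hmem => hH (hC'.1 H hmem)]

theorem isCiDC_of_contractCover (hC : ∀ H ∈ C, IsCircuit H)
    (h₁ : IsCiDC G₁ (c.left.contractCover C)) (h₂ : IsCiDC G₂ (c.right.contractCover C)) :
    IsCiDC G C := by
  refine ⟨hC, fun e => ?_⟩
  induction e using Sym2.ind with | _ p q
  intro hpq
  rcases c.map_left_ne_or_map_right_ne hpq with hne | hne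
  · rw [← c.left.countP_contractCover hC hpq hne, h₁.2 _ (c.left.map_adj hpq hne)]
  · rw [← c.right.countP_contractCover hC hpq hne, h₂.2 _ (c.right.map_adj hpq hne)]

theorem exists_contractCover_eq {C₁ : Multiset G₁.Subgraph} {C₂ : Multiset G₂.Subgraph}
    (h₁ : IsCiDC G₁ C₁) (h₂ : IsCiDC G₂ C₂) :
    ∃ C, IsCiDC G C ∧ c.left.contractCover C = C₁ ∧ c.right.contractCover C = C₂ := by
  obtain ⟨N₁, X, rfl, hN₁, hX⟩ := c.left.exists_eq_add_map h₁
  obtain ⟨N₂, Y, rfl, hN₂, hY⟩ := c.right.exists_eq_add_map h₂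
  have hcover₁ := c.contractCover_glueCover h₁.1 hN₁ hN₂ hX hY
  have hcover₂ := c.symm.contractCover_glueCover h₂.1 hN₂ hN₁ hY hX
  rw [c.symm_glueCover] at hcover₂
  refine ⟨c.glueCover N₁ N₂ X Y, c.isCiDC_of_contractCover ?_ ?_ ?_, hcover₁, hcover₂⟩
  · exact c.isCircuit_of_mem_glueCover h₁.1 h₂.1 hN₁ hN₂ hX hY
  · exact hcover₁ ▸ h₁
  · exact hcover₂ ▸ h₂

theorem nu_eq_mul : nu G = nu G₁ * nu G₂ := by
  have himage : {C | IsCiDC G₁ C} ×ˢ {C | IsCiDC G₂ C} =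
      (fun C => (c.left.contractCover C, c.right.contractCover C)) '' {C | IsCiDC G C} := by
    ext ⟨C₁, C₂⟩
    constructor
    · rintro ⟨h₁, h₂⟩
      obtain ⟨C, hC, rfl, rfl⟩ := c.exists_contractCover_eq h₁ h₂
      exact ⟨C, hC, rfl⟩
    · rintro ⟨C, hC, heq⟩
      obtain ⟨rfl, rfl⟩ := Prod.mk.inj heq
      exact ⟨c.left.isCiDC_contractCover hC, c.right.isCiDC_contractCover hC⟩
  rw [nu, nu, nu, ← Set.ncard_prod, himage, Set.InjOn.ncard_image]
  intro C hC C' hC' heq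
  obtain ⟨h₁, h₂⟩ := Prod.mk.inj heq
  exact c.eq_of_contractCover_eq hC hC' h₁ h₂

end

end IsCutContraction

end CutContraction

section SumGraph

variable {V₁ V₂ ι : Type*} {G₁ : SimpleGraph V₁} {G₂ : SimpleGraph V₂} {v₁ : V₁} {v₂ : V₂}
  {G : SimpleGraph ({x : V₁ // x ≠ v₁} ⊕ {x : V₂ // x ≠ v₂})}
  {a : ι → {x : V₁ // x ≠ v₁}} {b : ι → {x : V₂ // x ≠ v₂}}

theorem isCutContraction_sum (ha : Function.Injective a) (hb : Function.Injective b)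
    (hv₁ : ∀ x, G₁.Adj x v₁ ↔ ∃ i, (a i : V₁) = x) (hv₂ : ∀ x, G₂.Adj x v₂ ↔ ∃ i, (b i : V₂) = x)
    (hll : ∀ u w, G.Adj (.inl u) (.inl w) ↔ G₁.Adj u w)
    (hrr : ∀ u w, G.Adj (.inr u) (.inr w) ↔ G₂.Adj u w)
    (hlr : ∀ u w, G.Adj (.inl u) (.inr w) ↔ ∃ i, a i = u ∧ b i = w) :
    IsCutContraction G G₁ G₂ v₁ v₂ (Sum.elim Subtype.val fun _ => v₁)
      (Sum.elim (fun _ => v₂) Subtype.val) (Sum.inl ∘ a) (Sum.inr ∘ b) where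
  left :=
    { eq_of_map_eq := by
        rintro (p | p) (q | q) hp hpq
        · exact congrArg _ (Subtype.ext hpq)
        · exact absurd hpq hp
        all_goals exact absurd rfl hp
      exists_map_eq := fun x hx => ⟨.inl ⟨x, hx⟩, rfl⟩
      adj_iff := by
        rintro (p | p) (q | q) hp hq
        · exact hll p q
        · exact absurd rfl hq
        all_goals exact absurd rfl hp
      cut_iff := by
        rintro (p | p) (q | q)
        · simp [q.2]
        · simp [hlr, p.2]
        all_goals simp
      adj_vertex_iff := hv₁ _
      injective := Sum.inl_injective.comp ha }
  right :=
    { eq_of_map_eq := by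
        rintro (p | p) (q | q) hp hpq
        · exact absurd rfl hp
        · exact absurd rfl hp
        · exact absurd hpq hp
        · exact congrArg _ (Subtype.ext hpq)
      exists_map_eq := fun x hx => ⟨.inr ⟨x, hx⟩, rfl⟩
      adj_iff := by
        rintro (p | p) (q | q) hp hq
        · exact absurd rfl hp
        · exact absurd rfl hp
        · exact absurd rfl hq
        · exact hrr p q
      cut_iff := by
        rintro (p | p) (q | q)
        · simp
        · simp
        · simp [G.adj_comm, hlr, p.2, and_comm]
        · simp [q.2]
      adj_vertex_iff := hv₂ _
      injective := Sum.inr_injective.comp hb }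
  eq_left_iff := by
    rintro (p | p)
    · simp [p.2]
    · simp [p.2]

end SumGraph

section NeighborTriple

variable {V : Type*} {G : SimpleGraph V} {v x y z : V}

theorem injective_vecThree (hxy : x ≠ y) (hxz : x ≠ z) (hyz : y ≠ z) :
    Function.Injective ![x, y, z] := by
  intro i j hij
  fin_cases i <;> fin_cases j <;> simp_all

theorem adj_iff_exists_vecThree (hv : G.neighborSet v = {x, y, z}) (u : V) :
    G.Adj u v ↔ ∃ i, ![x, y, z] i = u := by
  rw [G.adj_comm, ← mem_neighborSet, hv]
  simp [Fin.exists_fin_succ, eq_comm]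

end NeighborTriple

theorem stmt8_general {V₁ V₂ : Type*} [Finite V₁] [Finite V₂]
    (G₁ : SimpleGraph V₁) (G₂ : SimpleGraph V₂)
    (v₁ a₁ b₁ c₁ : V₁) (v₂ a₂ b₂ c₂ : V₂)
    (hab₁ : a₁ ≠ b₁) (hac₁ : a₁ ≠ c₁) (hbc₁ : b₁ ≠ c₁)
    (hab₂ : a₂ ≠ b₂) (hac₂ : a₂ ≠ c₂) (hbc₂ : b₂ ≠ c₂)
    (hn₁ : G₁.neighborSet v₁ = {a₁, b₁, c₁})
    (hn₂ : G₂.neighborSet v₂ = {a₂, b₂, c₂})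
    (G : SimpleGraph ({x : V₁ // x ≠ v₁} ⊕ {x : V₂ // x ≠ v₂}))
    (hG : ∀ p q : {x : V₁ // x ≠ v₁} ⊕ {x : V₂ // x ≠ v₂}, G.Adj p q ↔
      (∃ u w, p = Sum.inl u ∧ q = Sum.inl w ∧ G₁.Adj u.1 w.1) ∨
      (∃ u w, p = Sum.inr u ∧ q = Sum.inr w ∧ G₂.Adj u.1 w.1) ∨
      (∃ u w, p = Sum.inl u ∧ q = Sum.inr w ∧
        ((u.1 = a₁ ∧ w.1 = a₂) ∨ (u.1 = b₁ ∧ w.1 = b₂) ∨ (u.1 = c₁ ∧ w.1 = c₂))) ∨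
      (∃ u w, p = Sum.inr u ∧ q = Sum.inl w ∧
        ((w.1 = a₁ ∧ u.1 = a₂) ∨ (w.1 = b₁ ∧ u.1 = b₂) ∨ (w.1 = c₁ ∧ u.1 = c₂)))) :
    nu G = nu G₁ * nu G₂ := by
  have hv₁ := adj_iff_exists_vecThree hn₁
  have hv₂ := adj_iff_exists_vecThree hn₂
  let a (i : Fin 3) : {x // x ≠ v₁} := ⟨![a₁, b₁, c₁] i, ((hv₁ _).2 ⟨i, rfl⟩).ne⟩
  let b (i : Fin 3) : {x // x ≠ v₂} := ⟨![a₂, b₂, c₂] i, ((hv₂ _).2 ⟨i, rfl⟩).ne⟩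
  have ha : Function.Injective a := fun i j hij =>
    injective_vecThree hab₁ hac₁ hbc₁ (congrArg Subtype.val hij)
  have hb : Function.Injective b := fun i j hij =>
    injective_vecThree hab₂ hac₂ hbc₂ (congrArg Subtype.val hij)
  have hcross : ∀ u w, G.Adj (.inl u) (.inr w) ↔ ∃ i, a i = u ∧ b i = w := fun u w => by
    simp [hG, a, b, Fin.exists_fin_succ, Subtype.ext_iff, eq_comm, u.2.symm, w.2.symm]
  have hcut := isCutContraction_sum ha hb hv₁ hv₂ (by simp [hG]) (by simp [hG]) hcross
  exact hcut.nu_eq_mul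

/-- Gluing two cubic graphs across a 3-edge-cut: `G` is obtained from the disjoint union
of `G₁ − v₁` and `G₂ − v₂` (where `v₁` has neighbors `a₁, b₁, c₁` and `v₂` has neighbors
`a₂, b₂, c₂`) by adding the edges `a₁a₂`, `b₁b₂`, `c₁c₂`. Then `ν(G) = ν(G₁) · ν(G₂)`. -/
theorem stmt8 {V₁ V₂ : Type*} [Fintype V₁] [Fintype V₂]
    (G₁ : SimpleGraph V₁) (G₂ : SimpleGraph V₂)
    (h₁ : IsCubic G₁) (h₂ : IsCubic G₂)
    (v₁ a₁ b₁ c₁ : V₁) (v₂ a₂ b₂ c₂ : V₂)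
    (hab₁ : a₁ ≠ b₁) (hac₁ : a₁ ≠ c₁) (hbc₁ : b₁ ≠ c₁)
    (hab₂ : a₂ ≠ b₂) (hac₂ : a₂ ≠ c₂) (hbc₂ : b₂ ≠ c₂)
    (hn₁ : G₁.neighborSet v₁ = {a₁, b₁, c₁})
    (hn₂ : G₂.neighborSet v₂ = {a₂, b₂, c₂})
    (G : SimpleGraph ({x : V₁ // x ≠ v₁} ⊕ {x : V₂ // x ≠ v₂}))
    (hG : ∀ p q : {x : V₁ // x ≠ v₁} ⊕ {x : V₂ // x ≠ v₂}, G.Adj p q ↔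
      (∃ u w, p = Sum.inl u ∧ q = Sum.inl w ∧ G₁.Adj u.1 w.1) ∨
      (∃ u w, p = Sum.inr u ∧ q = Sum.inr w ∧ G₂.Adj u.1 w.1) ∨
      (∃ u w, p = Sum.inl u ∧ q = Sum.inr w ∧
        ((u.1 = a₁ ∧ w.1 = a₂) ∨ (u.1 = b₁ ∧ w.1 = b₂) ∨ (u.1 = c₁ ∧ w.1 = c₂))) ∨
      (∃ u w, p = Sum.inr u ∧ q = Sum.inl w ∧
        ((w.1 = a₁ ∧ u.1 = a₂) ∨ (w.1 = b₁ ∧ u.1 = b₂) ∨ (w.1 = c₁ ∧ u.1 = c₂)))) :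
    nu G = nu G₁ * nu G₂ :=
  stmt8_general G₁ G₂ v₁ a₁ b₁ c₁ v₂ a₂ b₂ c₂ hab₁ hac₁ hbc₁ hab₂ hac₂ hbc₂ hn₁ hn₂ G hG

end CiDC
end

section
/- Let G be a cubic simple graph, let v be a vertex of G with (pairwise distinct) neighbors a, b, c, and let G' be the graph obtained from G by deleting v, adding three new pairwise adjacent vertices va, vb, vc (forming a triangle), and adding the edges va a, vb b and vc c. Then ν(G') = 2 · ν(G). -/
namespace CiDC

open SimpleGraph

/-- Adjacency of the graph obtained by expanding the vertex `v` (with neighbors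
`a`, `b`, `c`) into a triangle on three new vertices. -/
def TriangleExpansionAdj {V : Type*} (G : SimpleGraph V) (v a b c : V) :
    ({x : V // x ≠ v} ⊕ Fin 3) → ({x : V // x ≠ v} ⊕ Fin 3) → Prop
  | Sum.inl u, Sum.inl w => G.Adj u.1 w.1
  | Sum.inr i, Sum.inr j => i ≠ j
  | Sum.inl u, Sum.inr i => (i = 0 ∧ u.1 = a) ∨ (i = 1 ∧ u.1 = b) ∨ (i = 2 ∧ u.1 = c)
  | Sum.inr i, Sum.inl u => (i = 0 ∧ u.1 = a) ∨ (i = 1 ∧ u.1 = b) ∨ (i = 2 ∧ u.1 = c)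

/-!
A circuit of the expanded graph other than the new triangle is a circuit `H` of `G` together with
the sides of the triangle that it uses. If `H` passes through `v`, those sides join the two spokes
of `H`, either along the short way (one side) or along the long way (two sides); otherwise there are
none. In a double cover of `G` exactly three circuits pass through `v`, one for each pair of spokes.
Counting how often each side and each spoke is covered in a double cover of the expanded graph
leaves two possibilities: all three circuits take the short way and the triangle itself is in the
cover once, or all three take the long way and the triangle is not in the cover. So every double
cover of `G` has exactly two lifts.
-/
/-! ### Routes around a triangle -/

section Triangle

open Finset

/-- The corners of a triangle that meet exactly one of the sides in `S`. Corners are indexed by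
`Fin 3`, and side `i` is the one opposite to corner `i`, so that the sides at corner `i` are
`i + 1` and `i + 2`. -/
def oddCorners (S : Finset (Fin 3)) : Finset (Fin 3) :=
  {i | ¬ (i + 1 ∈ S ↔ i + 2 ∈ S)}

/-- The sides of a path through a triangle that enters and leaves at the two corners in `P`: the
single side between them if `short`, and the two other sides otherwise. Without corners to join,
no sides are used. -/
def joiningSides (short : Bool) (P : Finset (Fin 3)) : Finset (Fin 3) :=
  if short then if P = ∅ then ∅ else Pᶜ else P

lemma eq_add_one_or_eq_add_two_of_ne {i j : Fin 3} (h : i ≠ j) : j = i + 1 ∨ j = i + 2 := by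
  revert i j; decide

lemma mem_oddCorners {S : Finset (Fin 3)} {i : Fin 3} :
    i ∈ oddCorners S ↔ ¬ (i + 1 ∈ S ↔ i + 2 ∈ S) := by
  simp [oddCorners]

lemma oddCorners_eq_empty_or_card_eq_two (S : Finset (Fin 3)) :
    oddCorners S = ∅ ∨ #(oddCorners S) = 2 := by
  revert S; decide

lemma oddCorners_eq_empty_iff {S : Finset (Fin 3)} : oddCorners S = ∅ ↔ S = ∅ ∨ S = univ := by
  revert S; decide

lemma oddCorners_joiningSides (short : Bool) {P : Finset (Fin 3)} (hP : P = ∅ ∨ #P = 2) :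
    oddCorners (joiningSides short P) = P := by
  revert short P; decide

lemma joiningSides_ne_univ (short : Bool) {P : Finset (Fin 3)} (hP : P = ∅ ∨ #P = 2) :
    joiningSides short P ≠ univ := by
  revert short P; decide

lemma mem_joiningSides_true {P : Finset (Fin 3)} {i : Fin 3} :
    i ∈ joiningSides true P ↔ i ∉ P ∧ P.Nonempty := by
  revert P i; decide

lemma eq_joiningSides_true {S : Finset (Fin 3)} (huniv : S ≠ univ) (hS : ∀ i, S ≠ {i}ᶜ) :
    S = joiningSides true (oddCorners S) := by
  revert S; decide

lemma eq_joiningSides_false {S : Finset (Fin 3)} (huniv : S ≠ univ) (hS : ∀ i, S ≠ {i}) :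
    S = joiningSides false (oddCorners S) := by
  revert S; decide

lemma countP_mem_eq_sum_count {α : Type*} [DecidableEq α] (M : Multiset α) (s : Finset α) :
    M.countP (· ∈ s) = ∑ t ∈ s, M.count t := by
  induction M using Multiset.induction with
  | empty => simp
  | cons a M ih => simp [Multiset.countP_cons, Multiset.count_cons, Finset.sum_add_distrib, ih]

lemma sum_countP_mem_eq_sum_map_card {α : Type*} [Fintype α] [DecidableEq α]
    (M : Multiset (Finset α)) : ∑ i, M.countP (i ∈ ·) = (M.map card).sum := by
  induction M using Multiset.induction with
  | empty => simp
  | cons P M ih => simp [Multiset.countP_cons, Finset.sum_add_distrib, ih, add_comm]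

lemma sum_map_card_eq_two_mul_countP_nonempty {α : Type*} {M : Multiset (Finset α)}
    (hM : ∀ P ∈ M, P = ∅ ∨ #P = 2) :
    (M.map card).sum = 2 * M.countP (·.Nonempty) := by
  induction M using Multiset.induction with
  | empty => simp
  | cons P M ih =>
    rw [Multiset.forall_mem_cons] at hM
    rw [Multiset.map_cons, Multiset.sum_cons, ih hM.2, Multiset.countP_cons]
    rcases hM.1 with rfl | hP
    · simp
    · have : P.Nonempty := card_pos.1 (by omega)
      rw [hP, if_pos this]
      ring

-- Three members of `M` are nonempty, because they share six incidences with the corners.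
lemma countP_mem_joiningSides {M : Multiset (Finset (Fin 3))} (hM : ∀ P ∈ M, P = ∅ ∨ #P = 2)
    (hcover : ∀ i, M.countP (i ∈ ·) = 2) (short : Bool) (i : Fin 3) :
    M.countP (i ∈ joiningSides short ·) = if short then 1 else 2 := by
  cases short
  · simpa [joiningSides] using hcover i
  have hnonempty : M.countP (·.Nonempty) = 3 := by
    have hincidences := sum_countP_mem_eq_sum_map_card M
    rw [sum_map_card_eq_two_mul_countP_nonempty hM] at hincidences
    simp only [hcover, sum_const, card_univ, Fintype.card_fin, smul_eq_mul] at hincidences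
    omega
  have hsplit := M.filter (·.Nonempty) |>.card_eq_countP_add_countP (i ∈ ·)
  rw [← Multiset.countP_eq_card_filter, hnonempty, Multiset.countP_filter,
    Multiset.countP_filter] at hsplit
  have hmem : M.countP (fun P => i ∈ P ∧ P.Nonempty) = 2 := by
    rw [← hcover i]
    exact Multiset.countP_congr rfl fun P _ => propext ⟨And.left, fun h => ⟨h, i, h⟩⟩
  have hjoin : M.countP (i ∈ joiningSides true ·) = M.countP (fun P => i ∉ P ∧ P.Nonempty) :=
    Multiset.countP_congr rfl fun P _ => propext mem_joiningSides_true
  rw [hjoin, if_pos rfl]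
  omega

lemma countP_mem_eq (M : Multiset (Finset (Fin 3))) (i : Fin 3) :
    M.countP (i ∈ ·) =
      M.count univ + M.count {i} + M.count {i + 1}ᶜ + M.count {i + 2}ᶜ := by
  have hfilter : ∀ P, i ∈ P ↔ P ∈ ({univ, {i}, {i + 1}ᶜ, {i + 2}ᶜ} : Finset (Finset (Fin 3))) := by
    revert i; decide
  simp only [hfilter, countP_mem_eq_sum_count]
  fin_cases i <;> simp +decide [add_assoc]

lemma countP_mem_oddCorners_eq (M : Multiset (Finset (Fin 3))) (i : Fin 3) :
    M.countP (i ∈ oddCorners ·) =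
      M.count {i + 1} + M.count {i + 2} + M.count {i + 1}ᶜ + M.count {i + 2}ᶜ := by
  have hfilter : ∀ S, i ∈ oddCorners S ↔
      S ∈ ({{i + 1}, {i + 2}, {i + 1}ᶜ, {i + 2}ᶜ} : Finset (Finset (Fin 3))) := by
    revert i; decide
  simp only [hfilter, countP_mem_eq_sum_count]
  fin_cases i <;> simp +decide [add_assoc]

-- Comparing the two counts at each index shows that every single side occurs as often in `M` as the
-- full triangle, hence at most once; if it does occur, it leaves no room for a pair of sides.
lemma exists_eq_joiningSides {M : Multiset (Finset (Fin 3))} (hside : ∀ i, M.countP (i ∈ ·) = 2)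
    (hcorner : ∀ i, M.countP (i ∈ oddCorners ·) = 2) :
    ∃ short, M.count univ = (if short then 1 else 0) ∧
      ∀ S ∈ M, S ≠ univ → S = joiningSides short (oddCorners S) := by
  simp only [countP_mem_eq] at hside
  simp only [countP_mem_oddCorners_eq] at hcorner
  have hsingle : ∀ i, M.count {i} = M.count univ := by
    have hbalance : ∀ i : Fin 3, M.count univ + M.count {i} =
        M.count {i + 1} + M.count {i + 2} := fun i => by
      have := hside i
      have := hcorner i
      omega
    have h0 : _ = M.count {1} + M.count {2} := hbalance 0
    have h1 : _ = M.count {2} + M.count {0} := hbalance 1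
    have h2 : _ = M.count {0} + M.count {1} := hbalance 2
    intro i
    match i with | 0 | 1 | 2 => omega
  have huniv : M.count univ = 0 ∨ M.count univ = 1 := by
    have := hside 0
    have := hsingle 0
    omega
  rcases huniv with h | h
  · refine ⟨false, h, fun S hS hne => eq_joiningSides_false hne ?_⟩
    rintro i rfl
    exact Multiset.count_ne_zero.2 hS ((hsingle i).trans h)
  · refine ⟨true, h, fun S hS hne => eq_joiningSides_true hne ?_⟩
    rintro i rfl
    have hi := hside (i - 1)
    rw [hsingle, h, sub_add_cancel] at hi
    exact Multiset.count_ne_zero.2 hS (by omega)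

end Triangle

/-! ### Circuits and reachability -/

section Circuit

variable {V W : Type*} {G : SimpleGraph V}

lemma ncard_eq_two_iff_of_subset {α : Type*} {x y z : α} (hxy : x ≠ y) (hxz : x ≠ z)
    (hyz : y ≠ z) {S : Set α} (hS : S ⊆ {x, y, z}) :
    S.ncard = 2 ↔ S.Nonempty ∧ (x ∈ S ↔ ¬ (y ∈ S ↔ z ∈ S)) := by
  classical
  have hfilter : S = ↑(({x, y, z} : Finset α).filter (· ∈ S)) := by
    ext w
    simpa using fun hw => by simpa using hS hw
  have hnonempty : S.Nonempty ↔ x ∈ S ∨ y ∈ S ∨ z ∈ S := by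
    refine ⟨fun ⟨w, hw⟩ => ?_, by rintro (h | h | h) <;> exact ⟨_, h⟩⟩
    rcases hS hw with rfl | rfl | rfl <;> simp [hw]
  rw [hnonempty]
  conv_lhs => rw [hfilter, Set.ncard_coe_finset]
  by_cases hx : x ∈ S <;> by_cases hy : y ∈ S <;> by_cases hz : z ∈ S <;>
    simp [Finset.filter_insert, Finset.filter_singleton, hx, hy, hz, hxy, hxz, hyz]

lemma reachable_of_forall_adj_reachable {G' : SimpleGraph W} {f : V → W}
    (hf : ∀ x y, G.Adj x y → G'.Reachable (f x) (f y)) {x y : V} (h : G.Reachable x y) :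
    G'.Reachable (f x) (f y) := by
  simp only [reachable_iff_reflTransGen] at hf h ⊢
  exact Relation.ReflTransGen.lift' f hf _ _ h

lemma eq_of_reachable_of_forall_not_adj {x y : V} (h : G.Reachable x y)
    (hx : ∀ z, ¬ G.Adj x z) : y = x := by
  rw [reachable_iff_reflTransGen] at h
  rcases h.cases_head with rfl | ⟨z, hz, -⟩
  · rfl
  · exact absurd hz (hx z)

lemma reachable_spanningCoe_of_adj {H : G.Subgraph} {x y : V} (h : H.Adj x y) :
    H.spanningCoe.Reachable x y :=
  SimpleGraph.Adj.reachable h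

lemma connected_iff_nonempty_and_reachable_spanningCoe {H : G.Subgraph} :
    H.Connected ↔ H.verts.Nonempty ∧
      ∀ x ∈ H.verts, ∀ y ∈ H.verts, H.spanningCoe.Reachable x y := by
  rw [Subgraph.connected_iff, Subgraph.preconnected_iff, and_comm]
  refine and_congr_right fun _ => ⟨fun h x hx y hy => ?_, fun h ⟨x, hx⟩ ⟨y, hy⟩ => ?_⟩
  · exact reachable_of_forall_adj_reachable (f := Subtype.val)
      (fun _ _ hadj => reachable_spanningCoe_of_adj hadj) (h ⟨x, hx⟩ ⟨y, hy⟩)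
  · have hxy := h x hx y hy
    rw [reachable_iff_reflTransGen] at hxy ⊢
    induction hxy with
    | refl => exact .refl
    | tail _ hadj ih => exact (ih (H.edge_vert hadj)).tail hadj

lemma eq_of_forall_adj_iff {H K : G.Subgraph} (hH : H.verts = H.support)
    (hK : K.verts = K.support) (h : ∀ x y, H.Adj x y ↔ K.Adj x y) : H = K := by
  have hadj : H.Adj = K.Adj := funext₂ fun x y => propext (h x y)
  refine Subgraph.ext ?_ hadj
  rw [hH, hK, Subgraph.support, Subgraph.support, hadj]

lemma IsCircuit.verts_eq_support {H : G.Subgraph} (hH : IsCircuit H) : H.verts = H.support :=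
  H.support_subset_verts.antisymm' fun x hx =>
    Set.nonempty_of_ncard_ne_zero (s := H.neighborSet x) (by rw [hH.2 x hx]; decide)

lemma isCircuit_iff {H : G.Subgraph} :
    IsCircuit H ↔ H.verts = H.support ∧ H.support.Nonempty ∧
      (∀ x ∈ H.support, (H.neighborSet x).ncard = 2) ∧
      ∀ x ∈ H.support, ∀ y ∈ H.support, H.spanningCoe.Reachable x y := by
  refine ⟨fun h => ⟨h.verts_eq_support, ?_⟩, fun ⟨hverts, h⟩ => ?_⟩
  · rw [← h.verts_eq_support, and_left_comm, ← connected_iff_nonempty_and_reachable_spanningCoe]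
    exact h.symm
  · rwa [← hverts, and_left_comm, ← connected_iff_nonempty_and_reachable_spanningCoe,
      and_comm] at h

open scoped Classical in
lemma isCiDC_iff {C : Multiset G.Subgraph} :
    IsCiDC G C ↔ (∀ H ∈ C, IsCircuit H) ∧
      ∀ x y, G.Adj x y → C.countP (fun H => H.Adj x y) = 2 := by
  simp only [IsCiDC, Sym2.forall, mem_edgeSet, Subgraph.mem_edgeSet]

end Circuit

/-! ### Subgraphs of the triangle expansion -/

section Expansion

variable {V : Type*} {G : SimpleGraph V} {v : V}

/-- The vertices of a triangle expansion at `v`, mapped to the vertices of the original graph by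
collapsing the corners `Sum.inr i` of the triangle to `v`. -/
def proj : {x : V // x ≠ v} ⊕ Fin 3 → V :=
  Sum.elim Subtype.val fun _ => v

variable (n : Fin 3 ≃ G.neighborSet v)

/-- The graph obtained by expanding `v` into a triangle, for an enumeration `n` of the neighbours
of `v`: corner `Sum.inr i` of the triangle is joined to `n i`. -/
def triangleExpansion : SimpleGraph ({x : V // x ≠ v} ⊕ Fin 3) where
  Adj
    | .inl x, .inl y => G.Adj x y
    | .inl x, .inr i => x.1 = n i
    | .inr i, .inl x => x.1 = n i
    | .inr i, .inr j => i ≠ j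
  symm := by
    constructor
    rintro (x | i) (y | j) h
    exacts [h.symm, h, h, h.symm]
  loopless := by
    constructor
    rintro (x | i) h
    exacts [G.irrefl h, h rfl]

/-- The end outside of the triangle of the spoke at corner `i`. -/
def spokeEnd (i : Fin 3) : {x : V // x ≠ v} ⊕ Fin 3 :=
  .inl ⟨n i, (n i).2.ne'⟩

lemma proj_spokeEnd (i : Fin 3) : proj (spokeEnd n i) = n i :=
  rfl

lemma adj_spokeEnd (i : Fin 3) : (triangleExpansion n).Adj (.inr i) (spokeEnd n i) :=
  rfl

variable {n} {p q p' q' : {x : V // x ≠ v} ⊕ Fin 3} {i j : Fin 3}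

lemma proj_eq_iff : proj p = v ↔ ∃ i, p = .inr i := by
  rcases p with x | i
  · simpa [proj] using x.2
  · simp [proj]

lemma eq_of_proj_eq (h : proj p = proj q) (hp : proj p ≠ v) : p = q := by
  rcases p with x | i <;> rcases q with y | j
  · exact congrArg Sum.inl (Subtype.ext h)
  all_goals simp_all [proj]

lemma exists_eq_inr_of_proj_eq (hadj : (triangleExpansion n).Adj p q) (h : proj p = proj q) :
    ∃ i j, p = .inr i ∧ q = .inr j := by
  have hp : proj p = v := by_contra fun hp => hadj.ne (eq_of_proj_eq h hp)
  obtain ⟨i, rfl⟩ := proj_eq_iff.1 hp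
  obtain ⟨j, rfl⟩ := proj_eq_iff.1 (h ▸ hp)
  exact ⟨i, j, rfl, rfl⟩

lemma spokeEnd_injective : Function.Injective (spokeEnd n) := fun _ _ h =>
  n.injective (Subtype.ext (congrArg proj h))

lemma eq_spokeEnd (hadj : (triangleExpansion n).Adj (.inr i) q) (hq : proj q ≠ v) :
    q = spokeEnd n i := by
  rcases q with x | j
  · exact congrArg Sum.inl (Subtype.ext hadj)
  · exact absurd rfl hq

lemma adj_proj (hadj : (triangleExpansion n).Adj p q) (hne : proj p ≠ proj q) :
    G.Adj (proj p) (proj q) := by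
  rcases p with x | i <;> rcases q with y | j
  · exact hadj
  · rw [eq_spokeEnd hadj.symm x.2]
    exact (n j).2.symm
  · rw [eq_spokeEnd hadj y.2]
    exact (n i).2
  · exact absurd rfl hne

lemma exists_adj_proj_eq (n : Fin 3 ≃ G.neighborSet v) {x y : V} (h : G.Adj x y) :
    ∃ p q, (triangleExpansion n).Adj p q ∧ proj p = x ∧ proj q = y := by
  have hv : ∀ {y}, G.Adj v y → ∃ p q, (triangleExpansion n).Adj p q ∧ proj p = v ∧ proj q = y :=
    fun {y} hy => ⟨.inr (n.symm ⟨y, hy⟩), _, adj_spokeEnd n _, rfl, by simp [proj_spokeEnd]⟩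
  by_cases hx : x = v
  · subst hx
    exact hv h
  by_cases hy : y = v
  · subst hy
    obtain ⟨p, q, hadj, hp, hq⟩ := hv h.symm
    exact ⟨q, p, hadj.symm, hq, hp⟩
  · exact ⟨.inl ⟨x, hx⟩, .inl ⟨y, hy⟩, h, rfl, rfl⟩

lemma eq_of_proj_eq_of_adj (hadj : (triangleExpansion n).Adj p q)
    (hadj' : (triangleExpansion n).Adj p' q') (hp : proj p = proj p') (hq : proj q = proj q')
    (hne : proj p ≠ proj q) : p = p' ∧ q = q' := by
  wlog hqv : proj q ≠ v generalizing p q p' q'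
  · exact (this hadj.symm hadj'.symm hq hp hne.symm (hne.trans_eq (not_ne_iff.1 hqv))).symm
  obtain rfl := eq_of_proj_eq hq hqv
  refine ⟨?_, rfl⟩
  by_cases hpv : proj p = v
  · obtain ⟨i, rfl⟩ := proj_eq_iff.1 hpv
    obtain ⟨j, rfl⟩ := proj_eq_iff.1 (hp ▸ hpv)
    rw [spokeEnd_injective ((eq_spokeEnd hadj hqv).symm.trans (eq_spokeEnd hadj' hqv))]
  · exact eq_of_proj_eq hp hpv

variable {H : G.Subgraph} {K : (triangleExpansion n).Subgraph} {S : Finset (Fin 3)}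

/-- The image of a subgraph of the triangle expansion under contraction of the triangle, without
isolated vertices. -/
def contract (K : (triangleExpansion n).Subgraph) : G.Subgraph where
  verts := {x | ∃ y, x ≠ y ∧ Relation.Map K.Adj proj proj x y}
  Adj x y := x ≠ y ∧ Relation.Map K.Adj proj proj x y
  adj_sub := by
    rintro _ _ ⟨hne, p, q, hpq, rfl, rfl⟩
    exact adj_proj hpq.adj_sub hne
  edge_vert := fun h => ⟨_, h⟩
  symm := ⟨fun _ _ ⟨hne, p, q, hpq, hp, hq⟩ => ⟨hne.symm, q, p, hpq.symm, hq, hp⟩⟩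

open scoped Classical in
/-- The sides of the triangle in a subgraph of the triangle expansion, where side `k` is opposite
to corner `k`. -/
noncomputable def sides (K : (triangleExpansion n).Subgraph) : Finset (Fin 3) :=
  {k | K.Adj (.inr (k + 1)) (.inr (k + 2))}

open scoped Classical in
variable (n) in
/-- The edges at `v` in a subgraph of `G`, as a set of indices in the enumeration `n` of the
neighbours of `v`. They become the spokes of the triangle in the expansion. -/
noncomputable def spokes (H : G.Subgraph) : Finset (Fin 3) :=
  {i | H.Adj v (n i)}

variable (n) in
/-- The subgraph of the triangle expansion with contraction `H` and with the sides `S` of the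
triangle, without isolated vertices. The side between two corners `i ≠ j` is `-(i + j)`, because
the three indices add up to `0`. -/
def expand (H : G.Subgraph) (S : Finset (Fin 3)) : (triangleExpansion n).Subgraph where
  verts := {p | ∃ q, (triangleExpansion n).Adj p q ∧
    (H.Adj (proj p) (proj q) ∨ ∃ i j, p = .inr i ∧ q = .inr j ∧ -(i + j) ∈ S)}
  Adj p q := (triangleExpansion n).Adj p q ∧
    (H.Adj (proj p) (proj q) ∨ ∃ i j, p = .inr i ∧ q = .inr j ∧ -(i + j) ∈ S)
  adj_sub := And.left
  edge_vert := fun h => ⟨_, h⟩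
  symm := by
    refine ⟨fun p q ⟨hadj, h⟩ => ⟨hadj.symm, h.imp Subgraph.Adj.symm ?_⟩⟩
    rintro ⟨i, j, rfl, rfl, hS⟩
    exact ⟨j, i, rfl, rfl, add_comm i j ▸ hS⟩

lemma contract_verts : (contract K).verts = (contract K).support :=
  rfl

lemma expand_verts : (expand n H S).verts = (expand n H S).support :=
  rfl

lemma contract_adj_proj (hadj : (triangleExpansion n).Adj p q) (hne : proj p ≠ proj q) :
    (contract K).Adj (proj p) (proj q) ↔ K.Adj p q := by
  refine ⟨fun ⟨_, p', q', hK, hp, hq⟩ => ?_, fun hK => ⟨hne, p, q, hK, rfl, rfl⟩⟩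
  obtain ⟨rfl, rfl⟩ := eq_of_proj_eq_of_adj hadj hK.adj_sub hp.symm hq.symm hne
  exact hK

lemma expand_adj_of_proj_ne (hadj : (triangleExpansion n).Adj p q) (hne : proj p ≠ proj q) :
    (expand n H S).Adj p q ↔ H.Adj (proj p) (proj q) := by
  refine ⟨?_, fun h => ⟨hadj, .inl h⟩⟩
  rintro ⟨_, h | ⟨i, j, rfl, rfl, _⟩⟩
  · exact h
  · exact absurd rfl hne

lemma expand_adj_inr_inr (hij : i ≠ j) :
    (expand n H S).Adj (.inr i) (.inr j) ↔ -(i + j) ∈ S := by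
  refine ⟨?_, fun h => ⟨hij, .inr ⟨i, j, rfl, rfl, h⟩⟩⟩
  rintro ⟨_, h | ⟨_, _, ⟨⟩, ⟨⟩, hS⟩⟩
  · exact absurd rfl h.ne
  · exact hS

lemma mem_sides {k : Fin 3} : k ∈ sides K ↔ K.Adj (.inr (k + 1)) (.inr (k + 2)) := by
  simp [sides]

lemma mem_spokes : i ∈ spokes n H ↔ H.Adj v (n i) := by
  simp [spokes]

lemma adj_inr_inr_iff (hij : i ≠ j) : K.Adj (.inr i) (.inr j) ↔ -(i + j) ∈ sides K := by
  rw [mem_sides]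
  have hsides : (i = -(i + j) + 1 ∧ j = -(i + j) + 2) ∨ (i = -(i + j) + 2 ∧ j = -(i + j) + 1) := by
    revert i j; decide
  rcases hsides with ⟨hi, hj⟩ | ⟨hi, hj⟩
  · rw [← hi, ← hj]
  · rw [← hi, ← hj, K.adj_comm]

lemma sides_expand : sides (expand n H S) = S := by
  ext k
  rw [mem_sides, expand_adj_inr_inr (by decide +revert),
    show -(k + 1 + (k + 2)) = k by decide +revert]

lemma contract_expand (hH : H.verts = H.support) : contract (expand n H S) = H := by
  refine eq_of_forall_adj_iff contract_verts hH fun x y => ?_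
  by_cases hxy : G.Adj x y
  · obtain ⟨p, q, hadj, rfl, rfl⟩ := exists_adj_proj_eq n hxy
    rw [contract_adj_proj hadj hxy.ne, expand_adj_of_proj_ne hadj hxy.ne]
  · exact iff_of_false (fun h => hxy h.adj_sub) fun h => hxy h.adj_sub

lemma expand_contract (hK : K.verts = K.support) : expand n (contract K) (sides K) = K := by
  refine eq_of_forall_adj_iff expand_verts hK fun p q => ?_
  by_cases hadj : (triangleExpansion n).Adj p q
  · by_cases hpq : proj p = proj q
    · obtain ⟨i, j, rfl, rfl⟩ := exists_eq_inr_of_proj_eq hadj hpq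
      rw [expand_adj_inr_inr hadj, adj_inr_inr_iff hadj]
    · rw [expand_adj_of_proj_ne hadj hpq, contract_adj_proj hadj hpq]
  · exact iff_of_false (fun h => hadj h.adj_sub) fun h => hadj h.adj_sub

lemma mem_spokes_contract : i ∈ spokes n (contract K) ↔ K.Adj (.inr i) (spokeEnd n i) := by
  rw [mem_spokes, ← contract_adj_proj (adj_spokeEnd n i) (n i).2.ne]
  rfl

/-! ### Contraction of circuits -/

variable (n) in
/-- The triangle that replaces `v`, as a subgraph of the triangle expansion. -/
def triangle : (triangleExpansion n).Subgraph :=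
  expand n ⊥ Finset.univ

lemma sides_triangle : sides (triangle n) = Finset.univ :=
  sides_expand

lemma contract_triangle : contract (triangle n) = ⊥ :=
  contract_expand (Set.ext fun _ => ⟨False.elim, fun ⟨_, h⟩ => h⟩)

lemma neighborSet_inr_subset :
    K.neighborSet (.inr i) ⊆ {spokeEnd n i, .inr (i + 1), .inr (i + 2)} := by
  intro q hq
  by_cases hqv : proj q = v
  · obtain ⟨j, rfl⟩ := proj_eq_iff.1 hqv
    rcases eq_add_one_or_eq_add_two_of_ne hq.adj_sub with rfl | rfl <;> simp
  · exact .inl (eq_spokeEnd hq.adj_sub hqv)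

lemma adj_inr_inr_add_one : K.Adj (.inr i) (.inr (i + 1)) ↔ i + 2 ∈ sides K := by
  rw [mem_sides, add_assoc, add_assoc]
  simp

lemma adj_inr_inr_add_two : K.Adj (.inr i) (.inr (i + 2)) ↔ i + 1 ∈ sides K := by
  rw [mem_sides, add_assoc, add_assoc, K.adj_comm]
  simp

lemma ncard_neighborSet_inr_eq_two_iff : (K.neighborSet (.inr i)).ncard = 2 ↔
    .inr i ∈ K.support ∧ (i ∈ spokes n (contract K) ↔ i ∈ oddCorners (sides K)) := by
  rw [ncard_eq_two_iff_of_subset _ _ _ neighborSet_inr_subset]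
  · simp only [Subgraph.mem_neighborSet, adj_inr_inr_add_one, adj_inr_inr_add_two,
      ← mem_spokes_contract, mem_oddCorners, iff_comm (a := i + 2 ∈ sides K)]
    rfl
  · exact Sum.inl_ne_inr
  · exact Sum.inl_ne_inr
  · simp

lemma ncard_neighborSet_contract (x : {x : V // x ≠ v}) :
    ((contract K).neighborSet x).ncard = (K.neighborSet (.inl x)).ncard := by
  have hne : ∀ {q}, K.Adj (.inl x) q → proj (.inl x) ≠ proj q := fun hq h =>
    hq.adj_sub.ne (eq_of_proj_eq h x.2)
  have himage : (contract K).neighborSet x = proj '' K.neighborSet (.inl x) := by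
    ext y
    refine ⟨fun ⟨_, p, q, hpq, hp, hq⟩ => ⟨q, ?_, hq⟩, fun ⟨q, hq, hy⟩ =>
      ⟨(hne hq).trans_eq hy, .inl x, q, hq, rfl, hy⟩⟩
    rwa [eq_of_proj_eq (q := .inl x) hp (hp.trans_ne x.2)] at hpq
  rw [himage, Set.InjOn.ncard_image]
  intro q hq q' hq' h
  exact (eq_of_proj_eq_of_adj hq.adj_sub hq'.adj_sub rfl h (hne hq)).2

lemma spokes_eq_empty_iff : spokes n H = ∅ ↔ v ∉ H.support := by
  rw [← not_iff_not, not_not, ← Ne, ← Finset.nonempty_iff_ne_empty]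
  constructor
  · rintro ⟨i, hi⟩
    exact ⟨n i, mem_spokes.1 hi⟩
  · rintro ⟨x, hx : H.Adj v x⟩
    exact ⟨n.symm ⟨x, hx.adj_sub⟩, by simpa [mem_spokes] using hx⟩

lemma ncard_neighborSet_eq_card_spokes (n : Fin 3 ≃ G.neighborSet v) (H : G.Subgraph) :
    (H.neighborSet v).ncard = (spokes n H).card := by
  have himage : H.neighborSet v = (Subtype.val ∘ n) '' spokes n H := by
    ext x
    refine ⟨fun hx => ⟨n.symm ⟨x, hx.adj_sub⟩, by simpa [mem_spokes] using hx, by simp⟩, ?_⟩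
    rintro ⟨i, hi, rfl⟩
    exact mem_spokes.1 hi
  rw [himage, Set.ncard_image_of_injective _ (Subtype.val_injective.comp n.injective),
    Set.ncard_coe_finset]

lemma IsCircuit.spokes_eq_empty_or_card_eq_two (hH : IsCircuit H) :
    spokes n H = ∅ ∨ (spokes n H).card = 2 := by
  rw [← Finset.card_eq_zero, ← ncard_neighborSet_eq_card_spokes]
  by_cases hv : v ∈ H.verts
  · exact .inr (hH.2 v hv)
  · have hempty : H.neighborSet v = ∅ :=
      Set.eq_empty_of_forall_notMem fun x hx => hv (H.edge_vert hx)
    rw [hempty, Set.ncard_empty]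
    exact .inl rfl

lemma IsCircuit.spokes_contract (hK : IsCircuit K) :
    spokes n (contract K) = oddCorners (sides K) := by
  ext i
  by_cases hi : .inr i ∈ K.verts
  · exact (ncard_neighborSet_inr_eq_two_iff.1 (hK.2 _ hi)).2
  · have hadj : ∀ q, ¬ K.Adj (.inr i) q := fun q hq => hi (K.edge_vert hq)
    simp only [mem_spokes_contract, mem_oddCorners, ← adj_inr_inr_add_one,
      ← adj_inr_inr_add_two, hadj, not_true_eq_false]

lemma add_one_or_add_two_mem_sides (hK : spokes n (contract K) = oddCorners (sides K))
    (hi : .inr i ∈ K.support) : i + 1 ∈ sides K ∨ i + 2 ∈ sides K := by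
  obtain ⟨q, hq⟩ := hi
  rcases neighborSet_inr_subset hq with rfl | rfl | rfl
  · have hodd := mem_oddCorners.1 (hK ▸ mem_spokes_contract.2 hq)
    tauto
  · exact .inr (adj_inr_inr_add_one.1 hq)
  · exact .inl (adj_inr_inr_add_two.1 hq)

lemma reachable_inr_inr (hK : spokes n (contract K) = oddCorners (sides K))
    (hi : .inr i ∈ K.support) (hj : .inr j ∈ K.support) :
    K.spanningCoe.Reachable (.inr i) (.inr j) := by
  wlog hij : j = i ∨ j = i + 1 generalizing i j
  · obtain ⟨hji, hji'⟩ := not_or.1 hij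
    refine (this hj hi (.inr ?_)).symm
    obtain rfl := (eq_add_one_or_eq_add_two_of_ne (Ne.symm hji)).resolve_left hji'
    simp [add_assoc]
  rcases hij with rfl | rfl
  · rfl
  by_cases hside : i + 2 ∈ sides K
  · exact reachable_spanningCoe_of_adj (adj_inr_inr_add_one.2 hside)
  · have hi' := (add_one_or_add_two_mem_sides hK hi).resolve_right hside
    have hj' := (add_one_or_add_two_mem_sides hK hj).resolve_left (by rwa [add_assoc])
    have hthird := adj_inr_inr_add_one.2 hj'
    rw [add_assoc] at hthird
    exact (reachable_spanningCoe_of_adj (adj_inr_inr_add_two.2 hi')).trans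
      (reachable_spanningCoe_of_adj hthird).symm

lemma reachable_contract_proj (h : K.spanningCoe.Reachable p q) :
    (contract K).spanningCoe.Reachable (proj p) (proj q) := by
  refine reachable_of_forall_adj_reachable (fun p q hpq => ?_) h
  by_cases hne : proj p = proj q
  · rw [hne]
  · exact reachable_spanningCoe_of_adj ⟨hne, p, q, hpq, rfl, rfl⟩

lemma reachable_of_reachable_contract_proj (hK : spokes n (contract K) = oddCorners (sides K))
    (hp : p ∈ K.support) (hq : q ∈ K.support)
    (h : (contract K).spanningCoe.Reachable (proj p) (proj q)) : K.spanningCoe.Reachable p q := by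
  have hfibre : ∀ {p q}, p ∈ K.support → q ∈ K.support → proj p = proj q →
      K.spanningCoe.Reachable p q := by
    intro p q hp hq hpq
    by_cases hpv : proj p = v
    · obtain ⟨i, rfl⟩ := proj_eq_iff.1 hpv
      obtain ⟨j, rfl⟩ := proj_eq_iff.1 (hpq ▸ hpv)
      exact reachable_inr_inr hK hp hq
    · rw [eq_of_proj_eq hpq hpv]
  rw [reachable_iff_reflTransGen] at h
  generalize hy : proj q = y at h
  induction h generalizing q with
  | refl => exact hfibre hp hq hy.symm
  | tail _ hadj ih =>
    obtain ⟨_, p', q', hpq', rfl, rfl⟩ := hadj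
    exact (ih ⟨q', hpq'⟩ rfl).trans <|
      (reachable_spanningCoe_of_adj hpq').trans <| hfibre ⟨p', hpq'.symm⟩ hq hy.symm

lemma exists_mem_support_of_mem_support_contract {x : V} (hx : x ∈ (contract K).support) :
    ∃ p ∈ K.support, proj p = x := by
  obtain ⟨y, _, p, q, hpq, hp, -⟩ := hx
  exact ⟨p, ⟨q, hpq⟩, hp⟩

lemma proj_mem_support_contract (hK : spokes n (contract K) = oddCorners (sides K))
    (hne : sides K ≠ Finset.univ) (hp : p ∈ K.support) : proj p ∈ (contract K).support := by
  obtain ⟨q, hpq⟩ := hp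
  by_cases hproj : proj p = proj q
  · obtain ⟨i, j, rfl, rfl⟩ := exists_eq_inr_of_proj_eq hpq.adj_sub hproj
    have hside := (adj_inr_inr_iff hpq.adj_sub).1 hpq
    have hodd : oddCorners (sides K) ≠ ∅ := by
      rw [Ne, oddCorners_eq_empty_iff, not_or]
      exact ⟨Finset.ne_empty_of_mem hside, hne⟩
    exact of_not_not (mt spokes_eq_empty_iff.2 (hK ▸ hodd))
  · exact ⟨proj q, hproj, p, q, hpq, rfl, rfl⟩

lemma IsCircuit.eq_triangle (hK : IsCircuit K) (hsides : sides K = Finset.univ) :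
    K = triangle n := by
  obtain ⟨hverts, -, -, hreach⟩ := isCircuit_iff.1 hK
  have hisolated : v ∉ (contract K).support := by
    rw [← spokes_eq_empty_iff (n := n), hK.spokes_contract]
    exact oddCorners_eq_empty_iff.2 (.inr hsides)
  have hproj : ∀ p ∈ K.support, proj p = v := by
    intro p hp
    have hcorner : .inr 0 ∈ K.support :=
      ⟨.inr 1, adj_inr_inr_add_one.2 (hsides ▸ Finset.mem_univ _)⟩
    exact eq_of_reachable_of_forall_not_adj (reachable_contract_proj (hreach _ hcorner p hp))
      fun x hx => hisolated ⟨x, hx⟩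
  have hcontract : contract K = contract (triangle n) := by
    refine eq_of_forall_adj_iff contract_verts contract_verts fun x y => ?_
    rw [contract_triangle]
    refine iff_of_false ?_ id
    rintro ⟨hne, p, q, hpq, rfl, rfl⟩
    exact hne ((hproj p ⟨q, hpq⟩).trans (hproj q ⟨p, hpq.symm⟩).symm)
  rw [← expand_contract hverts, hcontract, hsides, contract_triangle, triangle]

lemma IsCircuit.contract_of_ne_triangle (hK : IsCircuit K) (hne : K ≠ triangle n) :
    IsCircuit (contract K) := by
  obtain ⟨-, ⟨p, hp⟩, hdeg, hreach⟩ := isCircuit_iff.1 hK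
  have hspokes := hK.spokes_contract
  refine isCircuit_iff.2 ⟨contract_verts,
    ⟨_, proj_mem_support_contract hspokes (mt hK.eq_triangle hne) hp⟩, fun x hx => ?_,
    fun x hx y hy => ?_⟩
  · obtain ⟨p, hp, rfl⟩ := exists_mem_support_of_mem_support_contract hx
    rcases p with x | i
    · exact (ncard_neighborSet_contract x).trans (hdeg _ hp)
    · refine (ncard_neighborSet_eq_card_spokes n _).trans ?_
      rw [hspokes]
      refine (oddCorners_eq_empty_or_card_eq_two _).resolve_left ?_
      rw [← hspokes, spokes_eq_empty_iff]
      exact not_not_intro hx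
  · obtain ⟨p, hp, rfl⟩ := exists_mem_support_of_mem_support_contract hx
    obtain ⟨q, hq, rfl⟩ := exists_mem_support_of_mem_support_contract hy
    exact reachable_contract_proj (hreach p hp q hq)

lemma IsCircuit.of_contract (hH : IsCircuit (contract K)) (hverts : K.verts = K.support)
    (hspokes : spokes n (contract K) = oddCorners (sides K)) (hne : sides K ≠ Finset.univ) :
    IsCircuit K := by
  obtain ⟨-, ⟨x, hx⟩, hdeg, hreach⟩ := isCircuit_iff.1 hH
  obtain ⟨p, hp, -⟩ := exists_mem_support_of_mem_support_contract hx
  have hproj : ∀ p ∈ K.support, proj p ∈ (contract K).support := fun p hp =>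
    proj_mem_support_contract hspokes hne hp
  refine isCircuit_iff.2 ⟨hverts, ⟨p, hp⟩, fun p hp => ?_, fun p hp q hq =>
    reachable_of_reachable_contract_proj hspokes hp hq (hreach _ (hproj p hp) _ (hproj q hq))⟩
  rcases p with x | i
  · exact (ncard_neighborSet_contract x).symm.trans (hdeg _ (hproj _ hp))
  · exact ncard_neighborSet_inr_eq_two_iff.2 ⟨hp, by rw [hspokes]⟩

lemma isCircuit_triangle : IsCircuit (triangle n) := by
  have hspokes : spokes n (contract (triangle n)) = oddCorners (sides (triangle n)) := by
    rw [contract_triangle, sides_triangle, oddCorners_eq_empty_iff.2 (.inr rfl)]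
    ext i
    simp [mem_spokes]
  have hcorner : ∀ p ∈ (triangle n).support, ∃ i, p = .inr i := by
    rintro p ⟨q, _, h | ⟨i, j, rfl, -⟩⟩
    exacts [h.elim, ⟨i, rfl⟩]
  refine isCircuit_iff.2 ⟨expand_verts, ⟨.inr 0, .inr 1, ?_⟩, fun p hp => ?_, fun p hp q hq => ?_⟩
  · exact (expand_adj_inr_inr (by decide)).2 (Finset.mem_univ _)
  · obtain ⟨i, rfl⟩ := hcorner p hp
    exact ncard_neighborSet_inr_eq_two_iff.2 ⟨hp, by rw [hspokes]⟩
  · obtain ⟨i, rfl⟩ := hcorner p hp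
    obtain ⟨j, rfl⟩ := hcorner q hq
    exact reachable_inr_inr hspokes hp hq

/-! ### Contraction of double covers -/

variable (n) in
/-- The circuit of the triangle expansion that runs along a circuit `H` of `G` and, where `H` passes
through `v`, joins the two spokes it uses by the short or by the long way around the triangle. -/
noncomputable def expandCircuit (short : Bool) (H : G.Subgraph) : (triangleExpansion n).Subgraph :=
  expand n H (joiningSides short (spokes n H))

lemma IsCircuit.contract_expandCircuit (hH : IsCircuit H) (short : Bool) :
    contract (expandCircuit n short H) = H :=
  contract_expand hH.verts_eq_support

lemma IsCircuit.sides_expandCircuit_ne_univ (hH : IsCircuit H) (short : Bool) :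
    sides (expandCircuit n short H) ≠ Finset.univ := by
  rw [expandCircuit, sides_expand]
  exact joiningSides_ne_univ short hH.spokes_eq_empty_or_card_eq_two

lemma IsCircuit.isCircuit_expandCircuit (hH : IsCircuit H) (short : Bool) :
    IsCircuit (expandCircuit n short H) := by
  refine IsCircuit.of_contract ?_ expand_verts ?_ (hH.sides_expandCircuit_ne_univ short)
  · rwa [hH.contract_expandCircuit]
  · rw [hH.contract_expandCircuit, expandCircuit, sides_expand,
      oddCorners_joiningSides short hH.spokes_eq_empty_or_card_eq_two]

lemma IsCircuit.expandCircuit_ne_triangle (hH : IsCircuit H) (short : Bool) :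
    expandCircuit n short H ≠ triangle n := fun h =>
  hH.sides_expandCircuit_ne_univ (n := n) short (h ▸ sides_triangle)

lemma triangle_adj_inr_inr (hij : i ≠ j) : (triangle n).Adj (.inr i) (.inr j) :=
  (expand_adj_inr_inr hij).2 (Finset.mem_univ _)

lemma not_triangle_adj_of_proj_ne (hne : proj p ≠ proj q) : ¬ (triangle n).Adj p q := fun h =>
  (expand_adj_of_proj_ne h.adj_sub hne).1 h

variable (n) in
/-- The double cover of the triangle expansion obtained from the double cover `C` of `G` by leading
all its circuits the short way around the triangle, together with the triangle itself, or all of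
them the long way. -/
noncomputable def expandCover (short : Bool) (C : Multiset G.Subgraph) :
    Multiset (triangleExpansion n).Subgraph :=
  (if short then {triangle n} else 0) + C.map (expandCircuit n short)

open scoped Classical in
/-- The double cover of `G` obtained from a double cover of the triangle expansion by dropping the
triangle and contracting it in all other circuits. -/
noncomputable def contractCover (C : Multiset (triangleExpansion n).Subgraph) :
    Multiset G.Subgraph :=
  (C.filter (· ≠ triangle n)).map contract

open scoped Classical in
lemma IsCiDC.countP_mem_spokes {C : Multiset G.Subgraph} (hC : IsCiDC G C) (i : Fin 3) :
    (C.map (spokes n)).countP (i ∈ ·) = 2 := by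
  rw [Multiset.countP_map, ← Multiset.countP_eq_card_filter,
    ← (isCiDC_iff.1 hC).2 v (n i) (n i).2]
  exact Multiset.countP_congr rfl fun H _ => propext mem_spokes

open scoped Classical in
lemma countP_adj_expandCover_of_proj_ne (C : Multiset G.Subgraph) (short : Bool)
    (hadj : (triangleExpansion n).Adj p q) (hne : proj p ≠ proj q) :
    (expandCover n short C).countP (fun K => K.Adj p q) =
      C.countP (fun H => H.Adj (proj p) (proj q)) := by
  have htriangle : (if short then {triangle n} else 0 : Multiset _).countP
      (fun K : (triangleExpansion n).Subgraph => K.Adj p q) = 0 := by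
    cases short <;> simp [← Multiset.cons_zero, not_triangle_adj_of_proj_ne hne]
  rw [expandCover, Multiset.countP_add, htriangle, zero_add, Multiset.countP_map,
    ← Multiset.countP_eq_card_filter]
  exact Multiset.countP_congr rfl fun H _ => propext (expand_adj_of_proj_ne hadj hne)

open scoped Classical in
lemma IsCiDC.countP_adj_inr_inr_expandCover {C : Multiset G.Subgraph} (hC : IsCiDC G C)
    (short : Bool) (hij : i ≠ j) :
    (expandCover n short C).countP (fun K => K.Adj (.inr i) (.inr j)) = 2 := by
  have hcircuits : (C.map (expandCircuit n short)).countP (fun K => K.Adj (.inr i) (.inr j)) =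
      if short then 1 else 2 := by
    rw [← countP_mem_joiningSides (M := C.map (spokes n)) _ hC.countP_mem_spokes short (-(i + j)),
      Multiset.countP_map, Multiset.countP_map]
    · congr 1
      exact Multiset.filter_congr fun H _ => expand_adj_inr_inr hij
    · simpa using fun H hH => (hC.1 H hH).spokes_eq_empty_or_card_eq_two
  rw [expandCover, Multiset.countP_add, hcircuits]
  cases short <;> simp [← Multiset.cons_zero, triangle_adj_inr_inr hij]

lemma IsCiDC.isCiDC_expandCover {C : Multiset G.Subgraph} (hC : IsCiDC G C) (short : Bool) :
    IsCiDC (triangleExpansion n) (expandCover n short C) := by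
  refine isCiDC_iff.2 ⟨fun K hK => ?_, fun p q hadj => ?_⟩
  · rcases Multiset.mem_add.1 hK with hK | hK
    · obtain rfl : K = triangle n := by cases short <;> simp_all
      exact isCircuit_triangle
    · obtain ⟨H, hH, rfl⟩ := Multiset.mem_map.1 hK
      exact (hC.1 H hH).isCircuit_expandCircuit short
  · by_cases hpq : proj p = proj q
    · obtain ⟨i, j, rfl, rfl⟩ := exists_eq_inr_of_proj_eq hadj hpq
      exact hC.countP_adj_inr_inr_expandCover short hadj
    · rw [countP_adj_expandCover_of_proj_ne C short hadj hpq]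
      exact (isCiDC_iff.1 hC).2 _ _ (adj_proj hadj hpq)

open scoped Classical in
lemma countP_adj_contractCover (C : Multiset (triangleExpansion n).Subgraph)
    (hadj : (triangleExpansion n).Adj p q) (hne : proj p ≠ proj q) :
    (contractCover C).countP (fun H => H.Adj (proj p) (proj q)) =
      C.countP (fun K => K.Adj p q) := by
  rw [contractCover, Multiset.countP_map, ← Multiset.countP_eq_card_filter,
    Multiset.countP_filter]
  refine Multiset.countP_congr rfl fun K _ => propext ?_
  rw [contract_adj_proj hadj hne, and_iff_left_iff_imp]
  rintro h rfl
  exact not_triangle_adj_of_proj_ne hne h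

lemma IsCiDC.isCiDC_contractCover {C : Multiset (triangleExpansion n).Subgraph}
    (hC : IsCiDC (triangleExpansion n) C) : IsCiDC G (contractCover C) := by
  refine isCiDC_iff.2 ⟨fun H hH => ?_, fun x y hxy => ?_⟩
  · classical
    obtain ⟨K, hK, rfl⟩ := Multiset.mem_map.1 hH
    obtain ⟨hKC, hne⟩ := Multiset.mem_filter.1 hK
    exact (hC.1 K hKC).contract_of_ne_triangle hne
  · obtain ⟨p, q, hadj, rfl, rfl⟩ := exists_adj_proj_eq n hxy
    rw [countP_adj_contractCover C hadj hxy.ne]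
    exact (isCiDC_iff.1 hC).2 p q hadj

lemma IsCiDC.contractCover_expandCover {C : Multiset G.Subgraph} (hC : IsCiDC G C)
    (short : Bool) : contractCover (expandCover n short C) = C := by
  classical
  have hfilter : (expandCover n short C).filter (· ≠ triangle n) =
      C.map (expandCircuit n short) := by
    rw [expandCover, Multiset.filter_add, Multiset.filter_eq_nil.2, zero_add,
      Multiset.filter_eq_self.2]
    · intro K hK
      obtain ⟨H, hH, rfl⟩ := Multiset.mem_map.1 hK
      exact (hC.1 H hH).expandCircuit_ne_triangle short
    · cases short <;> simp
  rw [contractCover, hfilter, Multiset.map_map]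
  exact (Multiset.map_congr rfl fun H hH => (hC.1 H hH).contract_expandCircuit short).trans
    (Multiset.map_id' C)

lemma IsCiDC.triangle_mem_expandCover_iff {C : Multiset G.Subgraph} (hC : IsCiDC G C)
    {short : Bool} : triangle n ∈ expandCover n short C ↔ short = true := by
  have hcircuits : triangle n ∉ C.map (expandCircuit n short) := fun h => by
    obtain ⟨H, hH, heq⟩ := Multiset.mem_map.1 h
    exact (hC.1 H hH).expandCircuit_ne_triangle short heq
  cases short <;> simp [expandCover, hcircuits]

open scoped Classical in
lemma IsCiDC.countP_mem_sides {C : Multiset (triangleExpansion n).Subgraph}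
    (hC : IsCiDC (triangleExpansion n) C) (i : Fin 3) :
    (C.map sides).countP (i ∈ ·) = 2 := by
  have hadj : (triangleExpansion n).Adj (.inr (i + 1)) (.inr (i + 2)) :=
    (add_right_injective i).ne (by decide)
  rw [Multiset.countP_map, ← Multiset.countP_eq_card_filter, ← (isCiDC_iff.1 hC).2 _ _ hadj]
  exact Multiset.countP_congr rfl fun K _ => propext mem_sides

open scoped Classical in
lemma IsCiDC.countP_mem_oddCorners_sides {C : Multiset (triangleExpansion n).Subgraph}
    (hC : IsCiDC (triangleExpansion n) C) (i : Fin 3) :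
    (C.map sides).countP (i ∈ oddCorners ·) = 2 := by
  rw [Multiset.countP_map, ← Multiset.countP_eq_card_filter,
    ← (isCiDC_iff.1 hC).2 _ _ (adj_spokeEnd n i)]
  refine Multiset.countP_congr rfl fun K hK => propext ?_
  rw [← (hC.1 K hK).spokes_contract, mem_spokes_contract]

open scoped Classical in
lemma count_univ_map_sides {C : Multiset (triangleExpansion n).Subgraph}
    (hC : ∀ K ∈ C, IsCircuit K) : (C.map sides).count Finset.univ = C.count (triangle n) := by
  rw [Multiset.count_map, Multiset.count_eq_card_filter_eq]
  congr 1
  refine Multiset.filter_congr fun K hK => ⟨fun h => ((hC K hK).eq_triangle h.symm).symm, ?_⟩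
  rintro rfl
  exact sides_triangle.symm

lemma IsCiDC.exists_expandCover_contractCover_eq {C : Multiset (triangleExpansion n).Subgraph}
    (hC : IsCiDC (triangleExpansion n) C) :
    ∃ short, expandCover n short (contractCover C) = C := by
  classical
  obtain ⟨short, hcount, hsides⟩ :=
    exists_eq_joiningSides hC.countP_mem_sides hC.countP_mem_oddCorners_sides
  rw [count_univ_map_sides hC.1] at hcount
  have htriangle : (if short then {triangle n} else 0) = C.filter (· = triangle n) := by
    refine Eq.trans ?_ (Multiset.filter_eq' C _).symm
    rw [hcount]
    cases short <;> simp
  have hexpand : ∀ K ∈ C.filter (· ≠ triangle n), (expandCircuit n short ∘ contract) K = K := by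
    intro K hK
    obtain ⟨hKC, hne⟩ := Multiset.mem_filter.1 hK
    have hcircuit := hC.1 K hKC
    have hroute := hsides _ (Multiset.mem_map_of_mem _ hKC) (mt hcircuit.eq_triangle hne)
    rw [Function.comp_apply, expandCircuit, hcircuit.spokes_contract, ← hroute,
      expand_contract hcircuit.verts_eq_support]
  refine ⟨short, ?_⟩
  rw [expandCover, contractCover, Multiset.map_map, Multiset.map_congr rfl hexpand,
    Multiset.map_id', htriangle]
  exact Multiset.filter_add_not _ C

theorem encard_isCiDC_triangleExpansion (n : Fin 3 ≃ G.neighborSet v) :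
    {C | IsCiDC (triangleExpansion n) C}.encard = 2 * {C | IsCiDC G C}.encard := by
  let f : Bool × {C | IsCiDC G C} → {C | IsCiDC (triangleExpansion n) C} := fun x =>
    ⟨expandCover n x.1 x.2, IsCiDC.isCiDC_expandCover x.2.2 x.1⟩
  have hinj : f.Injective := by
    rintro ⟨short, C, hC⟩ ⟨short', C', hC'⟩ h
    have hcover : expandCover n short C = expandCover n short' C' := congrArg Subtype.val h
    obtain rfl : C = C' := by
      rw [← hC.contractCover_expandCover short, hcover, hC'.contractCover_expandCover]
    obtain rfl : short = short' := by
      rw [Bool.eq_iff_iff, ← hC.triangle_mem_expandCover_iff, hcover,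
        hC.triangle_mem_expandCover_iff]
    rfl
  have hsurj : f.Surjective := fun ⟨C, hC⟩ =>
    have ⟨short, h⟩ := hC.exists_expandCover_contractCover_eq
    ⟨⟨short, contractCover C, hC.isCiDC_contractCover⟩, Subtype.ext h⟩
  rw [Set.encard, Set.encard, ← ENat.card_congr (Equiv.ofBijective f ⟨hinj, hsurj⟩),
    ENat.card_prod]
  simp

end Expansion

lemma exists_equiv_of_eq_triple {V : Type*} {a b c : V} (hab : a ≠ b) (hac : a ≠ c) (hbc : b ≠ c)
    {S : Set V} (hS : S = {a, b, c}) : ∃ n : Fin 3 ≃ S, ∀ i, (n i : V) = ![a, b, c] i := by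
  subst hS
  have hinj : Function.Injective ![a, b, c] := by
    intro i j h
    fin_cases i <;> fin_cases j <;> simp_all
  have hrange : Set.range ![a, b, c] = {a, b, c} := by
    simp only [Matrix.range_cons, Matrix.range_empty, Set.union_empty, Set.singleton_union]
  exact ⟨(Equiv.ofInjective _ hinj).trans (Equiv.setCongr hrange), fun i => rfl⟩

lemma eq_triangleExpansion {V : Type*} {G : SimpleGraph V} {v a b c : V}
    {n : Fin 3 ≃ G.neighborSet v} (hn : ∀ i, (n i : V) = ![a, b, c] i)
    {G' : SimpleGraph ({x : V // x ≠ v} ⊕ Fin 3)}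
    (hG' : ∀ p q, G'.Adj p q ↔ TriangleExpansionAdj G v a b c p q) :
    G' = triangleExpansion n := by
  have hspoke : ∀ (x : V) (i : Fin 3),
      x = n i ↔ (i = 0 ∧ x = a) ∨ (i = 1 ∧ x = b) ∨ (i = 2 ∧ x = c) := by
    intro x i
    rw [hn]
    fin_cases i <;> simp
  ext p q
  rw [hG']
  rcases p with x | i <;> rcases q with y | j
  exacts [Iff.rfl, (hspoke x j).symm, (hspoke y i).symm, Iff.rfl]

theorem stmt9_general {V : Type*} (G : SimpleGraph V)
    (v a b c : V) (hab : a ≠ b) (hac : a ≠ c) (hbc : b ≠ c)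
    (hnbr : G.neighborSet v = {a, b, c})
    (G' : SimpleGraph ({x : V // x ≠ v} ⊕ Fin 3))
    (hG' : ∀ p q, G'.Adj p q ↔ TriangleExpansionAdj G v a b c p q) :
    {C | IsCiDC G' C}.encard = 2 * {C | IsCiDC G C}.encard := by
  obtain ⟨n, hn⟩ := exists_equiv_of_eq_triple hab hac hbc hnbr
  obtain rfl := eq_triangleExpansion hn hG'
  exact encard_isCiDC_triangleExpansion n

/-- Replacing a vertex of a cubic graph by a triangle doubles the number of circuit
double covers. -/
theorem stmt9 {V : Type*} [Fintype V] (G : SimpleGraph V) (hcubic : IsCubic G)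
    (v a b c : V) (hab : a ≠ b) (hac : a ≠ c) (hbc : b ≠ c)
    (hnbr : G.neighborSet v = {a, b, c})
    (G' : SimpleGraph ({x : V // x ≠ v} ⊕ Fin 3))
    (hG' : ∀ p q, G'.Adj p q ↔ TriangleExpansionAdj G v a b c p q) :
    nu G' = 2 * nu G := by
  simpa [nu, Set.ncard] using
    congrArg ENat.toNat (stmt9_general G v a b c hab hac hbc hnbr G' hG')

end CiDC
end
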